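/- Let A = S¹ ∪ ((∂R(1) ∪ ∂R(2) ∪ ∂R(3)) ∩ D), where S¹ is the unit circle, D is the open unit disk, and ∂ denotes the topological frontier in ℂ. Then the zero sets Z(F_n) = {z ∈ ℂ : F_n(z) = 0} converge to A in the Hausdorff metric on compact subsets of ℂ: the Hausdorff distance between Z(F_n) and A tends to 0 as n → ∞. -/

import Mathlib

open Complex Filter

/-- `partsCount k n` is the number of partitions of `n` with exactly `k` parts. -/
noncomputable def partsCount (k n : ℕ) : ℕ := Nat.card {p : Nat.Partition n // p.parts.card = k}

/-- The partition polynomial `F_n(x) = ∑_{k=1}^n p_k(n) x^k`. -/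
noncomputable def F (n : ℕ) (x : ℂ) : ℂ := ∑ k ∈ Finset.Icc 1 n, (partsCount k n : ℂ) * x ^ k

/-- The dilogarithm `Li₂(z) = ∑_{n=1}^∞ zⁿ/n²`. -/
noncomputable def dilog (z : ℂ) : ℂ := ∑' n : ℕ, z ^ (n + 1) / ((n : ℂ) + 1) ^ 2

/-- `fk k x = (1/k)·Re √(Li₂(x^k))` with the principal branch square root. -/
noncomputable def fk (k : ℕ) (x : ℂ) : ℝ := (1 / (k : ℝ)) * ((dilog (x ^ k)) ^ (1 / 2 : ℂ)).re

/-- The region `R(1)`. -/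
def R1 : Set ℂ := {x | ‖x‖ < 1 ∧ fk 2 x ≤ fk 1 x ∧ fk 3 x ≤ fk 1 x}

/-- The region `R(2)`. -/
def R2 : Set ℂ := {x | ‖x‖ < 1 ∧ fk 1 x ≤ fk 2 x ∧ fk 3 x ≤ fk 2 x}

/-- The region `R(3)`. -/
def R3 : Set ℂ := {x | ‖x‖ < 1 ∧ fk 1 x ≤ fk 3 x ∧ fk 2 x ≤ fk 3 x}

open scoped Topology

/-!
The generating function `∑ F n x qⁿ = ∏ (1 - x qᵐ)⁻¹` blows up at a primitive `k`-th root of unity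
like `exp (Li₂(xᵏ) / (k² w))`, where `q = e ^ (-w)` times that root, so the circle method gives
`log |F n x| ~ 2 √n f_k(x)` wherever `f_k` strictly exceeds all other `f_j`; angular estimates for
the dilogarithm show that only `k = 1, 2, 3` can be dominant in the unit disk. Outside the disk,
`F n x / xⁿ` converges to a nonzero limit. Hence there are no zeros away from the attractor.

Near a nonzero point of the attractor, two different harmonic functions are limits of `log |F n|`,
suitably rescaled, on open sets arbitrarily close to it. If `F n` had no zeros there, the rescaled
logarithms would be harmonic and uniformly bounded above, and a Vitali argument would force one
limit function on a whole neighbourhood.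
-/

lemma norm_natCast_add_one (n : ℕ) : ‖(n : ℂ) + 1‖ = n + 1 := by
  exact_mod_cast Complex.norm_natCast (n + 1)

lemma hasSum_one_div_succ_sq :
    HasSum (fun n : ℕ => 1 / ((n : ℝ) + 1) ^ 2) (Real.pi ^ 2 / 6) := by
  simpa using (hasSum_nat_add_iff' 1).2 hasSum_zeta_two

lemma norm_pow_lt_one {x : ℂ} (hx : ‖x‖ < 1) {k : ℕ} (hk : k ≠ 0) : ‖x ^ k‖ < 1 :=
  (norm_pow x k).trans_lt (pow_lt_one₀ (norm_nonneg x) hx hk)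

lemma mul_norm_le_one {x : ℂ} (hx : ‖x‖ ≤ 1) {v : ℝ} (hv : v ∈ Set.Icc (0 : ℝ) 1) :
    v * ‖x‖ ≤ 1 :=
  mul_le_one₀ hv.2 (norm_nonneg x) hx

/-! ### The weight `-log` on the unit interval -/

lemma neg_log_nonneg {v : ℝ} (hv : v ∈ Set.Icc (0 : ℝ) 1) : 0 ≤ -Real.log v :=
  neg_nonneg.2 (Real.log_nonpos hv.1 hv.2)

lemma intervalIntegrable_neg_log_mul {f : ℝ → ℝ} (hf : ContinuousOn f (Set.Icc 0 1)) :
    IntervalIntegrable (fun v => -Real.log v * f v) MeasureTheory.volume 0 1 :=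
  intervalIntegral.intervalIntegrable_log'.neg.mul_continuousOn
    (by rwa [Set.uIcc_of_le zero_le_one])

lemma integral_neg_log_mul_pow (n : ℕ) :
    ∫ v in (0 : ℝ)..1, -Real.log v * v ^ n = 1 / ((n : ℝ) + 1) ^ 2 := by
  have hn : (n : ℝ) + 1 ≠ 0 := by positivity
  have h := intervalIntegral.integral_eq_sub_of_hasDerivAt_of_le (a := (0 : ℝ)) (b := 1)
    (f := fun v => -(v ^ n * (v * Real.log v)) / (n + 1) + v ^ (n + 1) / ((n : ℝ) + 1) ^ 2)
    (f' := fun v => -Real.log v * v ^ n) zero_le_one ?_ ?_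
    (intervalIntegrable_neg_log_mul (by fun_prop))
  · rw [h]
    simp
  · have := Real.continuous_mul_log
    exact Continuous.continuousOn (by fun_prop)
  · intro v hv
    have hv0 : v ≠ 0 := hv.1.ne'
    have hderiv := (((hasDerivAt_pow (n + 1) v).mul (Real.hasDerivAt_log hv0)).neg.div_const
      ((n : ℝ) + 1)).add ((hasDerivAt_pow (n + 1) v).div_const (((n : ℝ) + 1) ^ 2))
    convert hderiv using 1
    · ext v
      simp only [Pi.add_apply, Pi.neg_apply, Pi.mul_apply]
      ring
    · push_cast
      field_simp
      ring

lemma le_integral_neg_log_mul {f : ℝ → ℝ} (hf : ContinuousOn f (Set.Icc 0 1)) (c₀ c₁ c₂ : ℝ)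
    (h : ∀ v ∈ Set.Icc (0 : ℝ) 1, c₀ + c₁ * v + c₂ * v ^ 2 ≤ f v) :
    c₀ + c₁ / 4 + c₂ / 9 ≤ ∫ v in (0 : ℝ)..1, -Real.log v * f v := by
  have hinteg (n : ℕ) :
      IntervalIntegrable (fun v => -Real.log v * v ^ n) MeasureTheory.volume 0 1 :=
    intervalIntegrable_neg_log_mul (by fun_prop)
  have hpoly : ∫ v in (0 : ℝ)..1, -Real.log v * (c₀ + c₁ * v + c₂ * v ^ 2) =
      c₀ + c₁ / 4 + c₂ / 9 := by
    have hexpand (v : ℝ) : -Real.log v * (c₀ + c₁ * v + c₂ * v ^ 2) =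
        c₀ * (-Real.log v * v ^ 0) + c₁ * (-Real.log v * v ^ 1) + c₂ * (-Real.log v * v ^ 2) := by
      ring
    simp_rw [hexpand]
    rw [intervalIntegral.integral_add (((hinteg 0).const_mul _).add ((hinteg 1).const_mul _))
        ((hinteg 2).const_mul _),
      intervalIntegral.integral_add ((hinteg 0).const_mul _) ((hinteg 1).const_mul _)]
    simp_rw [intervalIntegral.integral_const_mul, integral_neg_log_mul_pow]
    norm_num
    ring
  rw [← hpoly]
  exact intervalIntegral.integral_mono_on zero_le_one
    (intervalIntegrable_neg_log_mul (by fun_prop)) (intervalIntegrable_neg_log_mul hf)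
    fun v hv => mul_le_mul_of_nonneg_left (h v hv) (neg_log_nonneg hv)

/-! ### Bounds for the dilogarithm -/

lemma dilog_zero : dilog 0 = 0 := by simp [dilog]

lemma norm_dilog_le {x : ℂ} (hx : ‖x‖ ≤ 1) : ‖dilog x‖ ≤ Real.pi ^ 2 / 6 * ‖x‖ := by
  rw [mul_comm]
  refine tsum_of_norm_bounded (hasSum_one_div_succ_sq.mul_left ‖x‖) fun n => ?_
  rw [norm_div, norm_pow, norm_pow, norm_natCast_add_one, mul_one_div]
  gcongr
  exact pow_le_of_le_one (norm_nonneg x) hx n.succ_ne_zero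

lemma differentiableOn_dilog : DifferentiableOn ℂ dilog (Metric.ball 0 1) := by
  refine differentiableOn_tsum_of_summable_norm hasSum_one_div_succ_sq.summable
    (fun n => by fun_prop) Metric.isOpen_ball fun n z hz => ?_
  rw [mem_ball_zero_iff] at hz
  rw [norm_div, norm_pow, norm_pow, norm_natCast_add_one]
  gcongr
  exact pow_le_one₀ (norm_nonneg z) hz.le

lemma differentiableAt_dilog {z : ℂ} (hz : ‖z‖ < 1) : DifferentiableAt ℂ dilog z :=
  differentiableOn_dilog.differentiableAt (Metric.isOpen_ball.mem_nhds (by simpa using hz))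

lemma dilog_eq_integral {x : ℂ} (hx : ‖x‖ < 1) :
    dilog x = ∫ v in (0 : ℝ)..1, ((-Real.log v : ℝ) : ℂ) * (x / (1 - v * x)) := by
  have hvx {v : ℝ} (hv : v ∈ Set.uIoc 0 1) : ‖(v * x : ℂ)‖ ≤ ‖x‖ := by
    rw [Set.uIoc_of_le zero_le_one] at hv
    rw [norm_mul, Complex.norm_of_nonneg hv.1.le]
    exact mul_le_of_le_one_left (norm_nonneg x) hv.2
  have h := intervalIntegral.hasSum_integral_of_dominated_convergence (a := (0 : ℝ)) (b := 1)
    (μ := MeasureTheory.volume)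
    (F := fun (n : ℕ) (v : ℝ) => ((-Real.log v : ℝ) : ℂ) * (x * (v * x) ^ n))
    (f := fun v => ((-Real.log v : ℝ) : ℂ) * (x / (1 - v * x)))
    (fun n v => -Real.log v * ‖x‖ ^ (n + 1)) ?_ ?_ ?_ ?_ ?_
  · rw [← h.tsum_eq, dilog]
    congr with n
    have hfactor (v : ℝ) : ((-Real.log v : ℝ) : ℂ) * (x * (v * x) ^ n) =
        x ^ (n + 1) * ((-Real.log v * v ^ n : ℝ) : ℂ) := by
      push_cast
      ring
    simp_rw [hfactor]
    rw [intervalIntegral.integral_const_mul, intervalIntegral.integral_ofReal,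
      integral_neg_log_mul_pow]
    push_cast
    ring
  · exact fun n => Measurable.aestronglyMeasurable (by fun_prop)
  · refine fun n => Eventually.of_forall fun v hv => ?_
    have hlog := neg_log_nonneg (Set.Ioc_subset_Icc_self (Set.uIoc_of_le zero_le_one (α := ℝ) ▸ hv))
    rw [norm_mul, Complex.norm_of_nonneg hlog, norm_mul, norm_pow, pow_succ']
    gcongr
    exact hvx hv
  · exact Eventually.of_forall fun v _ =>
      ((summable_nat_add_iff 1).2 (summable_geometric_of_lt_one (norm_nonneg x) hx)).mul_left _
  · simp_rw [tsum_mul_left]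
    exact intervalIntegrable_neg_log_mul (by fun_prop)
  · refine Eventually.of_forall fun v hv => HasSum.mul_left _ ?_
    rw [div_eq_mul_inv]
    exact (hasSum_geometric_of_norm_lt_one ((hvx hv).trans_lt hx)).mul_left x

lemma norm_dilog_le_of_re_nonpos {x : ℂ} (hx : ‖x‖ < 1) (hre : x.re ≤ 0) : ‖dilog x‖ ≤ ‖x‖ := by
  have h := intervalIntegral.norm_integral_le_of_norm_le (a := (0 : ℝ)) (b := 1)
    (μ := MeasureTheory.volume) (f := fun v : ℝ => ((-Real.log v : ℝ) : ℂ) * (x / (1 - v * x)))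
    (g := fun v => ‖x‖ * (-Real.log v * v ^ 0)) zero_le_one
    (Eventually.of_forall fun v hv => ?_)
    ((intervalIntegrable_neg_log_mul (by fun_prop)).const_mul _)
  · rw [intervalIntegral.integral_const_mul, integral_neg_log_mul_pow] at h
    simpa [dilog_eq_integral hx] using h
  · have hlog := neg_log_nonneg (Set.Ioc_subset_Icc_self hv)
    have hden : 1 ≤ ‖(1 - v * x : ℂ)‖ := by
      refine le_trans ?_ (Complex.re_le_norm _)
      simpa using mul_nonpos_of_nonneg_of_nonpos hv.1.le hre
    rw [norm_mul, Complex.norm_of_nonneg hlog, norm_div, pow_zero, mul_one, mul_comm ‖x‖]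
    gcongr
    exact div_le_self (norm_nonneg x) hden

/-- The kernel `|1 - v x|²`, expanded so that it is visibly quadratic in `v`. -/
noncomputable def normSqOneSub (x : ℂ) (v : ℝ) : ℝ := 1 - 2 * v * x.re + v ^ 2 * ‖x‖ ^ 2

lemma normSqOneSub_pos {x : ℂ} (hx : ‖x‖ < 1) {v : ℝ} (hv : v ∈ Set.Icc (0 : ℝ) 1) :
    0 < normSqOneSub x v := by
  have hvx : 0 < 1 - v * ‖x‖ := by nlinarith [hv.1, hv.2, norm_nonneg x]
  refine (pow_pos hvx 2).trans_le ?_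
  unfold normSqOneSub
  nlinarith [mul_le_mul_of_nonneg_left (Complex.re_le_norm x) hv.1]

lemma continuous_normSqOneSub (x : ℂ) : Continuous (normSqOneSub x) := by
  unfold normSqOneSub
  fun_prop

lemma ofReal_normSqOneSub (x : ℂ) (v : ℝ) :
    (normSqOneSub x v : ℂ) = (1 - v * x) * (1 - v * (starRingEnd ℂ) x) := by
  have hmul := Complex.mul_conj' x
  have hadd := Complex.add_conj x
  unfold normSqOneSub
  push_cast at hadd ⊢
  linear_combination (v : ℂ) * hadd - (v : ℂ) ^ 2 * hmul

/-- The moments `∫₀¹ -log v · vʲ / |1 - v x|² dv`; those with `j = 0, 1` are the real coordinates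
of `Li₂ x` with respect to `x` and `|x|²` (`dilog_eq_dilogMoment`). -/
noncomputable def dilogMoment (j : ℕ) (x : ℂ) : ℝ :=
  ∫ v in (0 : ℝ)..1, -Real.log v * (v ^ j / normSqOneSub x v)

lemma continuousOn_div_normSqOneSub {x : ℂ} (hx : ‖x‖ < 1) {f : ℝ → ℝ} (hf : Continuous f) :
    ContinuousOn (fun v => f v / normSqOneSub x v) (Set.Icc 0 1) :=
  hf.continuousOn.div (continuous_normSqOneSub x).continuousOn
    fun _ hv => (normSqOneSub_pos hx hv).ne'

lemma intervalIntegrable_dilogMoment {x : ℂ} (hx : ‖x‖ < 1) (j : ℕ) :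
    IntervalIntegrable (fun v => -Real.log v * (v ^ j / normSqOneSub x v))
      MeasureTheory.volume 0 1 :=
  intervalIntegrable_neg_log_mul (continuousOn_div_normSqOneSub hx (by fun_prop))

lemma le_add_dilogMoment {x : ℂ} (hx : ‖x‖ < 1) (α β c₀ c₁ c₂ : ℝ)
    (h : ∀ v ∈ Set.Icc (0 : ℝ) 1,
      (c₀ + c₁ * v + c₂ * v ^ 2) * normSqOneSub x v ≤ α + β * v) :
    c₀ + c₁ / 4 + c₂ / 9 ≤ α * dilogMoment 0 x + β * dilogMoment 1 x := by
  refine (le_integral_neg_log_mul (continuousOn_div_normSqOneSub hx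
    (f := fun v => α + β * v) (by fun_prop)) c₀ c₁ c₂
    fun v hv => (le_div_iff₀ (normSqOneSub_pos hx hv)).2 (h v hv)).trans_eq ?_
  unfold dilogMoment
  rw [← intervalIntegral.integral_const_mul, ← intervalIntegral.integral_const_mul,
    ← intervalIntegral.integral_add ((intervalIntegrable_dilogMoment hx 0).const_mul _)
      ((intervalIntegrable_dilogMoment hx 1).const_mul _)]
  congr 1
  ext v
  ring

lemma dilog_eq_dilogMoment {x : ℂ} (hx : ‖x‖ < 1) :
    dilog x = dilogMoment 0 x * x - dilogMoment 1 x * ((‖x‖ ^ 2 : ℝ) : ℂ) := by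
  have hinteg (j : ℕ) : IntervalIntegrable
      (fun v => ((-Real.log v * (v ^ j / normSqOneSub x v) : ℝ) : ℂ)) MeasureTheory.volume 0 1 :=
    ⟨(intervalIntegrable_dilogMoment hx j).1.ofReal, (intervalIntegrable_dilogMoment hx j).2.ofReal⟩
  rw [dilog_eq_integral hx]
  unfold dilogMoment
  rw [← intervalIntegral.integral_ofReal, ← intervalIntegral.integral_ofReal,
    ← intervalIntegral.integral_mul_const, ← intervalIntegral.integral_mul_const,
    ← intervalIntegral.integral_sub ((hinteg 0).mul_const _) ((hinteg 1).mul_const _)]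
  refine intervalIntegral.integral_congr fun v hv => ?_
  rw [Set.uIcc_of_le zero_le_one] at hv
  have hne : (1 - v * (starRingEnd ℂ) x : ℂ) ≠ 0 := by
    apply right_ne_zero_of_mul (a := 1 - v * x)
    rw [← ofReal_normSqOneSub]
    exact_mod_cast (normSqOneSub_pos hx hv).ne'
  simp only [pow_zero, pow_one, Complex.ofReal_mul, Complex.ofReal_div, ofReal_normSqOneSub,
    Complex.ofReal_one, Complex.ofReal_pow, ← Complex.mul_conj']
  field_simp

lemma dilog_re {x : ℂ} (hx : ‖x‖ < 1) :
    (dilog x).re = x.re * dilogMoment 0 x - ‖x‖ ^ 2 * dilogMoment 1 x := by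
  rw [dilog_eq_dilogMoment hx]
  simp only [Complex.sub_re, Complex.re_ofReal_mul, Complex.ofReal_re]
  ring

lemma dilog_im {x : ℂ} (hx : ‖x‖ < 1) : (dilog x).im = dilogMoment 0 x * x.im := by
  rw [dilog_eq_dilogMoment hx]
  simp only [Complex.sub_im, Complex.im_ofReal_mul, Complex.ofReal_im]
  ring

lemma dilogMoment_zero_pos {x : ℂ} (hx : ‖x‖ < 1) : 0 < dilogMoment 0 x := by
  have h := le_add_dilogMoment hx 1 0 (1 / 4) 0 0 fun v hv => by
    have hvx := mul_norm_le_one hx.le hv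
    have hvx0 := mul_nonneg hv.1 (norm_nonneg x)
    have hre : -1 ≤ v * x.re := by nlinarith [hv.1, (abs_le.1 (Complex.abs_re_le_norm x)).1]
    unfold normSqOneSub
    nlinarith
  linarith

lemma dilogMoment_one_nonneg {x : ℂ} (hx : ‖x‖ < 1) : 0 ≤ dilogMoment 1 x := by
  have h := le_add_dilogMoment hx 0 1 0 0 0 fun v hv => by simpa using hv.1
  linarith

lemma le_dilogMoment_zero_sub_re_mul {x : ℂ} (hx : ‖x‖ < 1) :
    0.96 - 0.16 * ‖x‖ ≤ dilogMoment 0 x - x.re * dilogMoment 1 x := by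
  have h := le_add_dilogMoment hx 1 (-x.re) 0.96 (-0.64 * ‖x‖) 0 fun v hv => by
    have hvx := mul_norm_le_one hx.le hv
    have hvx0 := mul_nonneg hv.1 (norm_nonneg x)
    have hq := normSqOneSub_pos hx hv
    -- `0.96 - 0.64 t` is the tangent to `1 / (1 + t)` at `t = 1/4`.
    have htangent : 0.96 - 0.64 * (v * ‖x‖) ≤ 1 / (1 + v * ‖x‖) := by
      rw [le_div_iff₀ (by positivity)]
      nlinarith [sq_nonneg (v * ‖x‖ - 1 / 4)]
    have hkernel : 1 / (1 + v * ‖x‖) * normSqOneSub x v ≤ 1 + -x.re * v := by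
      rw [one_div_mul_eq_div, div_le_iff₀ (by positivity)]
      have : 0 ≤ v * (‖x‖ + x.re) * (1 - v * ‖x‖) :=
        mul_nonneg (mul_nonneg hv.1 (by linarith [(abs_le.1 (Complex.abs_re_le_norm x)).1]))
          (by linarith)
      unfold normSqOneSub
      nlinarith
    refine le_trans ?_ hkernel
    gcongr
    linarith
  linarith

lemma le_norm_dilog {x : ℂ} (hx : ‖x‖ < 1) : 0.8 * ‖x‖ ≤ ‖dilog x‖ := by
  rcases eq_or_ne x 0 with rfl | hx0
  · simp
  have hr : 0 < ‖x‖ := norm_pos_iff.2 hx0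
  have hproj : ‖x‖ ^ 2 * (dilogMoment 0 x - x.re * dilogMoment 1 x) ≤ ‖dilog x‖ * ‖x‖ := by
    have h := Complex.re_le_norm (dilog x * (starRingEnd ℂ) x)
    rw [norm_mul, Complex.norm_conj, Complex.mul_re, Complex.conj_re, Complex.conj_im,
      dilog_re hx, dilog_im hx] at h
    linear_combination h + dilogMoment 0 x * Complex.sq_norm_sub_sq_re x
  have hmoment : 0.8 * ‖x‖ ^ 2 ≤ ‖x‖ ^ 2 * (dilogMoment 0 x - x.re * dilogMoment 1 x) := by
    rw [mul_comm]
    gcongr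
    linarith [le_dilogMoment_zero_sub_re_mul hx]
  exact le_of_mul_le_mul_right (by linarith) hr

lemma le_re_dilog_of_re_nonneg {x : ℂ} (hx : ‖x‖ < 1) (hre : 0 ≤ x.re) :
    -(‖x‖ ^ 2 / 4) ≤ (dilog x).re := by
  have h := le_add_dilogMoment hx x.re (-‖x‖ ^ 2) 0 (-‖x‖ ^ 2) 0 fun v hv => by
    have hnorm := norm_nonneg x
    have hvx := mul_norm_le_one hx.le hv
    have hvx0 := mul_nonneg hv.1 hnorm
    have hcubic : 0 ≤ x.re * (1 - 2 * (v * ‖x‖) ^ 2) + ‖x‖ * (v * ‖x‖) ^ 3 := by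
      rcases le_total 0 (1 - 2 * (v * ‖x‖) ^ 2) with hsmall | hlarge
      · positivity
      · have : 0 ≤ ‖x‖ * ((1 - v * ‖x‖) * (1 + v * ‖x‖ - (v * ‖x‖) ^ 2)) :=
          mul_nonneg hnorm (mul_nonneg (by linarith) (by nlinarith))
        nlinarith [mul_le_mul_of_nonpos_right (Complex.re_le_norm x) hlarge]
    unfold normSqOneSub
    nlinarith
  rw [dilog_re hx]
  linarith

lemma le_re_dilog_of_le_re {x : ℂ} (hx : ‖x‖ < 1) (hre : 0.7 * ‖x‖ ≤ x.re) :
    ‖x‖ / 4 ≤ (dilog x).re := by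
  have hnorm := norm_nonneg x
  have h := le_add_dilogMoment hx x.re (-‖x‖ ^ 2) (‖x‖ / 2) (-‖x‖ ^ 2) 0 fun v hv => by
    have hvx := mul_norm_le_one hx.le hv
    have hvx0 := mul_nonneg hv.1 hnorm
    have hquad : 0 ≤ (x.re - ‖x‖ / 2) + (2 * x.re - ‖x‖ / 2) * (v * ‖x‖)
        - ‖x‖ * (v * ‖x‖) ^ 2 := by
      have hsq : ‖x‖ * (v * ‖x‖) ^ 2 ≤ ‖x‖ * (v * ‖x‖) :=
        mul_le_mul_of_nonneg_left (by nlinarith) hnorm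
      have hlin : -(0.1 * ‖x‖) ≤ (2 * x.re - 3 / 2 * ‖x‖) * (v * ‖x‖) := by nlinarith
      nlinarith
    unfold normSqOneSub
    nlinarith [mul_nonneg hquad (sub_nonneg.2 hvx)]
  rw [dilog_re hx]
  nlinarith

lemma re_dilog_nonpos_of_re_nonpos {x : ℂ} (hx : ‖x‖ < 1) (hre : x.re ≤ 0) :
    (dilog x).re ≤ 0 := by
  rw [dilog_re hx]
  linarith [mul_nonneg (sq_nonneg ‖x‖) (dilogMoment_one_nonneg hx),
    mul_nonpos_of_nonpos_of_nonneg hre (dilogMoment_zero_pos hx).le]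

lemma one_div_le_dilogMoment_zero {x : ℂ} (hx : ‖x‖ < 1) (hre : x.re ≤ 0) :
    1 / (1 - x.re / 2 + ‖x‖ ^ 2 / 9) ≤ dilogMoment 0 x := by
  -- `Q` is the mean of `|1 - v x|²` under the weight `-log v`; Jensen via the tangent to `1 / q`.
  set Q := 1 - x.re / 2 + ‖x‖ ^ 2 / 9 with hQ
  have hQ0 : 0 < Q := by linarith [sq_nonneg ‖x‖]
  have h := le_add_dilogMoment hx 1 0 (2 / Q - 1 / Q ^ 2) (2 * x.re / Q ^ 2) (-‖x‖ ^ 2 / Q ^ 2)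
    fun v _ => by
      have htangent : 2 / Q - 1 / Q ^ 2 + 2 * x.re / Q ^ 2 * v + -‖x‖ ^ 2 / Q ^ 2 * v ^ 2
          = (2 * Q - normSqOneSub x v) / Q ^ 2 := by
        unfold normSqOneSub
        field_simp
        ring
      rw [htangent, div_mul_eq_mul_div, div_le_iff₀ (by positivity)]
      nlinarith [sq_nonneg (Q - normSqOneSub x v)]
  have hvalue : 2 / Q - 1 / Q ^ 2 + 2 * x.re / Q ^ 2 / 4 + -‖x‖ ^ 2 / Q ^ 2 / 9 = 1 / Q := by
    field_simp
    linarith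
  linarith

/-- Chebyshev's correlation inequality: `v` and `1 / |1 - v x|²` are oppositely monotone, and `v`
has mean `1/4` under the weight `-log v`. -/
lemma dilogMoment_one_le {x : ℂ} (hx : ‖x‖ < 1) (hre : x.re ≤ 0) :
    dilogMoment 1 x ≤ dilogMoment 0 x / 4 := by
  have hq4 := normSqOneSub_pos hx (v := 1 / 4) ⟨by norm_num, by norm_num⟩
  have h := le_add_dilogMoment hx (1 / 4) (-1) (1 / 4 / normSqOneSub x (1 / 4))
    (-1 / normSqOneSub x (1 / 4)) 0 fun v hv => by
      have hdiff : normSqOneSub x v - normSqOneSub x (1 / 4) =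
          (v - 1 / 4) * (-2 * x.re + (v + 1 / 4) * ‖x‖ ^ 2) := by
        unfold normSqOneSub
        ring
      have hmono : 0 ≤ (v - 1 / 4) * (normSqOneSub x v - normSqOneSub x (1 / 4)) := by
        rw [hdiff, ← mul_assoc]
        exact mul_nonneg (mul_self_nonneg _)
          (add_nonneg (by linarith) (mul_nonneg (by linarith [hv.1]) (sq_nonneg _)))
      have hcombine : 1 / 4 / normSqOneSub x (1 / 4) + -1 / normSqOneSub x (1 / 4) * v + 0 * v ^ 2
          = (1 / 4 - v) / normSqOneSub x (1 / 4) := by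
        ring
      rw [hcombine, div_mul_eq_mul_div, div_le_iff₀ hq4]
      linarith
  have hvalue : 1 / 4 / normSqOneSub x (1 / 4) + -1 / normSqOneSub x (1 / 4) / 4 + 0 / 9 = 0 := by
    ring
  linarith

lemma dilog_mem_slitPlane {z : ℂ} (hz : ‖z‖ < 1) (h : z ∈ slitPlane) : dilog z ∈ slitPlane := by
  rw [Complex.mem_slitPlane_iff] at h ⊢
  by_cases him : z.im = 0
  · left
    have hre : 0 < z.re := h.resolve_right (absurd him)
    have hnorm : ‖z‖ ^ 2 = z.re ^ 2 := by
      linarith [Complex.sq_norm_sub_sq_re z, (by rw [him, zero_pow two_ne_zero] : z.im ^ 2 = 0)]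
    have hpos : 0 < z.re * (dilogMoment 0 z - z.re * dilogMoment 1 z) :=
      mul_pos hre (by linarith [le_dilogMoment_zero_sub_re_mul hz])
    rw [dilog_re hz, hnorm]
    linarith
  · right
    rw [dilog_im hz]
    exact mul_ne_zero (dilogMoment_zero_pos hz).ne' him
/-! ### The growth rates `f_k` -/

/-- `2 (Re √(Li₂ z))²`, written without the square root. -/
noncomputable def dilogGrowth (z : ℂ) : ℝ := ‖dilog z‖ + (dilog z).re

lemma dilogGrowth_nonneg (z : ℂ) : 0 ≤ dilogGrowth z := by
  unfold dilogGrowth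
  linarith [(abs_le.1 (Complex.abs_re_le_norm (dilog z))).1]

lemma dilogGrowth_zero : dilogGrowth 0 = 0 := by simp [dilogGrowth, dilog_zero]

lemma dilogGrowth_le {x : ℂ} (hx : ‖x‖ < 1) : dilogGrowth x ≤ 2 * (1.645 * ‖x‖) := by
  have hpi : Real.pi ^ 2 / 6 ≤ 1.645 := by nlinarith [Real.pi_lt_d4, Real.pi_pos]
  have hnorm : ‖dilog x‖ ≤ 1.645 * ‖x‖ :=
    (norm_dilog_le hx.le).trans (mul_le_mul_of_nonneg_right hpi (norm_nonneg x))
  unfold dilogGrowth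
  linarith [Complex.re_le_norm (dilog x)]

lemma le_dilogGrowth_of_re_nonneg {x : ℂ} (hx : ‖x‖ < 1) (hre : 0 ≤ x.re) :
    0.55 * ‖x‖ ≤ dilogGrowth x := by
  unfold dilogGrowth
  nlinarith [le_norm_dilog hx, le_re_dilog_of_re_nonneg hx hre, norm_nonneg x]

lemma le_dilogGrowth_of_le_re {x : ℂ} (hx : ‖x‖ < 1) (hre : 0.7 * ‖x‖ ≤ x.re) :
    1.05 * ‖x‖ ≤ dilogGrowth x := by
  unfold dilogGrowth
  linarith [le_norm_dilog hx, le_re_dilog_of_le_re hx hre]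

lemma dilogGrowth_le_of_re_nonpos {x : ℂ} (hx : ‖x‖ < 1) (hre : x.re ≤ 0) :
    dilogGrowth x ≤ ‖x‖ := by
  unfold dilogGrowth
  linarith [norm_dilog_le_of_re_nonpos hx hre, re_dilog_nonpos_of_re_nonpos hx hre]

lemma mul_le_norm_add_re {z : ℂ} {R b D e : ℝ} (hR : 0 ≤ R) (hD : 0 ≤ D) (hre : -z.re ≤ R * b)
    (him : R ^ 2 * e ≤ z.im ^ 2) (hDe : 2 * D * b + D ^ 2 ≤ e) : R * D ≤ ‖z‖ + z.re := by
  have hsq : (R * D - z.re) ^ 2 ≤ ‖z‖ ^ 2 :=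
    calc (R * D - z.re) ^ 2 = (R * D) ^ 2 + 2 * (R * D) * -z.re + z.re ^ 2 := by ring
      _ ≤ (R * D) ^ 2 + 2 * (R * D) * (R * b) + z.re ^ 2 := by gcongr
      _ = R ^ 2 * (2 * D * b + D ^ 2) + z.re ^ 2 := by ring
      _ ≤ R ^ 2 * e + z.re ^ 2 := by gcongr
      _ ≤ z.im ^ 2 + z.re ^ 2 := by gcongr
      _ = ‖z‖ ^ 2 := by linarith [Complex.sq_norm_sub_sq_re z]
  linarith [(le_abs_self _).trans (abs_le_of_sq_le_sq hsq (norm_nonneg z))]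

/-- `C` bounds the cosine of the angle from `x` to the negative axis, and `D` is any solution of the
resulting quadratic inequality. -/
lemma le_dilogGrowth_of_re_nonpos {x : ℂ} (hx : ‖x‖ < 1) (hre : x.re ≤ 0) {C D : ℝ} (hC : 0 ≤ C)
    (hD : 0 ≤ D) (hxC : -x.re ≤ C * ‖x‖) (hCD : 2 * D * (C + 1 / 4) + D ^ 2 ≤ 1 - C ^ 2) :
    D / (1 + C / 2 + 1 / 9) * ‖x‖ ≤ dilogGrowth x := by
  have hr := norm_nonneg x
  have ha := (dilogMoment_zero_pos hx).le
  have hsq : ‖x‖ ^ 2 ≤ ‖x‖ := pow_le_of_le_one hr hx.le two_ne_zero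
  have hmoment : 1 / (1 + C / 2 + 1 / 9) ≤ dilogMoment 0 x := by
    refine le_trans (one_div_le_one_div_of_le ?_ ?_) (one_div_le_dilogMoment_zero hx hre)
    · linarith [sq_nonneg ‖x‖]
    · linarith [mul_le_of_le_one_right hC hx.le]
  have hneg : -(dilog x).re ≤ dilogMoment 0 x * ‖x‖ * (C + 1 / 4) :=
    calc -(dilog x).re = dilogMoment 0 x * -x.re + ‖x‖ ^ 2 * dilogMoment 1 x := by
          rw [dilog_re hx]
          ring
      _ ≤ dilogMoment 0 x * (C * ‖x‖) + ‖x‖ * (dilogMoment 0 x / 4) := by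
          gcongr
          · exact dilogMoment_one_nonneg hx
          · exact dilogMoment_one_le hx hre
      _ = dilogMoment 0 x * ‖x‖ * (C + 1 / 4) := by ring
  have him : (dilogMoment 0 x * ‖x‖) ^ 2 * (1 - C ^ 2) ≤ (dilog x).im ^ 2 := by
    have hre_sq : x.re ^ 2 ≤ (C * ‖x‖) ^ 2 := by
      simpa using pow_le_pow_left₀ (neg_nonneg.2 hre) hxC 2
    have him_sq : ‖x‖ ^ 2 * (1 - C ^ 2) ≤ x.im ^ 2 := by
      linarith [Complex.sq_norm_sub_sq_re x]
    rw [dilog_im hx, mul_pow, mul_pow, mul_assoc]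
    gcongr
  calc D / (1 + C / 2 + 1 / 9) * ‖x‖ = 1 / (1 + C / 2 + 1 / 9) * ‖x‖ * D := by ring
    _ ≤ dilogMoment 0 x * ‖x‖ * D := by gcongr
    _ ≤ dilogGrowth x := mul_le_norm_add_re (by positivity) hD hneg him hCD

lemma dilogGrowth_eq_zero {z : ℂ} (hz : ‖z‖ < 1) (h : z ∉ slitPlane) : dilogGrowth z = 0 := by
  rw [Complex.mem_slitPlane_iff, not_or, not_lt, not_not] at h
  have him : (dilog z).im = 0 := by rw [dilog_im hz, h.2, mul_zero]
  have hreal : dilog z = ((dilog z).re : ℂ) := Complex.ext rfl (by simpa using him)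
  have hnorm : ‖dilog z‖ = -(dilog z).re := by
    conv_lhs => rw [hreal]
    rw [Complex.norm_real, Real.norm_of_nonpos (re_dilog_nonpos_of_re_nonpos hz h.1)]
  rw [dilogGrowth, hnorm, neg_add_cancel]

lemma fk_eq (k : ℕ) (x : ℂ) : fk k x = (1 / (k : ℝ)) * √(dilogGrowth (x ^ k) / 2) := by
  unfold fk dilogGrowth
  rw [one_div (2 : ℂ), Complex.cpow_inv_two_re]

lemma fk_nonneg (k : ℕ) (x : ℂ) : 0 ≤ fk k x := by
  rw [fk_eq]
  positivity

lemma fk_sq (k : ℕ) (x : ℂ) : fk k x ^ 2 = dilogGrowth (x ^ k) / (2 * k ^ 2) := by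
  rw [fk_eq, mul_pow, Real.sq_sqrt (div_nonneg (dilogGrowth_nonneg _) zero_le_two)]
  field_simp

lemma fk_one_sq (x : ℂ) : fk 1 x ^ 2 = dilogGrowth x / 2 := by
  rw [fk_sq, pow_one, Nat.cast_one, one_pow, mul_one]

lemma fk_index_zero (x : ℂ) : fk 0 x = 0 := by
  rw [fk_eq, Nat.cast_zero, div_zero, zero_mul]

lemma fk_apply_zero (k : ℕ) : fk k 0 = 0 := by
  rcases eq_or_ne k 0 with rfl | hk
  · exact fk_index_zero 0
  · simp [fk_eq, zero_pow hk, dilogGrowth_zero]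

lemma fk_lt_of_sq_lt {k j : ℕ} {x : ℂ} (h : fk k x ^ 2 < fk j x ^ 2) : fk k x < fk j x :=
  lt_of_pow_lt_pow_left₀ 2 (fk_nonneg j x) h

lemma fk_sq_le {x : ℂ} (hx : ‖x‖ < 1) {k j : ℕ} (hj : j ≠ 0) (hjk : j ≤ k) :
    fk k x ^ 2 ≤ 1.645 * ‖x‖ ^ j / j ^ 2 := by
  have hpow : ‖x‖ ^ k ≤ ‖x‖ ^ j := pow_le_pow_of_le_one (norm_nonneg x) hx.le hjk
  have hgrowth := dilogGrowth_le (norm_pow_lt_one hx (k := k) (by omega))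
  rw [norm_pow] at hgrowth
  calc fk k x ^ 2 = dilogGrowth (x ^ k) / (2 * k ^ 2) := fk_sq k x
    _ ≤ 2 * (1.645 * ‖x‖ ^ j) / (2 * j ^ 2) := by
        gcongr
        linarith
    _ = _ := by field_simp

lemma fk_sq_le_of_re_nonpos {x : ℂ} (hx : ‖x‖ < 1) {k : ℕ} (hk : k ≠ 0) (hre : (x ^ k).re ≤ 0) :
    fk k x ^ 2 ≤ ‖x‖ ^ k / (2 * k ^ 2) := by
  rw [fk_sq, ← norm_pow]
  gcongr
  exact dilogGrowth_le_of_re_nonpos (norm_pow_lt_one hx hk) hre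

lemma pow_mem_slitPlane_of_fk_pos {k : ℕ} (hk : k ≠ 0) {x : ℂ} (hx : ‖x‖ < 1) (h : 0 < fk k x) :
    x ^ k ∈ slitPlane := by
  by_contra hn
  rw [fk_eq, dilogGrowth_eq_zero (norm_pow_lt_one hx hk) hn, zero_div, Real.sqrt_zero,
    mul_zero] at h
  exact h.false

/-! ### Only `f₁`, `f₂` and `f₃` can dominate -/

lemma sq_re (x : ℂ) : (x ^ 2).re = 2 * x.re ^ 2 - ‖x‖ ^ 2 := by
  rw [sq, Complex.mul_re]
  linear_combination Complex.sq_norm_sub_sq_re x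

lemma pow_four_re (x : ℂ) : (x ^ 4).re = 2 * (x ^ 2).re ^ 2 - (‖x‖ ^ 2) ^ 2 := by
  rw [← norm_pow, ← sq_re, ← pow_mul]

lemma fk_four_sq_le {x : ℂ} (hx : ‖x‖ < 1) : fk 4 x ^ 2 ≤ 0.104 * ‖x‖ ^ 4 := by
  have h := fk_sq_le hx (k := 4) (j := 4) (by norm_num) le_rfl
  push_cast at h
  linarith [pow_nonneg (norm_nonneg x) 4]

lemma fk_four_sq_le_of_re_nonpos {x : ℂ} (hx : ‖x‖ < 1) (hre : (x ^ 4).re ≤ 0) :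
    fk 4 x ^ 2 ≤ ‖x‖ ^ 4 / 32 := by
  have h := fk_sq_le_of_re_nonpos hx four_ne_zero hre
  push_cast at h
  linarith

lemma fk_sq_le_of_five_le {x : ℂ} (hx : ‖x‖ < 1) {k : ℕ} (hk : 5 ≤ k) :
    fk k x ^ 2 ≤ 0.066 * ‖x‖ ^ 5 := by
  have h := fk_sq_le hx (by norm_num) hk
  push_cast at h
  linarith [pow_nonneg (norm_nonneg x) 5]

section Domination

variable {x : ℂ} {k : ℕ}

lemma fk_lt_fk_one_of_re_nonneg (hx : ‖x‖ < 1) (hx0 : x ≠ 0) (hk : 4 ≤ k) (hre : 0 ≤ x.re) :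
    fk k x < fk 1 x := by
  have hr : 0 < ‖x‖ := norm_pos_iff.2 hx0
  refine fk_lt_of_sq_lt ?_
  have hk_le := fk_sq_le hx (by norm_num) hk
  have hgrowth := le_dilogGrowth_of_re_nonneg hx hre
  have hpow : ‖x‖ ^ 4 ≤ ‖x‖ := pow_le_of_le_one hr.le hx.le (by norm_num)
  push_cast at hk_le
  rw [fk_one_sq]
  linarith

/-- Here `x` lies within `π/4` of the imaginary axis, and within `π/8` of it if moreover
`Re x⁴ > 0`; `0.7072` and `0.3829` are upper bounds for `sin (π/4)` and `sin (π/8)`. -/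
lemma fk_lt_fk_one_of_re_sq_nonpos (hx : ‖x‖ < 1) (hx0 : x ≠ 0) (hk : 4 ≤ k) (hre : x.re ≤ 0)
    (hre2 : (x ^ 2).re ≤ 0) : fk k x < fk 1 x := by
  have hr : 0 < ‖x‖ := norm_pos_iff.2 hx0
  have hpow4 : ‖x‖ ^ 4 ≤ ‖x‖ := pow_le_of_le_one hr.le hx.le (by norm_num)
  have hpow5 : ‖x‖ ^ 5 ≤ ‖x‖ := pow_le_of_le_one hr.le hx.le (by norm_num)
  have hgrowth : 0.158 * ‖x‖ ≤ dilogGrowth x := by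
    have hcos : -x.re ≤ 0.7072 * ‖x‖ := by nlinarith [sq_re x]
    refine le_trans ?_ (le_dilogGrowth_of_re_nonpos hx hre (C := 0.7072) (D := 0.2326)
      (by norm_num) (by norm_num) hcos (by norm_num))
    gcongr
    norm_num
  refine fk_lt_of_sq_lt ?_
  rw [fk_one_sq]
  rcases hk.eq_or_lt with rfl | hk5
  · rcases le_or_gt (x ^ 4).re 0 with hre4 | hre4
    · linarith [fk_four_sq_le_of_re_nonpos hx hre4]
    · have hre2_le : (x ^ 2).re ≤ -(0.707 * ‖x‖ ^ 2) := by
        nlinarith [pow_four_re x, pow_pos hr 2]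
      have hcos : -x.re ≤ 0.3829 * ‖x‖ := by nlinarith [sq_re x]
      have hgrowth' : 0.37 * ‖x‖ ≤ dilogGrowth x := by
        refine le_trans ?_ (le_dilogGrowth_of_re_nonpos hx hre (C := 0.3829) (D := 0.486)
          (by norm_num) (by norm_num) hcos (by norm_num))
        gcongr
        norm_num
      linarith [fk_four_sq_le hx]
  · linarith [fk_sq_le_of_five_le hx hk5]

lemma fk_lt_fk_two_of_re_sq_pos (hx : ‖x‖ < 1) (hk : 4 ≤ k) (hre2 : 0 < (x ^ 2).re) :
    fk k x < fk 2 x := by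
  have hr : 0 < ‖x‖ ^ 2 := by
    rw [← norm_pow]
    exact hre2.trans_le (Complex.re_le_norm _)
  have hpow4 : ‖x‖ ^ 4 ≤ ‖x‖ ^ 2 := pow_le_pow_of_le_one (norm_nonneg x) hx.le (by norm_num)
  have hpow5 : ‖x‖ ^ 5 ≤ ‖x‖ ^ 2 := pow_le_pow_of_le_one (norm_nonneg x) hx.le (by norm_num)
  have hx2 : ‖x ^ 2‖ < 1 := norm_pow_lt_one hx two_ne_zero
  have hgrowth := le_dilogGrowth_of_re_nonneg hx2 hre2.le
  have hsq : fk 2 x ^ 2 = dilogGrowth (x ^ 2) / 8 := by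
    rw [fk_sq]
    norm_num
  refine fk_lt_of_sq_lt ?_
  rw [hsq]
  rw [norm_pow] at hgrowth
  rcases hk.eq_or_lt with rfl | hk5
  · rcases le_or_gt (x ^ 4).re 0 with hre4 | hre4
    · linarith [fk_four_sq_le_of_re_nonpos hx hre4]
    · have hcos : 0.7 * ‖x ^ 2‖ ≤ (x ^ 2).re := by
        rw [norm_pow]
        nlinarith [pow_four_re x]
      have hgrowth' := le_dilogGrowth_of_le_re hx2 hcos
      rw [norm_pow] at hgrowth'
      linarith [fk_four_sq_le hx]
  · linarith [fk_sq_le_of_five_le hx hk5]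

lemma fk_lt_fk_one_or_fk_two (hx : ‖x‖ < 1) (hx0 : x ≠ 0) (hk : 4 ≤ k) :
    fk k x < fk 1 x ∨ fk k x < fk 2 x := by
  rcases le_or_gt 0 x.re with hre | hre
  · exact .inl (fk_lt_fk_one_of_re_nonneg hx hx0 hk hre)
  rcases le_or_gt (x ^ 2).re 0 with hre2 | hre2
  · exact .inl (fk_lt_fk_one_of_re_sq_nonpos hx hx0 hk hre.le hre2)
  · exact .inr (fk_lt_fk_two_of_re_sq_pos hx hk hre2)

end Domination

/-- The exponential growth rate `max (f₁ x, f₂ x, f₃ x)` of `F n x`, on the scale `exp (2 √n ·)`. -/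
noncomputable def maxGrowth (x : ℂ) : ℝ := max (fk 1 x) (max (fk 2 x) (fk 3 x))

lemma fk_one_le_maxGrowth (x : ℂ) : fk 1 x ≤ maxGrowth x := le_max_left _ _

lemma fk_two_le_maxGrowth (x : ℂ) : fk 2 x ≤ maxGrowth x :=
  (le_max_left _ _).trans (le_max_right _ _)

lemma fk_three_le_maxGrowth (x : ℂ) : fk 3 x ≤ maxGrowth x :=
  (le_max_right _ _).trans (le_max_right _ _)

lemma exists_fk_eq_maxGrowth (x : ℂ) : ∃ k, k ≠ 0 ∧ k ≤ 3 ∧ fk k x = maxGrowth x := by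
  rcases max_choice (fk 1 x) (max (fk 2 x) (fk 3 x)) with h | h
  · exact ⟨1, by norm_num, by norm_num, h.symm⟩
  · rcases max_choice (fk 2 x) (fk 3 x) with h' | h'
    · exact ⟨2, by norm_num, by norm_num, (h.trans h').symm⟩
    · exact ⟨3, by norm_num, by norm_num, (h.trans h').symm⟩

lemma maxGrowth_nonneg (x : ℂ) : 0 ≤ maxGrowth x := (fk_nonneg 1 x).trans (fk_one_le_maxGrowth x)

lemma fk_lt_maxGrowth {x : ℂ} (hx : ‖x‖ < 1) (hx0 : x ≠ 0) {k : ℕ} (hk : 4 ≤ k) :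
    fk k x < maxGrowth x :=
  (fk_lt_fk_one_or_fk_two hx hx0 hk).elim (fun h => h.trans_le (fk_one_le_maxGrowth x))
    fun h => h.trans_le (fk_two_le_maxGrowth x)

lemma maxGrowth_pos {x : ℂ} (hx : ‖x‖ < 1) (hx0 : x ≠ 0) : 0 < maxGrowth x :=
  (fk_nonneg 4 x).trans_lt (fk_lt_maxGrowth hx hx0 le_rfl)

lemma fk_le_maxGrowth {x : ℂ} (hx : ‖x‖ < 1) (k : ℕ) : fk k x ≤ maxGrowth x := by
  rcases eq_or_ne x 0 with rfl | hx0
  · exact (fk_apply_zero k).trans_le (maxGrowth_nonneg 0)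
  match k with
  | 0 => exact (fk_index_zero x).trans_le (maxGrowth_nonneg x)
  | 1 => exact fk_one_le_maxGrowth x
  | 2 => exact fk_two_le_maxGrowth x
  | 3 => exact fk_three_le_maxGrowth x
  | k + 4 => exact (fk_lt_maxGrowth hx hx0 (by omega)).le

lemma im_ne_zero_of_fk_one_lt_fk_three {x : ℂ} (hx : ‖x‖ < 1) (h : fk 1 x < fk 3 x) :
    x.im ≠ 0 := by
  intro him
  have hreal : x = (x.re : ℂ) := Complex.ext rfl (by simpa using him)
  have hpos : 0 < x.re := by
    have hslit := pow_mem_slitPlane_of_fk_pos three_ne_zero hx ((fk_nonneg 1 x).trans_lt h)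
    rw [hreal, ← Complex.ofReal_pow, Complex.ofReal_mem_slitPlane] at hslit
    exact (Odd.pow_pos_iff (by decide)).1 hslit
  have hnorm : ‖x‖ = x.re := by
    conv_lhs => rw [hreal]
    exact Complex.norm_of_nonneg hpos.le
  have hgrowth := le_dilogGrowth_of_le_re hx (by linarith)
  have hthree := fk_sq_le hx (k := 3) (j := 3) (by norm_num) le_rfl
  have hsq : fk 1 x ^ 2 < fk 3 x ^ 2 := pow_lt_pow_left₀ h (fk_nonneg 1 x) two_ne_zero
  have hpow : ‖x‖ ^ 3 ≤ ‖x‖ := pow_le_of_le_one (norm_nonneg x) hx.le three_ne_zero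
  rw [fk_one_sq] at hsq
  push_cast at hthree
  linarith

/-! ### The holomorphic functions `√(Li₂(xᵏ)) / k` -/

lemma differentiableAt_dilog_pow {k : ℕ} (hk : k ≠ 0) {x : ℂ} (hx : ‖x‖ < 1) :
    DifferentiableAt ℂ (fun y => dilog (y ^ k)) x :=
  (differentiableAt_dilog (norm_pow_lt_one hx hk)).comp (f := fun y : ℂ => y ^ k) x (by fun_prop)

/-- The function `√(Li₂(xᵏ)) / k`, whose real part is `f_k`. -/
noncomputable def sqrtDilog (k : ℕ) (x : ℂ) : ℂ := (1 / (k : ℂ)) * dilog (x ^ k) ^ (1 / 2 : ℂ)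

lemma sqrtDilog_re (k : ℕ) (x : ℂ) : (sqrtDilog k x).re = fk k x := by
  unfold sqrtDilog fk
  rw [← Complex.re_ofReal_mul]
  push_cast
  rfl

lemma sqrtDilog_sq (k : ℕ) (x : ℂ) : sqrtDilog k x ^ 2 = dilog (x ^ k) / k ^ 2 := by
  have hroot : (dilog (x ^ k) ^ (1 / 2 : ℂ)) ^ 2 = dilog (x ^ k) := by
    rw [one_div]
    exact_mod_cast Complex.cpow_nat_inv_pow (dilog (x ^ k)) two_ne_zero
  rw [sqrtDilog, mul_pow, hroot, one_div, inv_pow, inv_mul_eq_div]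

lemma differentiableAt_sqrtDilog {k : ℕ} (hk : k ≠ 0) {x : ℂ} (hx : ‖x‖ < 1)
    (h : x ^ k ∈ slitPlane) : DifferentiableAt ℂ (sqrtDilog k) x :=
  ((differentiableAt_dilog_pow hk hx).cpow (by fun_prop)
    (dilog_mem_slitPlane (norm_pow_lt_one hx hk) h)).const_mul _

lemma continuousAt_sqrtDilog {k : ℕ} (hk : k ≠ 0) {x : ℂ} (hx : ‖x‖ < 1) (h : 0 < fk k x) :
    ContinuousAt (sqrtDilog k) x :=
  (differentiableAt_sqrtDilog hk hx (pow_mem_slitPlane_of_fk_pos hk hx h)).continuousAt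

lemma continuousAt_fk (k : ℕ) {x : ℂ} (hx : ‖x‖ < 1) : ContinuousAt (fk k) x := by
  rcases eq_or_ne k 0 with rfl | hk
  · simpa only [funext fk_index_zero] using continuousAt_const
  have hdilog := (differentiableAt_dilog_pow hk hx).continuousAt
  rw [funext (fk_eq k)]
  exact continuousAt_const.mul (((hdilog.norm.add
    (Complex.continuous_re.continuousAt.comp hdilog)).div_const 2).sqrt)

lemma continuousAt_maxGrowth {x : ℂ} (hx : ‖x‖ < 1) : ContinuousAt maxGrowth x :=
  (continuousAt_fk 1 hx).max ((continuousAt_fk 2 hx).max (continuousAt_fk 3 hx))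

lemma eventually_norm_lt_one {x : ℂ} (hx : ‖x‖ < 1) : ∀ᶠ y in 𝓝 x, ‖y‖ < 1 :=
  (continuous_norm.tendsto x).eventually_lt_const hx

/-! ### Weighted partition sums -/

section WeightedPartitions

open PowerSeries
open scoped PowerSeries.WithPiTopology

variable {K : Type*} [RCLike K]

/-- The sum over all partitions of `n` of the product of the weights `c i` of the parts `i`,
counted with multiplicity.  Constant weights `x` give `F n x`. -/
noncomputable def weightedPartitionSum (c : ℕ → K) (n : ℕ) : K :=
  ∑ p : n.Partition, (p.parts.map c).prod

/-- The geometric series `∑ j, a ^ j X ^ (m j)`, which generates the parts of size `m` when each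
of them has weight `a`.  The shape is that of the factors in `Nat.Partition.hasProd_genFun`. -/
noncomputable def geomPowerSeries (a : K) (m : ℕ) : K⟦X⟧ :=
  1 + ∑' j : ℕ, a ^ (j + 1) • (X : K⟦X⟧) ^ (m * (j + 1))

/-- Weights equal to `c` up to `N` and to `0` beyond, so that the product formula for the
generating function has finitely many factors. -/
def truncateWeights (N : ℕ) (c : ℕ → K) (i : ℕ) : K := if i ≤ N then c i else 0

/-- The power series `φ` converges absolutely at `v`, with sum `s`. -/
def AbsSumsTo (φ : K⟦X⟧) (v s : K) : Prop :=
  Summable (fun n => ‖φ.coeff n * v ^ n‖) ∧ ∑' n, φ.coeff n * v ^ n = s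

lemma coeff_genFun_pow (c : ℕ → K) (n : ℕ) :
    (Nat.Partition.genFun fun i j => c i ^ j).coeff n = weightedPartitionSum c n := by
  rw [Nat.Partition.coeff_genFun, weightedPartitionSum]
  refine Finset.sum_congr rfl fun p _ => ?_
  rw [Finset.prod_multiset_map_count, Finsupp.prod, Multiset.toFinsupp_support]
  rfl

lemma hasProd_geomPowerSeries (c : ℕ → K) :
    HasProd (fun i => geomPowerSeries (c (i + 1)) (i + 1))
      (Nat.Partition.genFun fun i j => c i ^ j) :=
  Nat.Partition.hasProd_genFun fun i j => c i ^ j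

lemma geomPowerSeries_zero (m : ℕ) : geomPowerSeries (0 : K) m = 1 := by simp [geomPowerSeries]

lemma coeff_geomPowerSeries (a : K) {m : ℕ} (hm : m ≠ 0) (n : ℕ) :
    (geomPowerSeries a m).coeff n = if m ∣ n then a ^ (n / m) else 0 := by
  obtain ⟨m, rfl⟩ := Nat.exists_eq_add_one_of_ne_zero hm
  have hs := Nat.Partition.summable_genFun_term (R := K) (fun _ j => a ^ j) m
  rw [geomPowerSeries, map_add, hs.map_tsum _ (WithPiTopology.continuous_coeff _ _)]
  simp only [map_smul, coeff_X_pow, smul_eq_mul, coeff_one, mul_ite, mul_one, mul_zero]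
  rcases n.eq_zero_or_pos with rfl | hn
  · simp
  rw [if_neg hn.ne', zero_add]
  split_ifs with h
  · obtain ⟨j, rfl⟩ := h
    obtain ⟨j, rfl⟩ := Nat.exists_eq_add_one_of_ne_zero (Nat.pos_of_mul_pos_left hn).ne'
    rw [tsum_eq_single j]
    · simp
    · intro i hi
      rw [if_neg fun h => hi ?_]
      exact Nat.succ_injective (Nat.eq_of_mul_eq_mul_left m.succ_pos h).symm
  · refine (tsum_congr fun j => if_neg ?_).trans tsum_zero
    rintro rfl
    exact h (dvd_mul_right _ _)

namespace AbsSumsTo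

lemma mul {φ ψ : K⟦X⟧} {v s t : K} (hφ : AbsSumsTo φ v s) (hψ : AbsSumsTo ψ v t) :
    AbsSumsTo (φ * ψ) v (s * t) := by
  have coeff_eq (n : ℕ) : (φ * ψ).coeff n * v ^ n = ∑ kl ∈ Finset.HasAntidiagonal.antidiagonal n,
      (φ.coeff kl.1 * v ^ kl.1) * (ψ.coeff kl.2 * v ^ kl.2) := by
    rw [coeff_mul, Finset.sum_mul]
    refine Finset.sum_congr rfl fun kl hkl => ?_
    rw [← Finset.HasAntidiagonal.mem_antidiagonal.1 hkl, pow_add]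
    ring
  constructor
  · exact (summable_norm_sum_mul_antidiagonal_of_summable_norm hφ.1 hψ.1).congr fun n => by
      rw [coeff_eq n]
  · rw [← hφ.2, ← hψ.2, tsum_mul_tsum_eq_tsum_sum_antidiagonal_of_summable_norm hφ.1 hψ.1]
    exact tsum_congr coeff_eq

lemma one (v : K) : AbsSumsTo 1 v 1 := by
  have coeff_eq (n : ℕ) : (1 : K⟦X⟧).coeff n * v ^ n = if n = 0 then 1 else 0 := by
    rw [coeff_one]
    split_ifs with h <;> simp [h]
  simp only [AbsSumsTo, coeff_eq]
  refine ⟨summable_of_ne_finset_zero (s := {0}) fun n hn => ?_, tsum_ite_eq 0 _⟩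
  rw [if_neg (by simpa using hn), norm_zero]

lemma geomPowerSeries {a v : K} {m : ℕ} (hm : m ≠ 0) (h : ‖a * v ^ m‖ < 1) :
    AbsSumsTo (geomPowerSeries a m) v (1 - a * v ^ m)⁻¹ := by
  have hinj : Function.Injective (m * ·) := mul_right_injective₀ hm
  have on_multiples (j : ℕ) :
      (_root_.geomPowerSeries a m).coeff (m * j) * v ^ (m * j) = (a * v ^ m) ^ j := by
    rw [coeff_geomPowerSeries a hm, if_pos (dvd_mul_right _ _),
      Nat.mul_div_cancel_left _ (Nat.pos_of_ne_zero hm), mul_pow, pow_mul]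
  have off_multiples (n : ℕ) (hn : n ∉ Set.range (m * ·)) :
      (_root_.geomPowerSeries a m).coeff n * v ^ n = 0 := by
    rw [coeff_geomPowerSeries a hm, if_neg, zero_mul]
    rintro ⟨j, rfl⟩
    exact hn ⟨j, rfl⟩
  constructor
  · rw [← hinj.summable_iff fun n hn => by rw [off_multiples n hn, norm_zero]]
    exact (summable_geometric_of_lt_one (norm_nonneg _) h).congr fun j => by
      rw [Function.comp_apply, on_multiples, norm_pow]
  · refine ((hinj.hasSum_iff off_multiples).1 ?_).tsum_eq
    exact (hasSum_geometric_of_norm_lt_one h).congr_fun fun j => on_multiples j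

end AbsSumsTo

lemma genFun_truncateWeights (N : ℕ) (c : ℕ → K) :
    (Nat.Partition.genFun fun i j => truncateWeights N c i ^ j) =
      ∏ i ∈ Finset.range N, geomPowerSeries (c (i + 1)) (i + 1) := by
  have hfin : HasProd (fun i => geomPowerSeries (truncateWeights N c (i + 1)) (i + 1))
      (∏ i ∈ Finset.range N, geomPowerSeries (truncateWeights N c (i + 1)) (i + 1)) :=
    hasProd_prod_of_ne_finset_one fun i hi => by
      rw [truncateWeights, if_neg (by simpa using hi), geomPowerSeries_zero]
  rw [(hasProd_geomPowerSeries (truncateWeights N c)).unique hfin]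
  refine Finset.prod_congr rfl fun i hi => ?_
  rw [truncateWeights, if_pos (by simpa using hi)]

lemma absSumsTo_weightedPartitionSum_truncateWeights (N : ℕ) (c : ℕ → K) (v : K)
    (h : ∀ i, ‖c (i + 1) * v ^ (i + 1)‖ < 1) :
    Summable (fun n => ‖weightedPartitionSum (truncateWeights N c) n * v ^ n‖) ∧
      ∑' n, weightedPartitionSum (truncateWeights N c) n * v ^ n =
        ∏ i ∈ Finset.range N, (1 - c (i + 1) * v ^ (i + 1))⁻¹ := by
  have hprod : AbsSumsTo (∏ i ∈ Finset.range N, geomPowerSeries (c (i + 1)) (i + 1)) v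
      (∏ i ∈ Finset.range N, (1 - c (i + 1) * v ^ (i + 1))⁻¹) := by
    induction N with
    | zero => simpa only [Finset.prod_range_zero] using AbsSumsTo.one v
    | succ N ih =>
      rw [Finset.prod_range_succ, Finset.prod_range_succ]
      exact ih.mul (.geomPowerSeries N.succ_ne_zero (h N))
  rw [← genFun_truncateWeights] at hprod
  simpa only [AbsSumsTo, coeff_genFun_pow] using hprod

lemma weightedPartitionSum_truncateWeights {N n : ℕ} (h : n ≤ N) (c : ℕ → K) :
    weightedPartitionSum (truncateWeights N c) n = weightedPartitionSum c n := by
  refine Finset.sum_congr rfl fun p _ => congrArg Multiset.prod (Multiset.map_congr rfl ?_)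
  intro i hi
  exact if_pos ((Multiset.le_sum_of_mem hi).trans (p.parts_sum.trans_le h))

lemma norm_truncateWeights_le (N : ℕ) (c : ℕ → K) (i : ℕ) : ‖truncateWeights N c i‖ ≤ ‖c i‖ := by
  unfold truncateWeights
  split_ifs <;> simp

lemma weightedPartitionSum_nonneg {c : ℕ → ℝ} (hc : ∀ i, 0 ≤ c i) (n : ℕ) :
    0 ≤ weightedPartitionSum c n := by
  refine Finset.sum_nonneg fun p _ => Multiset.prod_nonneg fun a ha => ?_
  obtain ⟨i, -, rfl⟩ := Multiset.mem_map.1 ha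
  exact hc i

lemma norm_weightedPartitionSum_le (c : ℕ → K) (d : ℕ → ℝ) (h : ∀ i, ‖c i‖ ≤ d i) (n : ℕ) :
    ‖weightedPartitionSum c n‖ ≤ weightedPartitionSum d n := by
  refine (norm_sum_le _ _).trans (Finset.sum_le_sum fun p _ => ?_)
  induction p.parts using Multiset.induction_on with
  | empty => simp
  | cons a s ih =>
    simp only [Multiset.map_cons, Multiset.prod_cons, norm_mul]
    exact mul_le_mul (h a) ih (norm_nonneg _) ((norm_nonneg _).trans (h a))

lemma weightedPartitionSum_eq_sum_range (c : ℕ → K) (hc : c 1 = 1) (n : ℕ) :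
    weightedPartitionSum c n =
      ∑ j ∈ Finset.range (n + 1), weightedPartitionSum (fun i => if i = 1 then 0 else c i) j := by
  have hsplit := (hasProd_ite_eq (0 : ℕ) (geomPowerSeries (1 : K) 1)).mul
    (hasProd_geomPowerSeries fun i => if i = 1 then 0 else c i)
  have factor_eq : (fun i => (if i = 0 then geomPowerSeries (1 : K) 1 else 1) *
      geomPowerSeries (if i + 1 = 1 then 0 else c (i + 1)) (i + 1)) =
      fun i => geomPowerSeries (c (i + 1)) (i + 1) := by
    funext i
    rcases i.eq_zero_or_pos with rfl | hi
    · simp [geomPowerSeries_zero, hc]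
    · rw [if_neg hi.ne', if_neg (by omega), one_mul]
  rw [factor_eq] at hsplit
  rw [← coeff_genFun_pow, (hasProd_geomPowerSeries c).unique hsplit, coeff_mul,
    Finset.Nat.antidiagonal_eq_map', Finset.sum_map]
  refine Finset.sum_congr rfl fun j _ => ?_
  change (geomPowerSeries (1 : K) 1).coeff (n - j) * _ = _
  rw [coeff_geomPowerSeries _ one_ne_zero, if_pos (one_dvd _), one_pow, one_mul]
  exact coeff_genFun_pow _ _

lemma summable_weightedPartitionSum_of_nonneg {c : ℕ → ℝ} {v : ℝ} (hc : ∀ i, 0 ≤ c i) (hv : 0 ≤ v)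
    (hs : Summable fun i : ℕ => c (i + 1) * v ^ (i + 1))
    (h1 : ∀ i, c (i + 1) * v ^ (i + 1) < 1) :
    Summable fun n => weightedPartitionSum c n * v ^ n := by
  have hterm (i : ℕ) : 0 ≤ c (i + 1) * v ^ (i + 1) := mul_nonneg (hc _) (by positivity)
  have hlog : Summable fun i : ℕ => -Real.log (1 - c (i + 1) * v ^ (i + 1)) := by
    simpa only [sub_eq_add_neg] using (Real.summable_log_one_add_of_summable hs.neg).neg
  refine summable_of_sum_range_le (c := Real.exp (∑' i, -Real.log (1 - c (i + 1) * v ^ (i + 1))))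
    (fun n => mul_nonneg (weightedPartitionSum_nonneg hc n) (by positivity)) fun N => ?_
  obtain ⟨hsum, htsum⟩ := absSumsTo_weightedPartitionSum_truncateWeights N c v fun i => by
    rw [Real.norm_of_nonneg (hterm i)]
    exact h1 i
  have htrunc (i : ℕ) : 0 ≤ truncateWeights N c i := by
    unfold truncateWeights
    split_ifs
    exacts [hc i, le_rfl]
  calc ∑ n ∈ Finset.range N, weightedPartitionSum c n * v ^ n
      = ∑ n ∈ Finset.range N, weightedPartitionSum (truncateWeights N c) n * v ^ n :=
        Finset.sum_congr rfl fun n hn => by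
          rw [weightedPartitionSum_truncateWeights (Finset.mem_range.1 hn).le]
    _ ≤ ∑' n, weightedPartitionSum (truncateWeights N c) n * v ^ n :=
        hsum.of_norm.sum_le_tsum _ fun n _ =>
          mul_nonneg (weightedPartitionSum_nonneg htrunc n) (by positivity)
    _ = ∏ i ∈ Finset.range N, (1 - c (i + 1) * v ^ (i + 1))⁻¹ := htsum
    _ = Real.exp (∑ i ∈ Finset.range N, -Real.log (1 - c (i + 1) * v ^ (i + 1))) := by
        rw [Real.exp_sum]
        refine Finset.prod_congr rfl fun i _ => ?_
        rw [Real.exp_neg, Real.exp_log (by linarith [h1 i])]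
    _ ≤ Real.exp (∑' i, -Real.log (1 - c (i + 1) * v ^ (i + 1))) :=
        Real.exp_le_exp.2 <| hlog.sum_le_tsum _ fun i _ => neg_nonneg.2 <|
          Real.log_nonpos (by linarith [h1 i]) (by linarith [hterm i])

end WeightedPartitions

lemma summable_norm_weightedPartitionSum_mul_pow {c : ℕ → ℂ} {v : ℂ}
    (hs : Summable fun i : ℕ => ‖c (i + 1) * v ^ (i + 1)‖)
    (h1 : ∀ i, ‖c (i + 1) * v ^ (i + 1)‖ < 1) :
    Summable fun n => weightedPartitionSum (fun i => ‖c i‖) n * ‖v‖ ^ n :=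
  summable_weightedPartitionSum_of_nonneg (fun _ => norm_nonneg _) (norm_nonneg _)
    (by simpa only [norm_mul, norm_pow] using hs) (by simpa only [norm_mul, norm_pow] using h1)

lemma norm_weightedPartitionSum_mul_pow_le {c d : ℕ → ℂ} (h : ∀ i, ‖d i‖ ≤ ‖c i‖) (v : ℂ) (n : ℕ) :
    ‖weightedPartitionSum d n * v ^ n‖ ≤ weightedPartitionSum (fun i => ‖c i‖) n * ‖v‖ ^ n := by
  rw [norm_mul, norm_pow]
  gcongr
  exact norm_weightedPartitionSum_le d _ h n

theorem hasSum_weightedPartitionSum_mul_pow {c : ℕ → ℂ} {v : ℂ}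
    (hs : Summable fun i : ℕ => ‖c (i + 1) * v ^ (i + 1)‖)
    (h1 : ∀ i, ‖c (i + 1) * v ^ (i + 1)‖ < 1) :
    HasSum (fun n => weightedPartitionSum c n * v ^ n)
      (exp (∑' i : ℕ, -log (1 - c (i + 1) * v ^ (i + 1)))) := by
  have hbound := summable_norm_weightedPartitionSum_mul_pow hs h1
  have hlog : Summable fun i : ℕ => -log (1 - c (i + 1) * v ^ (i + 1)) := by
    simpa only [sub_eq_add_neg] using (summable_log_one_add_of_summable hs.of_norm.neg).neg
  have tendsto_sum : Tendsto (fun N => ∑' n, weightedPartitionSum (truncateWeights N c) n * v ^ n)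
      atTop (𝓝 (∑' n, weightedPartitionSum c n * v ^ n)) := by
    refine tendsto_tsum_of_dominated_convergence hbound (fun n => ?_) <| .of_forall fun N n =>
      norm_weightedPartitionSum_mul_pow_le (norm_truncateWeights_le N c) v n
    refine tendsto_const_nhds.congr' ?_
    filter_upwards [eventually_ge_atTop n] with N hN
    rw [weightedPartitionSum_truncateWeights hN]
  have tendsto_exp : Tendsto
      (fun N => ∑' n, weightedPartitionSum (truncateWeights N c) n * v ^ n) atTop
      (𝓝 (exp (∑' i : ℕ, -log (1 - c (i + 1) * v ^ (i + 1))))) := by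
    refine ((continuous_exp.tendsto _).comp hlog.hasSum.tendsto_sum_nat).congr fun N => ?_
    rw [(absSumsTo_weightedPartitionSum_truncateWeights N c v h1).2, Function.comp_apply, exp_sum]
    refine Finset.prod_congr rfl fun i _ => ?_
    rw [exp_neg, exp_log (sub_ne_zero.2 fun h => ?_)]
    simpa [← h] using h1 i
  rw [← tendsto_nhds_unique tendsto_sum tendsto_exp]
  exact (Summable.of_norm_bounded hbound fun n =>
    norm_weightedPartitionSum_mul_pow_le (fun _ => le_rfl) v n).hasSum

lemma card_parts_mem_Icc {n : ℕ} (hn : n ≠ 0) (p : n.Partition) :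
    p.parts.card ∈ Finset.Icc 1 n := by
  refine Finset.mem_Icc.2 ⟨Multiset.card_pos.2 fun h => hn ?_, ?_⟩
  · rw [← p.parts_sum, h, Multiset.sum_zero]
  · have := Multiset.card_nsmul_le_sum (s := p.parts) (a := 1) fun i hi => p.parts_pos hi
    rwa [p.parts_sum, smul_eq_mul, mul_one] at this

lemma F_eq_weightedPartitionSum {n : ℕ} (hn : n ≠ 0) (x : ℂ) :
    F n x = weightedPartitionSum (fun _ => x) n := by
  simp only [F, weightedPartitionSum, Multiset.map_const', Multiset.prod_replicate]
  rw [← Finset.sum_fiberwise_of_maps_to fun p _ => card_parts_mem_Icc hn p]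
  refine Finset.sum_congr rfl fun k _ => ?_
  rw [Finset.sum_congr rfl fun p hp => by rw [(Finset.mem_filter.1 hp).2], Finset.sum_const,
    nsmul_eq_mul, partsCount, Nat.card_eq_fintype_card, Fintype.card_subtype]

/-! ### Cauchy's formula for the partition polynomials -/

/-- The logarithm of the generating function `∏ i, (1 - x e ^ (-i w))⁻¹` of the `F n x`, expanded
in powers of `x`. -/
noncomputable def logGenFun (x w : ℂ) : ℂ :=
  ∑' l : ℕ, x ^ (l + 1) / ((l : ℂ) + 1) * (1 / (exp (((l : ℂ) + 1) * w) - 1))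

lemma re_le_norm_exp_sub_one (z : ℂ) : z.re ≤ ‖exp z - 1‖ := by
  have h := norm_sub_norm_le (exp z) 1
  rw [norm_exp, norm_one] at h
  linarith [Real.add_one_le_exp z.re]

lemma norm_exp_neg_lt_one {w : ℂ} (hw : 0 < w.re) : ‖exp (-w)‖ < 1 := by
  rwa [norm_exp, Real.exp_lt_one_iff, neg_re, neg_lt_zero]

lemma norm_mul_pow_lt_one {x u : ℂ} (hx : ‖x‖ < 1) (hu : ‖u‖ ≤ 1) (i : ℕ) : ‖x * u ^ i‖ < 1 := by
  rw [norm_mul, norm_pow]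
  exact (mul_le_of_le_one_right (norm_nonneg x) (pow_le_one₀ (norm_nonneg u) hu)).trans_lt hx

lemma summable_mul_pow_pow_div {x u : ℂ} (hx : ‖x‖ < 1) (hu : ‖u‖ < 1) :
    Summable (Function.uncurry fun i l : ℕ => (x * u ^ (i + 1)) ^ (l + 1) / ((l : ℂ) + 1)) := by
  have hgeom := (summable_geometric_of_lt_one (norm_nonneg u) hu).mul_of_nonneg
    (summable_geometric_of_lt_one (norm_nonneg x) hx)
    (fun _ => by positivity) (fun _ => by positivity)
  refine Summable.of_norm_bounded hgeom ?_
  rintro ⟨i, l⟩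
  rw [Function.uncurry_apply_pair, norm_div, norm_natCast_add_one, norm_pow, norm_mul, norm_pow,
    mul_pow, ← pow_mul, mul_comm (‖u‖ ^ i)]
  refine (div_le_self (by positivity) (by linarith [(l.cast_nonneg : (0 : ℝ) ≤ l)])).trans ?_
  exact mul_le_mul (pow_le_pow_of_le_one (norm_nonneg x) hx.le l.le_succ)
    (pow_le_pow_of_le_one (norm_nonneg u) hu.le (by nlinarith)) (by positivity) (by positivity)

lemma tsum_neg_log_eq_logGenFun {x w : ℂ} (hx : ‖x‖ < 1) (hw : 0 < w.re) :
    ∑' i : ℕ, -log (1 - x * exp (-w) ^ (i + 1)) = logGenFun x w := by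
  set u := exp (-w) with hu
  have hu1 : ‖u‖ < 1 := norm_exp_neg_lt_one hw
  have log_eq (i : ℕ) : -log (1 - x * u ^ (i + 1)) =
      ∑' l : ℕ, (x * u ^ (i + 1)) ^ (l + 1) / ((l : ℂ) + 1) :=
    (hasSum_taylorSeries_neg_log' (norm_mul_pow_lt_one hx hu1.le _)).tsum_eq.symm
  simp_rw [log_eq]
  rw [← (summable_mul_pow_pow_div hx hu1).tsum_comm, logGenFun]
  refine tsum_congr fun l => ?_
  have hul : ‖u ^ (l + 1)‖ < 1 := norm_pow_lt_one hu1 l.succ_ne_zero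
  have term_eq (i : ℕ) : (x * u ^ (i + 1)) ^ (l + 1) / ((l : ℂ) + 1) =
      x ^ (l + 1) / ((l : ℂ) + 1) * u ^ (l + 1) * (u ^ (l + 1)) ^ i := by ring
  have exp_eq : exp (((l : ℂ) + 1) * w) = (u ^ (l + 1))⁻¹ := by
    rw [hu, ← exp_nat_mul, ← exp_neg]
    push_cast
    ring_nf
  have hne : 1 - u ^ (l + 1) ≠ 0 := sub_ne_zero.2 fun h => by simp [← h] at hul
  have hu0 : u ^ (l + 1) ≠ 0 := pow_ne_zero _ (exp_ne_zero _)
  simp_rw [term_eq]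
  rw [tsum_mul_left, tsum_geometric_of_norm_lt_one hul, exp_eq, mul_assoc]
  congr 1
  field_simp

lemma summable_norm_mul_exp_neg_pow {w : ℂ} (x : ℂ) (hw : 0 < w.re) :
    Summable fun i : ℕ => ‖x * exp (-w) ^ (i + 1)‖ := by
  refine ((summable_geometric_of_lt_one (norm_nonneg _) (norm_exp_neg_lt_one hw)).mul_left
    (‖x‖ * ‖exp (-w)‖)).congr fun i => ?_
  rw [norm_mul, norm_pow]
  ring

lemma hasSum_weightedPartitionSum_mul_exp {x w : ℂ} (hx : ‖x‖ < 1) (hw : 0 < w.re) :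
    HasSum (fun n => weightedPartitionSum (fun _ => x) n * exp (-w) ^ n) (exp (logGenFun x w)) := by
  rw [← tsum_neg_log_eq_logGenFun hx hw]
  exact hasSum_weightedPartitionSum_mul_pow (summable_norm_mul_exp_neg_pow x hw)
    fun i => norm_mul_pow_lt_one hx (norm_exp_neg_lt_one hw).le _

lemma integral_exp_sub_mul_I (m n : ℕ) :
    ∫ θ in (-1 : ℝ)..(2 * Real.pi - 1), exp ((((n : ℂ) - m) * I) * θ) =
      if m = n then 2 * (Real.pi : ℂ) else 0 := by
  split_ifs with h
  · subst h
    simp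
  · have hne : ((n : ℂ) - m) * I ≠ 0 :=
      mul_ne_zero (sub_ne_zero.2 (by exact_mod_cast Ne.symm h)) I_ne_zero
    have period : ((n : ℂ) - m) * I * ((2 * Real.pi - 1 : ℝ) : ℂ) =
        ((n : ℂ) - m) * I * ((-1 : ℝ) : ℂ) + ((n - m : ℤ) : ℂ) * (2 * Real.pi * I) := by
      push_cast
      ring
    rw [integral_exp_mul_complex hne, period, exp_add, exp_int_mul_two_pi_mul_I, mul_one, sub_self,
      zero_div]

lemma integral_weightedPartitionSum_mul_exp (x : ℂ) (σ : ℝ) (m : ℕ) {n : ℕ} (hn : n ≠ 0) :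
    ∫ θ in (-1 : ℝ)..(2 * Real.pi - 1), weightedPartitionSum (fun _ => x) m *
        exp (-((σ : ℂ) + θ * I)) ^ m * exp (n * (σ + θ * I)) =
      if m = n then 2 * (Real.pi : ℂ) * F n x else 0 := by
  have integrand_eq (θ : ℝ) : weightedPartitionSum (fun _ => x) m *
        exp (-((σ : ℂ) + θ * I)) ^ m * exp (n * (σ + θ * I)) =
      (weightedPartitionSum (fun _ => x) m * exp (((n : ℂ) - m) * σ)) *
        exp ((((n : ℂ) - m) * I) * θ) := by
    rw [← exp_nat_mul, mul_assoc, mul_assoc, ← exp_add, ← exp_add]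
    congr 2
    ring
  simp_rw [integrand_eq]
  rw [intervalIntegral.integral_const_mul, integral_exp_sub_mul_I]
  split_ifs with h
  · subst h
    rw [F_eq_weightedPartitionSum hn, sub_self, zero_mul, exp_zero]
    ring
  · exact mul_zero _

/-- The contour is the circle of radius `e ^ (-σ)`, and its argument runs over `[-1, 2π - 1]` so
that the saddle point `θ = 0` is interior. -/
theorem two_pi_mul_F_eq_integral {x : ℂ} (hx : ‖x‖ < 1) {σ : ℝ} (hσ : 0 < σ) {n : ℕ} (hn : n ≠ 0) :
    2 * (Real.pi : ℂ) * F n x = ∫ θ in (-1 : ℝ)..(2 * Real.pi - 1),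
      exp (logGenFun x (σ + θ * I) + n * (σ + θ * I)) := by
  have hre (θ : ℝ) : 0 < ((σ : ℂ) + θ * I).re := by simpa using hσ
  have hsum : Summable fun m =>
      weightedPartitionSum (fun _ : ℕ => ‖x‖) m * ‖exp (-(σ : ℂ))‖ ^ m :=
    summable_norm_weightedPartitionSum_mul_pow (c := fun _ => x)
      (summable_norm_mul_exp_neg_pow x (by simpa using hσ))
      fun i => norm_mul_pow_lt_one hx (norm_exp_neg_lt_one (by simpa using hσ)).le _
  have key := intervalIntegral.hasSum_integral_of_dominated_convergence
    (μ := MeasureTheory.volume) (a := (-1 : ℝ)) (b := 2 * Real.pi - 1)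
    (F := fun (m : ℕ) (θ : ℝ) => weightedPartitionSum (fun _ => x) m *
      exp (-((σ : ℂ) + θ * I)) ^ m * exp (n * (σ + θ * I)))
    (f := fun θ : ℝ => exp (logGenFun x (σ + θ * I) + n * (σ + θ * I)))
    (fun m _ => weightedPartitionSum (fun _ : ℕ => ‖x‖) m * ‖exp (-(σ : ℂ))‖ ^ m *
      Real.exp (n * σ))
    (fun m => Continuous.aestronglyMeasurable (by fun_prop))
    (fun m => .of_forall fun θ _ => by
      rw [norm_mul, norm_mul, norm_pow, norm_exp, norm_exp, norm_exp]
      simp only [neg_re, add_re, ofReal_re, ofReal_im, I_re, mul_zero, natCast_re,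
        natCast_im, mul_re, zero_mul, sub_zero, add_zero]
      gcongr
      exact norm_weightedPartitionSum_le (fun _ => x) _ (fun _ => le_rfl) m)
    (.of_forall fun θ _ => hsum.mul_right _) intervalIntegrable_const
    (.of_forall fun θ _ => by
      rw [exp_add]
      exact (hasSum_weightedPartitionSum_mul_exp hx (hre θ)).mul_right _)
  simp_rw [integral_weightedPartitionSum_mul_exp x σ _ hn] at key
  exact (hasSum_ite_eq n _).unique key

/-! ### The generating function near roots of unity -/

/-- The part of `1 / (e ^ z - 1)` that stays bounded at `0`. -/
noncomputable def expRemainder (z : ℂ) : ℂ := 1 / (exp z - 1) - 1 / z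

/-- The part of `1 / (e ^ ((l + 1) (w + θ i)) - 1)` that stays bounded as `w → 0`: the pole at
`w = 0`, present when `e ^ (θ i)` has order dividing `l + 1`, is removed. -/
noncomputable def regularPart (θ : ℝ) (w : ℂ) (l : ℕ) : ℂ :=
  if orderOf (exp (θ * I)) ∣ l + 1 then expRemainder (((l : ℂ) + 1) * w)
  else 1 / (exp (((l : ℂ) + 1) * (w + θ * I)) - 1)

lemma natCast_add_one_ne_zero (l : ℕ) : (l : ℂ) + 1 ≠ 0 := l.cast_add_one_ne_zero

lemma re_natCast_add_one_mul (l : ℕ) (w : ℂ) : (((l : ℂ) + 1) * w).re = (l + 1) * w.re := by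
  simp [mul_re]

lemma re_le_re_natCast_add_one_mul {w : ℂ} (hw : 0 ≤ w.re) (l : ℕ) :
    w.re ≤ (((l : ℂ) + 1) * w).re := by
  rw [re_natCast_add_one_mul]
  exact le_mul_of_one_le_left hw (by linarith [(l.cast_nonneg : (0 : ℝ) ≤ l)])

lemma norm_one_div_exp_sub_one_le {w : ℂ} (hw : 0 < w.re) (l : ℕ) :
    ‖1 / (exp (((l : ℂ) + 1) * w) - 1)‖ ≤ 1 / w.re := by
  rw [norm_div, norm_one]
  exact one_div_le_one_div_of_le hw
    ((re_le_re_natCast_add_one_mul hw.le l).trans (re_le_norm_exp_sub_one _))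

lemma exp_mul_eq_one_iff_orderOf_dvd {θ : ℝ} {l : ℕ} :
    exp (((l : ℂ) + 1) * (θ * I)) = 1 ↔ orderOf (exp (θ * I)) ∣ l + 1 := by
  rw [orderOf_dvd_iff_pow_eq_one, ← exp_nat_mul, Nat.cast_succ]

lemma exp_mul_add_of_orderOf_dvd {θ : ℝ} {l : ℕ} (h : orderOf (exp (θ * I)) ∣ l + 1) (w : ℂ) :
    exp (((l : ℂ) + 1) * (w + θ * I)) = exp (((l : ℂ) + 1) * w) := by
  rw [mul_add, exp_add, exp_mul_eq_one_iff_orderOf_dvd.2 h, mul_one]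

lemma regularPart_eq_sub {θ : ℝ} {l : ℕ} (w : ℂ) :
    regularPart θ w l = 1 / (exp (((l : ℂ) + 1) * (w + θ * I)) - 1) -
      if orderOf (exp (θ * I)) ∣ l + 1 then 1 / (((l : ℂ) + 1) * w) else 0 := by
  unfold regularPart
  split_ifs with h
  · rw [exp_mul_add_of_orderOf_dvd h, expRemainder]
  · rw [sub_zero]

lemma norm_regularPart_le {w : ℂ} (hw : 0 < w.re) (θ : ℝ) (l : ℕ) :
    ‖regularPart θ w l‖ ≤ 2 / w.re := by
  have hpole : ‖if orderOf (exp (θ * I)) ∣ l + 1 then 1 / (((l : ℂ) + 1) * w) else 0‖ ≤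
      1 / w.re := by
    split_ifs
    · rw [norm_div, norm_one]
      exact one_div_le_one_div_of_le hw
        ((re_le_re_natCast_add_one_mul hw.le l).trans (re_le_norm _))
    · rw [norm_zero]
      positivity
  have hexp := norm_one_div_exp_sub_one_le (w := w + θ * I) (by simpa using hw) l
  rw [show (w + θ * I).re = w.re by simp] at hexp
  rw [regularPart_eq_sub]
  exact (norm_sub_le _ _).trans ((add_le_add hexp hpole).trans_eq (by ring))

lemma summable_pow_succ {ρ : ℝ} (h0 : 0 ≤ ρ) (h1 : ρ < 1) : Summable fun l : ℕ => ρ ^ (l + 1) :=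
  (summable_nat_add_iff 1).2 (summable_geometric_of_lt_one h0 h1)

lemma norm_pow_succ_div_le {y : ℂ} {ρ : ℝ} (hy : ‖y‖ ≤ ρ) (l : ℕ) :
    ‖y ^ (l + 1) / ((l : ℂ) + 1)‖ ≤ ρ ^ (l + 1) := by
  rw [norm_div, norm_pow, norm_natCast_add_one]
  refine (div_le_self (by positivity) (by linarith [(l.cast_nonneg : (0 : ℝ) ≤ l)])).trans ?_
  gcongr

lemma norm_ite_dvd_pow_succ_div_sq_le {y : ℂ} {ρ : ℝ} (hy : ‖y‖ ≤ ρ) (k l : ℕ) :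
    ‖if k ∣ l + 1 then y ^ (l + 1) / ((l : ℂ) + 1) ^ 2 else 0‖ ≤ ρ ^ (l + 1) := by
  have hρ : 0 ≤ ρ := (norm_nonneg y).trans hy
  split_ifs
  · rw [norm_div, norm_pow, norm_pow, norm_natCast_add_one]
    refine (div_le_self (by positivity) ?_).trans (by gcongr)
    exact one_le_pow₀ (by linarith [(l.cast_nonneg : (0 : ℝ) ≤ l)])
  · rw [norm_zero]
    positivity

lemma tsum_ite_dvd_pow_succ_div_sq (k : ℕ) (y : ℂ) :
    ∑' l : ℕ, (if k ∣ l + 1 then y ^ (l + 1) / ((l : ℂ) + 1) ^ 2 else 0) = sqrtDilog k y ^ 2 := by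
  rw [sqrtDilog_sq]
  rcases k.eq_zero_or_pos with rfl | hk
  · simp
  have pred_add_one (j : ℕ) : k * (j + 1) - 1 + 1 = k * (j + 1) :=
    Nat.sub_add_cancel (Nat.mul_pos hk j.succ_pos)
  have hinj : Function.Injective fun j : ℕ => k * (j + 1) - 1 := fun i j h => by
    have : k * (i + 1) = k * (j + 1) := by
      rw [← pred_add_one i, ← pred_add_one j]
      exact congrArg (· + 1) h
    exact Nat.succ_injective (Nat.eq_of_mul_eq_mul_left hk this)
  rw [← hinj.tsum_eq]
  · rw [dilog, ← tsum_div_const]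
    refine tsum_congr fun j => ?_
    have hcast : ((k * (j + 1) - 1 : ℕ) : ℂ) + 1 = k * ((j : ℂ) + 1) := by
      exact_mod_cast congrArg (Nat.cast (R := ℂ)) (pred_add_one j)
    rw [pred_add_one, if_pos (dvd_mul_right _ _), hcast, pow_mul, mul_pow, div_div,
      mul_comm ((k : ℂ) ^ 2)]
  · intro l hl
    obtain ⟨j, hj⟩ : k ∣ l + 1 := by
      by_contra h
      exact hl (if_neg h)
    obtain ⟨j, rfl⟩ : ∃ i, j = i + 1 := Nat.exists_eq_succ_of_ne_zero <| by
      rintro rfl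
      exact l.succ_ne_zero hj
    exact ⟨j, Nat.succ_injective ((pred_add_one j).trans hj.symm)⟩

lemma logGenFun_add_mul_I {y w : ℂ} (hy : ‖y‖ < 1) (hw : 0 < w.re) (θ : ℝ) :
    logGenFun y (w + θ * I) = sqrtDilog (orderOf (exp (θ * I))) y ^ 2 / w +
      ∑' l : ℕ, y ^ (l + 1) / ((l : ℂ) + 1) * regularPart θ w l := by
  have hgeom := summable_pow_succ (norm_nonneg y) hy
  have hpole : Summable fun l : ℕ =>
      if orderOf (exp (θ * I)) ∣ l + 1 then y ^ (l + 1) / ((l : ℂ) + 1) ^ 2 else 0 :=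
    .of_norm_bounded hgeom fun l => norm_ite_dvd_pow_succ_div_sq_le le_rfl _ l
  have hreg : Summable fun l : ℕ => y ^ (l + 1) / ((l : ℂ) + 1) * regularPart θ w l :=
    .of_norm_bounded (hgeom.mul_right (2 / w.re)) fun l =>
      norm_mul_le_of_le (norm_pow_succ_div_le le_rfl l) (norm_regularPart_le hw θ l)
  rw [← tsum_ite_dvd_pow_succ_div_sq, ← tsum_div_const, ← (hpole.div_const w).tsum_add hreg,
    logGenFun]
  refine tsum_congr fun l => ?_
  have hw0 : w ≠ 0 := ne_zero_of_re_pos hw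
  have hl0 := natCast_add_one_ne_zero l
  rw [regularPart_eq_sub]
  split_ifs
  · field_simp
    ring
  · ring

lemma expRemainder_eq {z : ℂ} (hz : z ≠ 0) (h : exp z - 1 ≠ 0) :
    expRemainder z = -(exp z - 1 - z) / (z * (exp z - 1)) := by
  unfold expRemainder
  field_simp
  ring

lemma norm_expRemainder_le {z : ℂ} (hz : z ≠ 0) (h : ‖z‖ ≤ 1 / 2) : ‖expRemainder z‖ ≤ 2 := by
  have hpos : 0 < ‖z‖ := norm_pos_iff.2 hz
  have hquad := norm_exp_sub_one_sub_id_le (x := z) (by linarith)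
  have hlower : ‖z‖ / 2 ≤ ‖exp z - 1‖ := by
    have := norm_sub_norm_le z (exp z - 1)
    rw [norm_sub_rev z] at this
    nlinarith
  have hne : exp z - 1 ≠ 0 := norm_pos_iff.1 (by linarith)
  rw [expRemainder_eq hz hne, norm_div, norm_neg, norm_mul, div_le_iff₀ (by positivity)]
  nlinarith

lemma tendsto_re_mul_regularPart (θ : ℝ) (l : ℕ) :
    Tendsto (fun w : ℂ => (w.re : ℂ) * regularPart θ w l) (𝓝[{w | 0 < w.re}] 0) (𝓝 0) := by
  unfold regularPart
  split_ifs with h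
  · have hre : Tendsto (fun w : ℂ => w.re * 2) (𝓝[{w | 0 < w.re}] 0) (𝓝 0) :=
      tendsto_nhdsWithin_of_tendsto_nhds <| by
        simpa using (continuous_re.mul_const (2 : ℝ)).tendsto (0 : ℂ)
    have hsmall : ∀ᶠ w : ℂ in 𝓝 0, ‖((l : ℂ) + 1) * w‖ ≤ 1 / 2 :=
      (Continuous.tendsto (by fun_prop : Continuous fun w : ℂ => ‖((l : ℂ) + 1) * w‖)
        0).eventually_le_const (by simp)
    refine squeeze_zero_norm' ?_ hre
    filter_upwards [nhdsWithin_le_nhds hsmall, self_mem_nhdsWithin] with w hw (hpos : 0 < w.re)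
    rw [norm_mul, norm_real, Real.norm_of_nonneg hpos.le]
    gcongr
    exact norm_expRemainder_le
      (mul_ne_zero (natCast_add_one_ne_zero l) (ne_zero_of_re_pos hpos)) hw
  · refine tendsto_nhdsWithin_of_tendsto_nhds ?_
    have hcont : ContinuousAt (fun w : ℂ =>
        (w.re : ℂ) * (1 / (exp (((l : ℂ) + 1) * (w + θ * I)) - 1))) 0 := by
      refine ContinuousAt.mul (by fun_prop) (ContinuousAt.div (by fun_prop) (by fun_prop) ?_)
      simpa only [zero_add, sub_ne_zero] using mt exp_mul_eq_one_iff_orderOf_dvd.1 h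
    simpa using hcont.tendsto

lemma tendsto_fst_nhdsWithin {α β : Type*} [TopologicalSpace α] [TopologicalSpace β] (s : Set α)
    (a : α) (b : β) : Tendsto Prod.fst (𝓝[{z : α × β | z.1 ∈ s}] (a, b)) (𝓝[s] a) :=
  tendsto_nhdsWithin_iff.2
    ⟨tendsto_nhdsWithin_of_tendsto_nhds continuousAt_fst, eventually_mem_nhdsWithin⟩

lemma eventually_norm_snd_le {α : Type*} [TopologicalSpace α] (a : α) {x : ℂ} {ρ : ℝ}
    (h : ‖x‖ < ρ) : ∀ᶠ z : α × ℂ in 𝓝 (a, x), ‖z.2‖ ≤ ρ :=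
  have hcont : Continuous fun z : α × ℂ => ‖z.2‖ := by fun_prop
  (hcont.tendsto (a, x)).eventually_le_const h

lemma tendsto_re_mul_logGenFun {x : ℂ} (hx : ‖x‖ < 1) (θ : ℝ) :
    Tendsto (fun z : ℂ × ℂ => (z.1.re : ℂ) * logGenFun z.2 (z.1 + θ * I) -
        sqrtDilog (orderOf (exp (θ * I))) z.2 ^ 2 * (z.1.re / z.1))
      (𝓝[{z | z.1 ∈ {w : ℂ | 0 < w.re}}] (0, x)) (𝓝 0) := by
  obtain ⟨ρ, hρ, hρ1⟩ := exists_between hx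
  have hρ0 : 0 ≤ ρ := (norm_nonneg x).trans hρ.le
  have hbase : ∀ᶠ z : ℂ × ℂ in 𝓝[{z | z.1 ∈ {w : ℂ | 0 < w.re}}] (0, x), ‖z.2‖ ≤ ρ :=
    nhdsWithin_le_nhds (eventually_norm_snd_le 0 hρ)
  have hregular : Tendsto (fun z : ℂ × ℂ => ∑' l : ℕ,
      z.2 ^ (l + 1) / ((l : ℂ) + 1) * ((z.1.re : ℂ) * regularPart θ z.1 l))
      (𝓝[{z | z.1 ∈ {w : ℂ | 0 < w.re}}] (0, x)) (𝓝 (∑' _ : ℕ, (0 : ℂ))) := by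
    refine tendsto_tsum_of_dominated_convergence ((summable_pow_succ hρ0 hρ1).mul_right 2)
      (fun l => ?_) ?_
    · have hpow : Continuous fun z : ℂ × ℂ => z.2 ^ (l + 1) / ((l : ℂ) + 1) := by fun_prop
      simpa only [mul_zero, Function.comp_apply] using
        (tendsto_nhdsWithin_of_tendsto_nhds (hpow.tendsto (0, x))).mul
          ((tendsto_re_mul_regularPart θ l).comp (tendsto_fst_nhdsWithin _ 0 x))
    · filter_upwards [hbase, self_mem_nhdsWithin] with z hz (hpos : 0 < z.1.re) l
      refine norm_mul_le_of_le (norm_pow_succ_div_le hz l) ?_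
      rw [norm_mul, norm_real, Real.norm_of_nonneg hpos.le]
      exact (mul_le_mul_of_nonneg_left (norm_regularPart_le hpos θ l) hpos.le).trans_eq
        (mul_div_cancel₀ 2 hpos.ne')
  rw [tsum_zero] at hregular
  refine hregular.congr' ?_
  filter_upwards [hbase, self_mem_nhdsWithin] with z hz (hpos : 0 < z.1.re)
  rw [logGenFun_add_mul_I (hz.trans_lt hρ1) hpos, mul_add, ← tsum_mul_left, mul_div_left_comm,
    add_sub_cancel_left]
  exact tsum_congr fun l => mul_left_comm _ _ _

lemma re_sq_sub_re_sq_mul_re_div (A : ℂ) {w : ℂ} (hw : w ≠ 0) :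
    A.re ^ 2 - (A ^ 2 * (w.re / w)).re = (A.re * w.im - A.im * w.re) ^ 2 / normSq w := by
  have hpos : 0 < normSq w := normSq_pos.2 hw
  rw [div_eq_mul_inv, mul_re, mul_im, mul_re, inv_re, inv_im, ofReal_re, ofReal_im]
  simp only [pow_two, mul_re, mul_im]
  field_simp
  rw [normSq_apply]
  ring

lemma re_sq_mul_re_div_le (A w : ℂ) : (A ^ 2 * (w.re / w)).re ≤ A.re ^ 2 := by
  rcases eq_or_ne w 0 with rfl | hw
  · simpa using sq_nonneg A.re
  · rw [← sub_nonneg, re_sq_sub_re_sq_mul_re_div A hw]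
    exact div_nonneg (sq_nonneg _) (normSq_nonneg w)

lemma eventually_re_mul_logGenFun_le {x : ℂ} (hx : ‖x‖ < 1) (θ : ℝ) {ε : ℝ} (hε : 0 < ε) :
    ∀ᶠ z : ℂ × ℂ in 𝓝 (0, x), 0 < z.1.re →
      z.1.re * (logGenFun z.2 (z.1 + θ * I)).re ≤ fk (orderOf (exp (θ * I))) x ^ 2 + ε := by
  have hlim := (continuous_re.tendsto 0).comp (tendsto_re_mul_logGenFun hx θ)
  rw [zero_re] at hlim
  have hfk : ContinuousAt (fun z : ℂ × ℂ => fk (orderOf (exp (θ * I))) z.2 ^ 2) (0, x) :=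
    (ContinuousAt.comp (f := Prod.snd) (x := (0, x)) (continuousAt_fk _ hx) continuousAt_snd).pow 2
  filter_upwards [eventually_nhdsWithin_iff.1 (hlim.eventually_lt_const (half_pos hε)),
    hfk.eventually_lt_const (lt_add_of_pos_right _ (half_pos hε))] with z hz hfkz hpos
  have hsaddle := re_sq_mul_re_div_le (sqrtDilog (orderOf (exp (θ * I))) z.2) z.1
  have hz := hz hpos
  rw [sqrtDilog_re] at hsaddle
  rw [Function.comp_apply, sub_re, re_ofReal_mul] at hz
  linarith

lemma tendsto_add_mul_I_sub (x : ℂ) (θ : ℝ) :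
    Tendsto (fun z : (ℝ × ℂ) × ℝ => ((z.1.1 : ℂ) + ((z.2 - θ : ℝ) : ℂ) * I, z.1.2))
      (𝓝 ((0, x), θ)) (𝓝 (0, x)) := by
  have hcont : Continuous fun z : (ℝ × ℂ) × ℝ =>
      ((z.1.1 : ℂ) + ((z.2 - θ : ℝ) : ℂ) * I, z.1.2) := by fun_prop
  simpa using hcont.tendsto ((0, x), θ)

lemma eventually_mul_logGenFun_line_le {x : ℂ} (hx : ‖x‖ < 1) (θ : ℝ) {ε : ℝ} (hε : 0 < ε) :
    ∀ᶠ z : (ℝ × ℂ) × ℝ in 𝓝 ((0, x), θ), 0 < z.1.1 →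
      z.1.1 * (logGenFun z.1.2 (z.1.1 + z.2 * I)).re ≤ fk (orderOf (exp (θ * I))) x ^ 2 + ε := by
  filter_upwards [(tendsto_add_mul_I_sub x θ).eventually
    (eventually_re_mul_logGenFun_le hx θ hε)] with z hz hpos
  have hre : ((z.1.1 : ℂ) + ((z.2 - θ : ℝ) : ℂ) * I).re = z.1.1 := by simp
  have hshift : (z.1.1 : ℂ) + ((z.2 - θ : ℝ) : ℂ) * I + θ * I = z.1.1 + z.2 * I := by
    push_cast
    ring
  simpa only [hre, hshift] using hz (hre.symm ▸ hpos)

/-! ### Upper bound for the partition polynomials -/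

lemma eventually_forall_mul_logGenFun_le {x : ℂ} (hx : ‖x‖ < 1) {ε : ℝ} (hε : 0 < ε) :
    ∀ᶠ z : ℝ × ℂ in 𝓝 (0, x), ∀ θ ∈ Set.Icc (-1 : ℝ) (2 * Real.pi - 1), 0 < z.1 →
      z.1 * (logGenFun z.2 (z.1 + θ * I)).re ≤ maxGrowth x ^ 2 + ε := by
  refine isCompact_Icc.eventually_forall_of_forall_eventually (P := fun (z : ℝ × ℂ) (θ : ℝ) =>
    0 < z.1 → z.1 * (logGenFun z.2 (z.1 + θ * I)).re ≤ maxGrowth x ^ 2 + ε) fun θ _ => ?_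
  filter_upwards [eventually_mul_logGenFun_line_le hx θ hε] with z hz hpos
  refine (hz hpos).trans ?_
  gcongr
  exacts [fk_nonneg _ x, fk_le_maxGrowth hx _]

lemma norm_F_le_of_forall_re_le {x : ℂ} (hx : ‖x‖ < 1) {σ : ℝ} (hσ : 0 < σ) {n : ℕ} (hn : n ≠ 0)
    {M : ℝ} (h : ∀ θ ∈ Set.Icc (-1 : ℝ) (2 * Real.pi - 1), (logGenFun x (σ + θ * I)).re ≤ M) :
    ‖F n x‖ ≤ Real.exp (M + n * σ) := by
  have hinteg : ‖∫ θ in (-1 : ℝ)..(2 * Real.pi - 1),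
      exp (logGenFun x (σ + θ * I) + n * (σ + θ * I))‖ ≤
      Real.exp (M + n * σ) * |2 * Real.pi - 1 - (-1)| := by
    refine intervalIntegral.norm_integral_le_of_norm_le_const fun θ hθ => ?_
    rw [Set.uIoc_of_le (by linarith [Real.pi_pos])] at hθ
    rw [norm_exp, add_re, show ((n : ℂ) * (σ + θ * I)).re = n * σ by simp]
    gcongr
    exact h θ ⟨hθ.1.le, hθ.2⟩
  rw [← two_pi_mul_F_eq_integral hx hσ hn, norm_mul, norm_mul, RCLike.norm_two, norm_real,
    Real.norm_of_nonneg Real.pi_pos.le, sub_neg_eq_add, sub_add_cancel,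
    abs_of_pos Real.two_pi_pos, mul_comm (Real.exp _)] at hinteg
  exact le_of_mul_le_mul_left hinteg Real.two_pi_pos

theorem eventually_norm_F_le {x : ℂ} (hx : ‖x‖ < 1) {ε : ℝ} (hε : 0 < ε) :
    ∀ᶠ z : ℕ × ℂ in atTop ×ˢ 𝓝 x, ‖F z.1 z.2‖ ≤ Real.exp (2 * √z.1 * (maxGrowth x + ε)) := by
  set m := maxGrowth x + ε
  have hM := maxGrowth_nonneg x
  have hm0 : 0 < m := by linarith
  have hδ : 0 < m ^ 2 - maxGrowth x ^ 2 := by nlinarith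
  have hσ : Tendsto (fun z : ℕ × ℂ => (m / √z.1, z.2)) (atTop ×ˢ 𝓝 x) (𝓝 (0, x)) := by
    have hdiv : Tendsto (fun n : ℕ => m / √n) atTop (𝓝 0) :=
      tendsto_const_nhds.div_atTop (Real.tendsto_sqrt_atTop.comp tendsto_natCast_atTop_atTop)
    rw [nhds_prod_eq]
    exact (hdiv.comp tendsto_fst).prodMk tendsto_snd
  filter_upwards [hσ.eventually (eventually_forall_mul_logGenFun_le hx hδ),
    tendsto_snd.eventually (eventually_norm_lt_one hx),
    tendsto_fst.eventually (eventually_ne_atTop 0)] with z hz hz1 hn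
  have hsqrt : 0 < √(z.1 : ℝ) := Real.sqrt_pos.2 (by exact_mod_cast Nat.pos_of_ne_zero hn)
  have hpos : 0 < m / √(z.1 : ℝ) := div_pos hm0 hsqrt
  have hsaddle : √(z.1 : ℝ) * m + z.1 * (m / √z.1) = 2 * √z.1 * m := by
    rw [mul_div_left_comm, Real.div_sqrt]
    ring
  rw [← hsaddle]
  refine norm_F_le_of_forall_re_le hz1 hpos hn fun θ hθ => ?_
  refine le_of_mul_le_mul_left ((hz θ hθ hpos).trans_eq ?_) hpos
  field_simp
  ring

/-! ### Asymptotics in a sector at a root of unity -/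

/-- The limit of `regularPart θ w l` as `w → 0`. -/
noncomputable def regularLimit (θ : ℝ) (l : ℕ) : ℂ :=
  if orderOf (exp (θ * I)) ∣ l + 1 then -1 / 2 else 1 / (exp (((l : ℂ) + 1) * (θ * I)) - 1)

/-- The constant term of `w ↦ logGenFun x (w + θ i)` at the cusp `w = 0`. -/
noncomputable def cuspConstant (θ : ℝ) (x : ℂ) : ℂ :=
  ∑' l : ℕ, x ^ (l + 1) / ((l : ℂ) + 1) * regularLimit θ l

lemma tendsto_exp_sub_one_div : Tendsto (fun z : ℂ => (exp z - 1) / z) (𝓝[≠] 0) (𝓝 1) := by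
  have hslope := (hasDerivAt_exp 0).tendsto_slope
  rw [exp_zero] at hslope
  refine hslope.congr fun z => ?_
  rw [slope_def_field, exp_zero, sub_zero]

lemma tendsto_exp_sub_one_sub_id_div_sq :
    Tendsto (fun z : ℂ => (exp z - 1 - z) / z ^ 2) (𝓝[≠] 0) (𝓝 (1 / 2)) := by
  have hnorm : Tendsto (fun z : ℂ => ‖z‖) (𝓝[≠] 0) (𝓝 0) :=
    tendsto_nhdsWithin_of_tendsto_nhds (by simpa using continuous_norm.tendsto (0 : ℂ))
  rw [tendsto_iff_norm_sub_tendsto_zero]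
  refine squeeze_zero' (Eventually.of_forall fun _ => norm_nonneg _) ?_ hnorm
  filter_upwards [hnorm.eventually_le_const one_pos, self_mem_nhdsWithin] with z hz (hz0 : z ≠ 0)
  have htaylor := exp_bound hz (n := 3) (by norm_num)
  simp only [Finset.sum_range_succ, Finset.sum_range_zero] at htaylor
  norm_num [Nat.factorial] at htaylor
  have hsub : (exp z - 1 - z) / z ^ 2 - 1 / 2 = (exp z - (1 + z + z ^ 2 / 2)) / z ^ 2 := by
    field_simp
    ring
  rw [hsub, norm_div, norm_pow, div_le_iff₀ (by positivity)]
  refine htaylor.trans ?_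
  nlinarith [norm_nonneg z, pow_nonneg (norm_nonneg z) 3]

lemma tendsto_expRemainder : Tendsto expRemainder (𝓝[≠] 0) (𝓝 (-1 / 2)) := by
  have hlim := (tendsto_exp_sub_one_sub_id_div_sq.div tendsto_exp_sub_one_div one_ne_zero).neg
  rw [show -(1 / 2 / 1 : ℂ) = -1 / 2 by norm_num] at hlim
  refine hlim.congr' ?_
  filter_upwards [self_mem_nhdsWithin, tendsto_exp_sub_one_div.eventually_ne one_ne_zero]
    with z (hz : z ≠ 0) hquot
  have hexp : exp z - 1 ≠ 0 := fun h => hquot (by rw [h, zero_div])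
  rw [expRemainder_eq hz hexp, Pi.div_apply]
  field_simp

lemma norm_expRemainder_le_of_norm_le_mul_re {z : ℂ} {C : ℝ} (h0 : 0 < z.re)
    (h : ‖z‖ ≤ C * z.re) : ‖expRemainder z‖ ≤ 4 * C + 4 := by
  have hz : 0 < ‖z‖ := h0.trans_le (re_le_norm z)
  have hC : 0 < C := pos_of_mul_pos_left (hz.trans_le h) h0.le
  rcases le_total ‖z‖ (1 / 2) with hsmall | hlarge
  · exact (norm_expRemainder_le (norm_pos_iff.1 hz) hsmall).trans (by linarith)
  · have hre := re_le_norm_exp_sub_one z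
    have hinv : 1 / ‖z‖ ≤ 2 := by
      rw [div_le_iff₀ hz]
      linarith
    have hexp : 1 / ‖exp z - 1‖ ≤ 2 * C := by
      rw [div_le_iff₀ (h0.trans_le hre)]
      nlinarith
    refine (norm_sub_le _ _).trans ?_
    rw [norm_div, norm_div, norm_one]
    linarith

lemma norm_one_div_exp_mul_sub_one_le {z η : ℂ} {C : ℝ} (h0 : 0 < z.re) (h : ‖z‖ ≤ C * z.re)
    (hη : ‖η‖ = 1) (hη1 : 1 ≤ ‖η - 1‖) : ‖1 / (exp z * η - 1)‖ ≤ 4 * C + 4 := by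
  have hC : 0 < C := pos_of_mul_pos_left ((h0.trans_le (re_le_norm z)).trans_le h) h0.le
  rw [norm_div, norm_one]
  rcases le_total ‖z‖ (1 / 4) with hsmall | hlarge
  · have hexp := norm_exp_sub_one_le (x := z) (by linarith)
    have htri := norm_sub_le (exp z * η - 1) ((exp z - 1) * η)
    rw [show exp z * η - 1 - (exp z - 1) * η = η - 1 by ring, norm_mul, hη, mul_one] at htri
    have hhalf : 1 / 2 ≤ ‖exp z * η - 1‖ := by linarith
    rw [div_le_iff₀ (one_half_pos.trans_le hhalf)]
    nlinarith
  · have htri := norm_sub_norm_le (exp z * η) 1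
    rw [norm_mul, hη, mul_one, norm_exp, norm_one] at htri
    have hre : z.re ≤ ‖exp z * η - 1‖ := by linarith [Real.add_one_le_exp z.re]
    rw [div_le_iff₀ (h0.trans_le hre)]
    nlinarith

lemma norm_regularPart_le_of_norm_le_mul_re {θ : ℝ}
    (hη : ∀ η : ℂ, η ^ orderOf (exp (θ * I)) = 1 → η ≠ 1 → 1 ≤ ‖η - 1‖) {w : ℂ} {C : ℝ}
    (h0 : 0 < w.re) (h : ‖w‖ ≤ C * w.re) (l : ℕ) : ‖regularPart θ w l‖ ≤ 4 * C + 4 := by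
  have hre : 0 < (((l : ℂ) + 1) * w).re := h0.trans_le (re_le_re_natCast_add_one_mul h0.le l)
  have hsector : ‖((l : ℂ) + 1) * w‖ ≤ C * (((l : ℂ) + 1) * w).re := by
    rw [re_natCast_add_one_mul, norm_mul, norm_natCast_add_one, mul_left_comm]
    gcongr
  unfold regularPart
  split_ifs with hl
  · exact norm_expRemainder_le_of_norm_le_mul_re hre hsector
  · rw [mul_add, exp_add]
    have hpow : exp (((l : ℂ) + 1) * (θ * I)) = exp (θ * I) ^ (l + 1) := by
      rw [← exp_nat_mul, Nat.cast_succ]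
    refine norm_one_div_exp_mul_sub_one_le hre hsector ?_
      (hη _ ?_ (mt exp_mul_eq_one_iff_orderOf_dvd.1 hl))
    · rw [hpow, norm_pow, norm_exp_ofReal_mul_I, one_pow]
    · rw [hpow, pow_right_comm, pow_orderOf_eq_one, one_pow]

lemma tendsto_regularPart (θ : ℝ) (l : ℕ) :
    Tendsto (fun w => regularPart θ w l) (𝓝[≠] 0) (𝓝 (regularLimit θ l)) := by
  unfold regularPart regularLimit
  split_ifs with hl
  · refine tendsto_expRemainder.comp (tendsto_nhdsWithin_iff.2 ⟨?_, ?_⟩)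
    · exact tendsto_nhdsWithin_of_tendsto_nhds
        (by simpa using (continuous_const_mul ((l : ℂ) + 1)).tendsto 0)
    · filter_upwards [self_mem_nhdsWithin] with w hw
      exact mul_ne_zero (natCast_add_one_ne_zero l) hw
  · refine tendsto_nhdsWithin_of_tendsto_nhds ?_
    have hcont : ContinuousAt (fun w : ℂ => 1 / (exp (((l : ℂ) + 1) * (w + θ * I)) - 1)) 0 := by
      refine ContinuousAt.div (by fun_prop) (by fun_prop) ?_
      simpa only [zero_add, sub_ne_zero] using mt exp_mul_eq_one_iff_orderOf_dvd.1 hl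
    simpa using hcont.tendsto

lemma tendsto_logGenFun_sub {x : ℂ} (hx : ‖x‖ < 1) {θ : ℝ}
    (hη : ∀ η : ℂ, η ^ orderOf (exp (θ * I)) = 1 → η ≠ 1 → 1 ≤ ‖η - 1‖) (C : ℝ) :
    Tendsto (fun z : ℂ × ℂ =>
        logGenFun z.2 (z.1 + θ * I) - sqrtDilog (orderOf (exp (θ * I))) z.2 ^ 2 / z.1)
      (𝓝[{z | z.1 ∈ {w : ℂ | 0 < w.re ∧ ‖w‖ ≤ C * w.re}}] (0, x)) (𝓝 (cuspConstant θ x)) := by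
  obtain ⟨ρ, hρ, hρ1⟩ := exists_between hx
  have hbase := nhdsWithin_le_nhds (s := {z | z.1 ∈ {w : ℂ | 0 < w.re ∧ ‖w‖ ≤ C * w.re}})
    (eventually_norm_snd_le (0 : ℂ) hρ)
  have hsum : Summable fun l : ℕ => ρ ^ (l + 1) * (4 * C + 4) :=
    (summable_pow_succ ((norm_nonneg x).trans hρ.le) hρ1).mul_right _
  have hne : Tendsto Prod.fst (𝓝[{z : ℂ × ℂ | z.1 ∈ {w : ℂ | 0 < w.re ∧ ‖w‖ ≤ C * w.re}}] (0, x))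
      (𝓝[≠] 0) :=
    (tendsto_fst_nhdsWithin _ 0 x).mono_right
      (nhdsWithin_mono _ fun w hw => ne_zero_of_re_pos hw.1)
  refine (tendsto_tsum_of_dominated_convergence hsum (fun l => ?_) ?_ :
    Tendsto (fun z : ℂ × ℂ => ∑' l : ℕ, z.2 ^ (l + 1) / ((l : ℂ) + 1) * regularPart θ z.1 l)
      _ (𝓝 (cuspConstant θ x))).congr' ?_
  · have hpow : Continuous fun z : ℂ × ℂ => z.2 ^ (l + 1) / ((l : ℂ) + 1) := by fun_prop
    exact (tendsto_nhdsWithin_of_tendsto_nhds (hpow.tendsto (0, x))).mul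
      ((tendsto_regularPart θ l).comp hne)
  · filter_upwards [hbase, self_mem_nhdsWithin] with z hz hsector l
    exact norm_mul_le_of_le (norm_pow_succ_div_le hz l)
      (norm_regularPart_le_of_norm_le_mul_re hη hsector.1 hsector.2 l)
  · filter_upwards [hbase, self_mem_nhdsWithin] with z hz hsector
    rw [logGenFun_add_mul_I (hz.trans_lt hρ1) hsector.1, add_sub_cancel_left]

/-! ### The integral near a dominant cusp -/

/-- The fourth root of `n`, the natural scale for the window around a saddle point. -/
noncomputable def fourthRoot (n : ℕ) : ℝ := √√n

lemma fourthRoot_sq (n : ℕ) : fourthRoot n ^ 2 = √n := Real.sq_sqrt (Real.sqrt_nonneg _)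

lemma fourthRoot_pow_four (n : ℕ) : fourthRoot n ^ 4 = n := by
  rw [show fourthRoot n ^ 4 = (fourthRoot n ^ 2) ^ 2 by ring, fourthRoot_sq,
    Real.sq_sqrt n.cast_nonneg]

lemma fourthRoot_pos {n : ℕ} (hn : n ≠ 0) : 0 < fourthRoot n :=
  Real.sqrt_pos.2 (Real.sqrt_pos.2 (by exact_mod_cast Nat.pos_of_ne_zero hn))

lemma tendsto_fourthRoot_atTop : Tendsto fourthRoot atTop atTop :=
  Real.tendsto_sqrt_atTop.comp (Real.tendsto_sqrt_atTop.comp tendsto_natCast_atTop_atTop)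

lemma tendsto_div_fourthRoot_pow (c : ℝ) {m : ℕ} (hm : m ≠ 0) :
    Tendsto (fun n => c / fourthRoot n ^ m) atTop (𝓝 0) :=
  tendsto_const_nhds.div_atTop ((tendsto_pow_atTop hm).comp tendsto_fourthRoot_atTop)

lemma continuous_logGenFun_line {y : ℂ} (hy : ‖y‖ < 1) {σ : ℝ} (hσ : 0 < σ) :
    Continuous fun θ : ℝ => logGenFun y (σ + θ * I) := by
  have hre (θ : ℝ) : ((σ : ℂ) + θ * I).re = σ := by simp
  refine continuous_tsum (u := fun l : ℕ => ‖y‖ ^ (l + 1) * (1 / σ)) (fun l => ?_)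
    ((summable_pow_succ (norm_nonneg y) hy).mul_right _) fun l θ => ?_
  · refine Continuous.mul (by fun_prop) (Continuous.div (by fun_prop) (by fun_prop) fun θ => ?_)
    refine norm_pos_iff.1 (lt_of_lt_of_le ?_ (re_le_norm_exp_sub_one _))
    rw [re_natCast_add_one_mul, hre]
    positivity
  · refine norm_mul_le_of_le (norm_pow_succ_div_le le_rfl l) ?_
    simpa only [hre] using norm_one_div_exp_sub_one_le (w := σ + θ * I) (by rwa [hre]) l

/-- The points of the vertical line through the saddle point `A / √n` of
`w ↦ A ^ 2 / w + n w`, at distance `t / n ^ (3 / 4)` from it. -/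
noncomputable def saddlePoint (A : ℂ) (n : ℕ) (t : ℝ) : ℂ :=
  (A + ((t / fourthRoot n : ℝ) : ℂ) * I) / (fourthRoot n : ℂ) ^ 2

lemma saddlePoint_re (A : ℂ) (n : ℕ) (t : ℝ) :
    (saddlePoint A n t).re = A.re / fourthRoot n ^ 2 := by
  rw [saddlePoint, ← ofReal_pow, div_ofReal_re]
  simp

lemma saddlePoint_im (A : ℂ) (n : ℕ) (t : ℝ) :
    (saddlePoint A n t).im = A.im / fourthRoot n ^ 2 + t / fourthRoot n ^ 3 := by
  rw [saddlePoint, ← ofReal_pow, div_ofReal_im, add_im, im_ofReal_mul, I_im, mul_one, add_div,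
    div_div, pow_succ' _ 2]

lemma saddlePoint_add_mul_I (A : ℂ) (n : ℕ) (t θ : ℝ) :
    saddlePoint A n t + θ * I = ((A.re / fourthRoot n ^ 2 : ℝ) : ℂ) +
      ((θ + A.im / fourthRoot n ^ 2 + t / fourthRoot n ^ 3 : ℝ) : ℂ) * I := by
  rw [← saddlePoint_re A n t, add_assoc θ, ← saddlePoint_im A n t, add_comm θ]
  nth_rw 1 [← re_add_im (saddlePoint A n t)]
  push_cast
  ring

lemma saddlePoint_num_ne_zero {A : ℂ} (hA : 0 < A.re) (s : ℝ) : A + (s : ℂ) * I ≠ 0 :=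
  ne_zero_of_re_pos (by simpa using hA)

lemma natCast_mul_saddlePoint_sub {A : ℂ} (hA : 0 < A.re) {n : ℕ} (hn : n ≠ 0) (t : ℝ) :
    n * saddlePoint A n t - 2 * A * (fourthRoot n : ℂ) ^ 2 =
      -(t : ℂ) ^ 2 / (A + ((t / fourthRoot n : ℝ) : ℂ) * I) - A ^ 2 / saddlePoint A n t := by
  have hq : (fourthRoot n : ℂ) ≠ 0 := ofReal_ne_zero.2 (fourthRoot_pos hn).ne'
  have hn4 : (n : ℂ) = (fourthRoot n : ℂ) ^ 4 := by exact_mod_cast (fourthRoot_pow_four n).symm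
  have hB := saddlePoint_num_ne_zero hA (t / fourthRoot n)
  have ht : -(t : ℂ) ^ 2 = (((t / fourthRoot n : ℝ) : ℂ) * I) ^ 2 * (fourthRoot n : ℂ) ^ 2 := by
    rw [mul_pow, I_sq]
    push_cast
    field_simp
  rw [ht, hn4, saddlePoint]
  generalize ((t / fourthRoot n : ℝ) : ℂ) * I = s at hB
  field_simp
  ring

lemma norm_saddlePoint_num_le (A : ℂ) {n : ℕ} {t : ℝ} (ht : |t| ≤ fourthRoot n) :
    ‖A + ((t / fourthRoot n : ℝ) : ℂ) * I‖ ≤ ‖A‖ + 1 := by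
  refine norm_add_le_of_le le_rfl ?_
  have hq : 0 ≤ fourthRoot n := Real.sqrt_nonneg _
  rw [norm_mul, norm_I, mul_one, norm_real, Real.norm_eq_abs, abs_div, abs_of_nonneg hq]
  exact div_le_one_of_le₀ ht hq

lemma norm_saddlePoint_le (A : ℂ) {n : ℕ} {t : ℝ} (ht : |t| ≤ fourthRoot n) :
    ‖saddlePoint A n t‖ ≤ (‖A‖ + 1) / fourthRoot n ^ 2 := by
  rw [saddlePoint, norm_div, norm_pow, norm_real, Real.norm_eq_abs, sq_abs]
  gcongr
  exact norm_saddlePoint_num_le A ht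

lemma norm_saddlePoint_le_mul_re {A : ℂ} (hA : 0 < A.re) {n : ℕ} {t : ℝ}
    (ht : |t| ≤ fourthRoot n) :
    ‖saddlePoint A n t‖ ≤ (‖A‖ + 1) / A.re * (saddlePoint A n t).re := by
  rw [saddlePoint_re, div_mul_div_cancel₀ hA.ne']
  exact norm_saddlePoint_le A ht

/-- The integrand of Cauchy's formula at the point `saddlePoint A n t` near the cusp `θ`,
divided by its size `e ^ (2 A √n)` at the saddle point. -/
noncomputable def gaussianIntegrand (θ : ℝ) (A : ℂ) (n : ℕ) (y : ℂ) (t : ℝ) : ℂ :=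
  exp (-(t : ℂ) ^ 2 / (A + ((t / fourthRoot n : ℝ) : ℂ) * I) +
    (logGenFun y (saddlePoint A n t + θ * I) - A ^ 2 / saddlePoint A n t))

lemma exp_logGenFun_saddlePoint {A : ℂ} (hA : 0 < A.re) {n : ℕ} (hn : n ≠ 0) (y : ℂ) (t θ : ℝ) :
    exp (logGenFun y (saddlePoint A n t + θ * I) + n * (saddlePoint A n t + θ * I)) =
      exp (n * θ * I) * exp (2 * A * (fourthRoot n : ℂ) ^ 2) * gaussianIntegrand θ A n y t := by
  rw [gaussianIntegrand, ← exp_add, ← exp_add]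
  congr 1
  linear_combination natCast_mul_saddlePoint_sub hA hn t

lemma continuous_gaussianIntegrand (θ : ℝ) {A : ℂ} (hA : 0 < A.re) {n : ℕ} (hn : n ≠ 0) {y : ℂ}
    (hy : ‖y‖ < 1) : Continuous (gaussianIntegrand θ A n y) := by
  have hσ : 0 < A.re / fourthRoot n ^ 2 := div_pos hA (pow_pos (fourthRoot_pos hn) 2)
  have hline : Continuous fun t : ℝ => logGenFun y (saddlePoint A n t + θ * I) := by
    simp only [saddlePoint_add_mul_I]
    exact (continuous_logGenFun_line hy hσ).comp
      (by fun_prop : Continuous fun t => θ + A.im / fourthRoot n ^ 2 + t / fourthRoot n ^ 3)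
  have hsaddle : Continuous (saddlePoint A n) := by
    unfold saddlePoint
    fun_prop
  refine continuous_exp.comp (((by fun_prop : Continuous fun t : ℝ => -(t : ℂ) ^ 2).div
    (by fun_prop) fun t => saddlePoint_num_ne_zero hA _).add
    (hline.sub (continuous_const.div hsaddle fun t => ?_)))
  exact ne_zero_of_re_pos (by rwa [saddlePoint_re])

lemma sqrtDilog_re_pos {k : ℕ} {x : ℂ} (h : 0 < fk k x) : 0 < (sqrtDilog k x).re :=
  (sqrtDilog_re k x).symm ▸ h

lemma tendsto_sqrtDilog_snd {k : ℕ} (hk : k ≠ 0) {x : ℂ} (hx : ‖x‖ < 1) (h : 0 < fk k x) :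
    Tendsto (fun z : ℕ × ℂ => sqrtDilog k z.2) (atTop ×ˢ 𝓝 x) (𝓝 (sqrtDilog k x)) :=
  (continuousAt_sqrtDilog hk hx h).tendsto.comp tendsto_snd

lemma eventually_half_lt_sqrtDilog_re {k : ℕ} (hk : k ≠ 0) {x : ℂ} (hx : ‖x‖ < 1)
    (h : 0 < fk k x) : ∀ᶠ z : ℕ × ℂ in atTop ×ˢ 𝓝 x, fk k x / 2 < (sqrtDilog k z.2).re :=
  ((continuous_re.tendsto _).comp (tendsto_sqrtDilog_snd hk hx h)).eventually_const_lt
    (by rw [sqrtDilog_re]; exact half_lt_self h)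

lemma eventually_norm_sqrtDilog_lt {k : ℕ} (hk : k ≠ 0) {x : ℂ} (hx : ‖x‖ < 1)
    (h : 0 < fk k x) :
    ∀ᶠ z : ℕ × ℂ in atTop ×ˢ 𝓝 x, ‖sqrtDilog k z.2‖ < ‖sqrtDilog k x‖ + 1 :=
  (tendsto_sqrtDilog_snd hk hx h).norm.eventually_lt_const (lt_add_one _)

lemma eventually_forall_saddlePoint {k : ℕ} (hk : k ≠ 0) {x : ℂ} (hx : ‖x‖ < 1)
    (h : 0 < fk k x) {P : ℂ × ℂ → Prop}
    (hP : ∀ C : ℝ, ∀ᶠ z in 𝓝[{z | z.1 ∈ {w : ℂ | 0 < w.re ∧ ‖w‖ ≤ C * w.re}}] (0, x), P z) :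
    ∀ᶠ z : ℕ × ℂ in atTop ×ˢ 𝓝 x, ∀ t : ℝ, |t| ≤ fourthRoot z.1 →
      P (saddlePoint (sqrtDilog k z.2) z.1 t, z.2) := by
  set B := ‖sqrtDilog k x‖ + 2
  obtain ⟨δ, hδ, hball⟩ := Metric.eventually_nhds_iff.1
    (eventually_nhdsWithin_iff.1 (hP (B / (fk k x / 2))))
  filter_upwards [eventually_half_lt_sqrtDilog_re hk hx h, eventually_norm_sqrtDilog_lt hk hx h,
    tendsto_fst.eventually (eventually_ne_atTop 0),
    tendsto_snd.eventually (Metric.ball_mem_nhds x hδ),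
    tendsto_fst.eventually ((tendsto_div_fourthRoot_pow B two_ne_zero).eventually_lt_const hδ)]
    with z hre hnorm hn hdist hsmall t ht
  have hpos : 0 < (sqrtDilog k z.2).re := (half_pos h).trans hre
  have hB : ‖sqrtDilog k z.2‖ + 1 ≤ B := by linarith
  have hw : 0 < (saddlePoint (sqrtDilog k z.2) z.1 t).re := by
    rw [saddlePoint_re]
    exact div_pos hpos (pow_pos (fourthRoot_pos hn) 2)
  refine hball ?_ ⟨hw, (norm_saddlePoint_le_mul_re hpos ht).trans ?_⟩
  · rw [Prod.dist_eq, max_lt_iff, dist_zero_right]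
    refine ⟨((norm_saddlePoint_le _ ht).trans ?_).trans_lt hsmall, hdist⟩
    gcongr
  · gcongr

lemma eventually_norm_logGenFun_saddlePoint_sub_lt {k : ℕ} (hk : k ≠ 0) {x : ℂ} (hx : ‖x‖ < 1)
    (h : 0 < fk k x) {θ : ℝ} (hθ : orderOf (exp (θ * I)) = k)
    (hη : ∀ η : ℂ, η ^ k = 1 → η ≠ 1 → 1 ≤ ‖η - 1‖) {ε : ℝ} (hε : 0 < ε) :
    ∀ᶠ z : ℕ × ℂ in atTop ×ˢ 𝓝 x, ∀ t : ℝ, |t| ≤ fourthRoot z.1 →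
      ‖logGenFun z.2 (saddlePoint (sqrtDilog k z.2) z.1 t + θ * I) -
        sqrtDilog k z.2 ^ 2 / saddlePoint (sqrtDilog k z.2) z.1 t - cuspConstant θ x‖ < ε := by
  subst hθ
  have hlim (C : ℝ) := Metric.tendsto_nhds.1 (tendsto_logGenFun_sub hx hη C) ε hε
  simpa only [dist_eq_norm] using eventually_forall_saddlePoint hk hx h hlim

lemma re_neg_sq_div_le {w : ℂ} {a B : ℝ} (ha : 0 < a) (hre : a ≤ w.re) (hB : ‖w‖ ≤ B) (t : ℝ) :
    (-(t : ℂ) ^ 2 / w).re ≤ -(a / B ^ 2) * t ^ 2 := by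
  have hw : 0 < ‖w‖ := norm_pos_iff.2 (ne_zero_of_re_pos (ha.trans_le hre))
  have hinv : a / B ^ 2 ≤ w⁻¹.re := by
    rw [inv_re, normSq_eq_norm_sq]
    gcongr
    exact ha.le.trans hre
  have hfactor : -(t : ℂ) ^ 2 / w = ((-t ^ 2 : ℝ) : ℂ) * w⁻¹ := by
    push_cast
    ring
  rw [hfactor, re_ofReal_mul]
  linarith [mul_le_mul_of_nonneg_left hinv (sq_nonneg t)]

lemma eventually_norm_gaussianIntegrand_le {k : ℕ} (hk : k ≠ 0) {x : ℂ} (hx : ‖x‖ < 1)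
    (h : 0 < fk k x) {θ : ℝ} (hθ : orderOf (exp (θ * I)) = k)
    (hη : ∀ η : ℂ, η ^ k = 1 → η ≠ 1 → 1 ≤ ‖η - 1‖) :
    ∀ᶠ z : ℕ × ℂ in atTop ×ˢ 𝓝 x, ∀ t : ℝ, |t| ≤ fourthRoot z.1 →
      ‖gaussianIntegrand θ (sqrtDilog k z.2) z.1 z.2 t‖ ≤
        Real.exp ((cuspConstant θ x).re + 1) *
          Real.exp (-(fk k x / 2 / (‖sqrtDilog k x‖ + 2) ^ 2) * t ^ 2) := by
  filter_upwards [eventually_half_lt_sqrtDilog_re hk hx h, eventually_norm_sqrtDilog_lt hk hx h,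
    eventually_norm_logGenFun_saddlePoint_sub_lt hk hx h hθ hη one_pos] with z hre hnorm hcusp t ht
  have hregular := (abs_re_le_norm _).trans (hcusp t ht).le
  rw [sub_re, abs_le] at hregular
  have hgauss := re_neg_sq_div_le (w := sqrtDilog k z.2 + ((t / fourthRoot z.1 : ℝ) : ℂ) * I)
    (B := ‖sqrtDilog k x‖ + 2) (half_pos h) (by simpa using hre.le)
    ((norm_saddlePoint_num_le _ ht).trans (by linarith)) t
  rw [gaussianIntegrand, norm_exp, ← Real.exp_add, add_re, Real.exp_le_exp]
  linarith [hregular.2]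

lemma tendsto_gaussianIntegrand {k : ℕ} (hk : k ≠ 0) {x : ℂ} (hx : ‖x‖ < 1)
    (h : 0 < fk k x) {θ : ℝ} (hθ : orderOf (exp (θ * I)) = k)
    (hη : ∀ η : ℂ, η ^ k = 1 → η ≠ 1 → 1 ≤ ‖η - 1‖) (t : ℝ) :
    Tendsto (fun z : ℕ × ℂ => gaussianIntegrand θ (sqrtDilog k z.2) z.1 z.2 t) (atTop ×ˢ 𝓝 x)
      (𝓝 (exp (-(t : ℂ) ^ 2 / sqrtDilog k x + cuspConstant θ x))) := by
  have hq : Tendsto (fun z : ℕ × ℂ => fourthRoot z.1) (atTop ×ˢ 𝓝 x) atTop :=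
    tendsto_fourthRoot_atTop.comp tendsto_fst
  have hnum : Tendsto (fun z : ℕ × ℂ => sqrtDilog k z.2 + ((t / fourthRoot z.1 : ℝ) : ℂ) * I)
      (atTop ×ˢ 𝓝 x) (𝓝 (sqrtDilog k x)) := by
    have hshift : Tendsto (fun z : ℕ × ℂ => ((t / fourthRoot z.1 : ℝ) : ℂ) * I)
        (atTop ×ˢ 𝓝 x) (𝓝 0) := by
      simpa using ((continuous_ofReal.tendsto 0).comp
        (tendsto_const_nhds.div_atTop hq : Tendsto (fun z : ℕ × ℂ => t / fourthRoot z.1) _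
          (𝓝 0))).mul_const I
    simpa using (tendsto_sqrtDilog_snd hk hx h).add hshift
  refine (continuous_exp.tendsto _).comp
    ((tendsto_const_nhds.div hnum (ne_zero_of_re_pos (sqrtDilog_re_pos h))).add ?_)
  refine Metric.tendsto_nhds.2 fun ε hε => ?_
  filter_upwards [eventually_norm_logGenFun_saddlePoint_sub_lt hk hx h hθ hη hε,
    hq.eventually_ge_atTop |t|] with z hz ht
  rw [dist_eq_norm]
  exact hz t ht

lemma integral_exp_neg_sq_div_add {A : ℂ} (hA : 0 < A.re) (c : ℂ) :
    ∫ t : ℝ, exp (-(t : ℂ) ^ 2 / A + c) = exp c * (Real.pi / (1 / A)) ^ (1 / 2 : ℂ) := by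
  have hre : 0 < (1 / A).re := by
    rw [one_div, inv_re]
    exact div_pos hA (normSq_pos.2 (ne_zero_of_re_pos hA))
  rw [← integral_gaussian_complex hre, ← MeasureTheory.integral_const_mul]
  refine MeasureTheory.integral_congr_ae (.of_forall fun t => ?_)
  simp only [← exp_add]
  ring_nf

theorem tendsto_integral_gaussianIntegrand {k : ℕ} (hk : k ≠ 0) {x : ℂ} (hx : ‖x‖ < 1)
    (h : 0 < fk k x) {θ : ℝ} (hθ : orderOf (exp (θ * I)) = k)
    (hη : ∀ η : ℂ, η ^ k = 1 → η ≠ 1 → 1 ≤ ‖η - 1‖) :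
    Tendsto (fun z : ℕ × ℂ => ∫ t in (-fourthRoot z.1)..(fourthRoot z.1),
        gaussianIntegrand θ (sqrtDilog k z.2) z.1 z.2 t) (atTop ×ˢ 𝓝 x)
      (𝓝 (exp (cuspConstant θ x) * (Real.pi / (1 / sqrtDilog k x)) ^ (1 / 2 : ℂ))) := by
  have hn : ∀ᶠ z : ℕ × ℂ in atTop ×ˢ 𝓝 x, z.1 ≠ 0 :=
    tendsto_fst.eventually (eventually_ne_atTop 0)
  rw [← integral_exp_neg_sq_div_add (sqrtDilog_re_pos h)]
  have hdominated : Tendsto (fun z : ℕ × ℂ => ∫ t,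
      (Set.Ioc (-fourthRoot z.1) (fourthRoot z.1)).indicator
        (gaussianIntegrand θ (sqrtDilog k z.2) z.1 z.2) t) (atTop ×ˢ 𝓝 x)
      (𝓝 (∫ t : ℝ, exp (-(t : ℂ) ^ 2 / sqrtDilog k x + cuspConstant θ x))) := by
    refine MeasureTheory.tendsto_integral_filter_of_dominated_convergence _ ?_ ?_
      ((integrable_exp_neg_mul_sq (show 0 < fk k x / 2 / (‖sqrtDilog k x‖ + 2) ^ 2
        by positivity)).const_mul (Real.exp ((cuspConstant θ x).re + 1))) (.of_forall fun t => ?_)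
    · filter_upwards [eventually_half_lt_sqrtDilog_re hk hx h, hn,
        tendsto_snd.eventually (eventually_norm_lt_one hx)] with z hre hn hz
      exact (continuous_gaussianIntegrand θ ((half_pos h).trans hre) hn
        hz).aestronglyMeasurable.indicator measurableSet_Ioc
    · filter_upwards [eventually_norm_gaussianIntegrand_le hk hx h hθ hη] with z hz
      refine .of_forall fun t => ?_
      rw [norm_indicator_eq_indicator_norm]
      exact Set.indicator_le' (fun t ht => hz t (abs_le.2 ⟨ht.1.le, ht.2⟩))
        (fun _ _ => by positivity) t
    · refine (tendsto_gaussianIntegrand hk hx h hθ hη t).congr' ?_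
      filter_upwards [(tendsto_fourthRoot_atTop.comp tendsto_fst).eventually_gt_atTop |t|]
        with z (ht : |t| < fourthRoot z.1)
      have hmem : t ∈ Set.Ioc (-fourthRoot z.1) (fourthRoot z.1) :=
        ⟨(abs_lt.1 ht).1, (abs_lt.1 ht).2.le⟩
      exact (Set.indicator_of_mem hmem _).symm
  refine hdominated.congr' ?_
  filter_upwards [hn] with z hn
  rw [intervalIntegral.integral_of_le (by linarith [fourthRoot_pos hn]),
    MeasureTheory.integral_indicator measurableSet_Ioc]

/-! ### Dominant indices and cusps -/

/-- The index `k` is dominant at `x` if `fk k x` strictly exceeds every other `fk j x`. -/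
def IsDominantIndex (k : ℕ) (x : ℂ) : Prop := ∀ j, j ≠ k → fk j x < fk k x

namespace IsDominantIndex

variable {k : ℕ} {x : ℂ}

lemma fk_pos (h : IsDominantIndex k x) : 0 < fk k x :=
  (fk_nonneg (k + 1) x).trans_lt (h _ k.succ_ne_self)

lemma ne_zero (h : IsDominantIndex k x) : k ≠ 0 := by
  rintro rfl
  exact h.fk_pos.ne' (fk_index_zero x)

lemma le_three (h : IsDominantIndex k x) (hx : ‖x‖ < 1) : k ≤ 3 := by
  obtain ⟨j, -, hj, hmax⟩ := exists_fk_eq_maxGrowth x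
  by_contra! hk
  exact (h j (by omega)).not_ge (hmax ▸ fk_le_maxGrowth hx k)

end IsDominantIndex

/-- The arguments in `[0, 2π)` of the primitive `k`-th roots of unity. -/
noncomputable def cuspAngles (k : ℕ) : Finset ℝ :=
  ((Finset.range k).filter fun i => i.Coprime k).image fun i : ℕ => 2 * Real.pi * i / k

lemma mem_cuspAngles {k : ℕ} {θ : ℝ} :
    θ ∈ cuspAngles k ↔ ∃ i < k, i.Coprime k ∧ 2 * Real.pi * i / k = θ := by
  simp [cuspAngles, and_assoc]

lemma orderOf_exp_of_mem_cuspAngles {k : ℕ} {θ : ℝ} (hθ : θ ∈ cuspAngles k) :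
    orderOf (exp (θ * I)) = k := by
  obtain ⟨i, hik, hi, rfl⟩ := mem_cuspAngles.1 hθ
  have hexp : ((2 * Real.pi * i / k : ℝ) : ℂ) * I = 2 * Real.pi * I * (i / k) := by
    push_cast
    ring
  rw [hexp]
  exact (isPrimitiveRoot_exp_of_coprime i k (by omega) hi).eq_orderOf.symm

lemma mul_div_lt_two_pi_sub_one {i k : ℕ} (hik : i < k) (hk : k ≤ 6) :
    2 * Real.pi * i / k < 2 * Real.pi - 1 := by
  have hk0 : (0 : ℝ) < k := by exact_mod_cast i.zero_le.trans_lt hik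
  have hik' : (i : ℝ) + 1 ≤ k := by exact_mod_cast hik
  have hk6 : (k : ℝ) ≤ 6 := by exact_mod_cast hk
  rw [div_lt_iff₀ hk0]
  nlinarith [Real.pi_gt_three]

lemma mem_Ioo_of_mem_cuspAngles {k : ℕ} (hk : k ≤ 6) {θ : ℝ} (hθ : θ ∈ cuspAngles k) :
    θ ∈ Set.Ioo (-1 : ℝ) (2 * Real.pi - 1) := by
  obtain ⟨i, hik, -, rfl⟩ := mem_cuspAngles.1 hθ
  exact ⟨neg_one_lt_zero.trans_le (by positivity), mul_div_lt_two_pi_sub_one hik hk⟩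

lemma mem_cuspAngles_of_orderOf_eq {k : ℕ} (hk0 : k ≠ 0) (hk : k ≤ 6) {θ : ℝ}
    (hθ : θ ∈ Set.Icc (-1 : ℝ) (2 * Real.pi - 1)) (ho : orderOf (exp (θ * I)) = k) :
    θ ∈ cuspAngles k := by
  obtain ⟨i, hik, hi, hexp⟩ :=
    (isPrimitiveRoot_iff _ k hk0).1 (ho ▸ IsPrimitiveRoot.orderOf (exp (θ * I)))
  obtain ⟨m, hm⟩ := exp_eq_exp_iff_exists_int.1 hexp
  have hshift : 2 * Real.pi * i / k = θ + m * (2 * Real.pi) := by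
    have : ((2 * Real.pi * i / k : ℝ) : ℂ) * I = ((θ + m * (2 * Real.pi) : ℝ) : ℂ) * I := by
      push_cast
      linear_combination hm
    exact_mod_cast mul_right_cancel₀ I_ne_zero this
  have hangle : 0 ≤ 2 * Real.pi * i / k := by positivity
  have hlt := mul_div_lt_two_pi_sub_one hik hk
  have hm_lt : (m : ℝ) < 1 := by nlinarith [hθ.1, Real.pi_pos]
  have hlt_m : (-1 : ℝ) < m := by nlinarith [hθ.2, Real.pi_pos]
  have hm0 : m = 0 := by
    have : m < 1 := by exact_mod_cast hm_lt
    have : -1 < m := by exact_mod_cast hlt_m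
    omega
  exact mem_cuspAngles.2 ⟨i, hik, hi, by simpa [hm0] using hshift⟩

lemma one_le_norm_sub_one_of_pow_three_eq_one {η : ℂ} (h : η ^ 3 = 1) (h1 : η ≠ 1) :
    1 ≤ ‖η - 1‖ := by
  have hcyclotomic : η ^ 2 + η + 1 = 0 :=
    (mul_eq_zero.1 (show (η - 1) * (η ^ 2 + η + 1) = 0 by linear_combination h)).resolve_left
      (sub_ne_zero.2 h1)
  have hprod : ‖η - 1‖ * ‖2 + η‖ = 3 := by
    rw [← norm_mul, show (η - 1) * (2 + η) = -3 by linear_combination hcyclotomic]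
    norm_num
  have hle : ‖2 + η‖ ≤ 3 := by
    refine (norm_add_le _ _).trans ?_
    rw [norm_eq_one_of_pow_eq_one h three_ne_zero]
    norm_num
  nlinarith [norm_nonneg (η - 1)]

lemma one_le_norm_sub_one_of_pow_eq_one {k : ℕ} (hk0 : k ≠ 0) (hk : k ≤ 3) (η : ℂ)
    (h : η ^ k = 1) (h1 : η ≠ 1) : 1 ≤ ‖η - 1‖ := by
  interval_cases k
  · exact absurd rfl hk0
  · exact absurd ((pow_one η).symm.trans h) h1
  · rw [(sq_eq_one_iff.1 h).resolve_left h1]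
    norm_num
  · exact one_le_norm_sub_one_of_pow_three_eq_one h h1

/-! ### The integral away from the dominant cusps -/

lemma re_sq_mul_re_div_le_sub (A : ℂ) {w : ℂ} (hw : 0 < w.re)
    (h : w.re ≤ |A.re * w.im - A.im * w.re|) :
    (A ^ 2 * (w.re / w)).re ≤ A.re ^ 2 - A.re ^ 2 / (A.re ^ 2 + (1 + |A.im|) ^ 2) := by
  have hw0 := ne_zero_of_re_pos hw
  have hgap := re_sq_sub_re_sq_mul_re_div A hw0
  set d := A.re * w.im - A.im * w.re with hd
  have hre : w.re ^ 2 ≤ d ^ 2 := sq_le_sq' (by linarith [abs_nonneg d]) h |>.trans_eq (sq_abs d)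
  have him : (A.re * w.im) ^ 2 ≤ d ^ 2 * (1 + |A.im|) ^ 2 := by
    rw [← sq_abs d, ← sq_abs (A.re * w.im), ← mul_pow]
    gcongr
    calc |A.re * w.im| = |d + A.im * w.re| := by rw [hd, sub_add_cancel]
      _ ≤ |d| + |A.im| * w.re := (abs_add_le _ _).trans_eq (by rw [abs_mul, abs_of_pos hw])
      _ ≤ |d| * (1 + |A.im|) := by nlinarith [abs_nonneg A.im]
  have hdeficit : A.re ^ 2 / (A.re ^ 2 + (1 + |A.im|) ^ 2) ≤ d ^ 2 / normSq w := by
    rw [div_le_div_iff₀ (by positivity) (normSq_pos.2 hw0), normSq_apply]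
    nlinarith [sq_nonneg A.re]
  linarith

lemma tendsto_sqrtDilog_snd_fst {k : ℕ} (hk : k ≠ 0) {x : ℂ} (hx : ‖x‖ < 1) (h : 0 < fk k x)
    (θ : ℝ) : Tendsto (fun z : (ℝ × ℂ) × ℝ => sqrtDilog k z.1.2) (𝓝 ((0, x), θ))
      (𝓝 (sqrtDilog k x)) :=
  (continuousAt_sqrtDilog hk hx h).tendsto.comp
    (Continuous.tendsto (by fun_prop : Continuous fun z : (ℝ × ℂ) × ℝ => z.1.2) ((0, x), θ))

lemma exists_mul_logGenFun_le_of_orderOf_eq {k : ℕ} (hk : k ≠ 0) {x : ℂ} (hx : ‖x‖ < 1)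
    (h : 0 < fk k x) {θ : ℝ} (hθ : orderOf (exp (θ * I)) = k) :
    ∃ δ > 0, ∀ᶠ z : (ℝ × ℂ) × ℝ in 𝓝 ((0, x), θ), 0 < z.1.1 →
      z.1.1 ≤ |(sqrtDilog k z.1.2).re * (z.2 - θ) - (sqrtDilog k z.1.2).im * z.1.1| →
      z.1.1 * (logGenFun z.1.2 (z.1.1 + z.2 * I)).re ≤ (sqrtDilog k z.1.2).re ^ 2 - δ := by
  subst hθ
  set k := orderOf (exp (θ * I))
  set δ := fk k x ^ 2 / (fk k x ^ 2 + (1 + |(sqrtDilog k x).im|) ^ 2)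
  have hδ : 0 < δ := by positivity
  have hA := tendsto_sqrtDilog_snd_fst hk hx h θ
  have hre := (continuous_re.tendsto _).comp hA
  rw [sqrtDilog_re] at hre
  have hdeficit := (hre.pow 2).div
    ((hre.pow 2).add ((((continuous_im.tendsto _).comp hA).abs.const_add 1).pow 2))
    (by positivity : fk k x ^ 2 + (1 + |(sqrtDilog k x).im|) ^ 2 ≠ 0)
  have hlog := (continuous_re.tendsto 0).comp (tendsto_re_mul_logGenFun hx θ)
  rw [zero_re] at hlog
  refine ⟨δ / 4, by positivity, ?_⟩
  filter_upwards [hdeficit.eventually_const_lt (half_lt_self hδ),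
    (tendsto_add_mul_I_sub x θ).eventually (eventually_nhdsWithin_iff.1
      (hlog.eventually_lt_const (show 0 < δ / 4 by positivity)))] with z hz hlogz hpos hfar
  have hwre : ((z.1.1 : ℂ) + ((z.2 - θ : ℝ) : ℂ) * I).re = z.1.1 := by simp
  have hwim : ((z.1.1 : ℂ) + ((z.2 - θ : ℝ) : ℂ) * I).im = z.2 - θ := by simp
  have hshift : (z.1.1 : ℂ) + ((z.2 - θ : ℝ) : ℂ) * I + θ * I = z.1.1 + z.2 * I := by
    push_cast
    ring
  have hsaddle := re_sq_mul_re_div_le_sub (sqrtDilog k z.1.2)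
    (w := z.1.1 + ((z.2 - θ : ℝ) : ℂ) * I) (by rwa [hwre]) (by rwa [hwre, hwim])
  have hclose := hlogz (hwre.symm ▸ hpos)
  simp only [Function.comp_apply, sub_re, re_ofReal_mul, hshift] at hclose
  simp only [Pi.div_apply, Function.comp_apply] at hz
  rw [hwre] at hclose hsaddle
  linarith

lemma exists_mul_logGenFun_le_of_orderOf_ne {k : ℕ} {x : ℂ} (hx : ‖x‖ < 1)
    (h : IsDominantIndex k x) {θ : ℝ} (hθ : orderOf (exp (θ * I)) ≠ k) :
    ∃ δ > 0, ∀ᶠ z : (ℝ × ℂ) × ℝ in 𝓝 ((0, x), θ), 0 < z.1.1 →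
      z.1.1 * (logGenFun z.1.2 (z.1.1 + z.2 * I)).re ≤ (sqrtDilog k z.1.2).re ^ 2 - δ := by
  have hre := (continuous_re.tendsto _).comp (tendsto_sqrtDilog_snd_fst h.ne_zero hx h.fk_pos θ)
  rw [sqrtDilog_re] at hre
  obtain ⟨δ, hδ⟩ : ∃ δ, δ = fk k x ^ 2 - fk (orderOf (exp (θ * I))) x ^ 2 := ⟨_, rfl⟩
  have hδ0 : 0 < δ := by
    have := pow_lt_pow_left₀ (h _ hθ) (fk_nonneg _ x) two_ne_zero
    linarith
  refine ⟨δ / 2, half_pos hδ0, ?_⟩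
  filter_upwards [eventually_mul_logGenFun_line_le hx θ (show 0 < δ / 4 by positivity),
    (hre.pow 2).eventually_const_lt (show fk k x ^ 2 - δ / 4 < fk k x ^ 2 by linarith)]
    with z hz hfk hpos
  have := hz hpos
  simp only [Function.comp_apply] at hfk
  linarith

lemma exists_forall_mul_logGenFun_le {k : ℕ} {x : ℂ} (hx : ‖x‖ < 1) (h : IsDominantIndex k x) :
    ∃ η > 0, ∀ᶠ z : ℝ × ℂ in 𝓝 (0, x), ∀ θ ∈ Set.Icc (-1 : ℝ) (2 * Real.pi - 1), 0 < z.1 →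
      (∀ α ∈ cuspAngles k,
        z.1 ≤ |(sqrtDilog k z.2).re * (θ - α) - (sqrtDilog k z.2).im * z.1|) →
      z.1 * (logGenFun z.2 (z.1 + θ * I)).re ≤ (sqrtDilog k z.2).re ^ 2 - η := by
  have hcompact : ∀ᶠ p : (ℝ × ℂ) × ℝ in 𝓝 ((0, x), 0),
      ∀ θ ∈ Set.Icc (-1 : ℝ) (2 * Real.pi - 1), 0 < p.1.1 →
      (∀ α ∈ cuspAngles k,
        p.1.1 ≤ |(sqrtDilog k p.1.2).re * (θ - α) - (sqrtDilog k p.1.2).im * p.1.1|) →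
      p.1.1 * (logGenFun p.1.2 (p.1.1 + θ * I)).re ≤ (sqrtDilog k p.1.2).re ^ 2 - p.2 := by
    refine isCompact_Icc.eventually_forall_of_forall_eventually
      (P := fun (p : (ℝ × ℂ) × ℝ) (θ : ℝ) => 0 < p.1.1 →
        (∀ α ∈ cuspAngles k,
          p.1.1 ≤ |(sqrtDilog k p.1.2).re * (θ - α) - (sqrtDilog k p.1.2).im * p.1.1|) →
        p.1.1 * (logGenFun p.1.2 (p.1.1 + θ * I)).re ≤ (sqrtDilog k p.1.2).re ^ 2 - p.2)
      fun θ hθ => ?_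
    have hpoint : Tendsto (fun p : ((ℝ × ℂ) × ℝ) × ℝ => (p.1.1, p.2)) (𝓝 (((0, x), 0), θ))
        (𝓝 ((0, x), θ)) := Continuous.tendsto (by fun_prop) (((0, x), 0), θ)
    have hmargin : Tendsto (fun p : ((ℝ × ℂ) × ℝ) × ℝ => p.1.2) (𝓝 (((0, x), 0), θ)) (𝓝 0) :=
      Continuous.tendsto (by fun_prop) (((0, x), 0), θ)
    by_cases ho : orderOf (exp (θ * I)) = k
    · obtain ⟨δ, hδ, hlocal⟩ := exists_mul_logGenFun_le_of_orderOf_eq h.ne_zero hx h.fk_pos ho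
      have hcusp := mem_cuspAngles_of_orderOf_eq h.ne_zero
        ((h.le_three hx).trans (by norm_num)) hθ ho
      filter_upwards [hpoint.eventually hlocal, hmargin.eventually_lt_const hδ]
        with p hp hη hpos hfar
      linarith [hp hpos (hfar θ hcusp)]
    · obtain ⟨δ, hδ, hlocal⟩ := exists_mul_logGenFun_le_of_orderOf_ne hx h ho
      filter_upwards [hpoint.eventually hlocal, hmargin.eventually_lt_const hδ] with p hp hη hpos _
      linarith [hp hpos]
  rw [nhds_prod_eq] at hcompact
  obtain ⟨_, hz, _, hmargin, hbound⟩ := eventually_prod_iff.1 hcompact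
  obtain ⟨η, hη, hη0⟩ := ((hmargin.filter_mono nhdsWithin_le_nhds).and
    (self_mem_nhdsWithin (a := (0 : ℝ)) (s := Set.Ioi 0))).exists
  exact ⟨η, hη0, hz.mono fun z hz => hbound hz hη⟩

/-- The integrand of Cauchy's formula on the vertical line through the saddle point `A / √n`, as a
function of the imaginary part. -/
noncomputable def contourIntegrand (A : ℂ) (n : ℕ) (y : ℂ) (θ : ℝ) : ℂ :=
  exp (logGenFun y ((A.re / fourthRoot n ^ 2 : ℝ) + θ * I) +
    n * ((A.re / fourthRoot n ^ 2 : ℝ) + θ * I))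

/-- The window of angles, centred at the saddle point near the cusp `α`, that carries the main
contribution of the cusp. -/
def saddleWindow (A : ℂ) (n : ℕ) (α : ℝ) : Set ℝ :=
  Set.Ioc (α + A.im / fourthRoot n ^ 2 - 1 / fourthRoot n ^ 2)
    (α + A.im / fourthRoot n ^ 2 + 1 / fourthRoot n ^ 2)

lemma le_abs_of_notMem_saddleWindow {A : ℂ} (hA : 0 ≤ A.re) {n : ℕ} {α θ : ℝ}
    (hθ : θ ∉ saddleWindow A n α) :
    A.re / fourthRoot n ^ 2 ≤ |A.re * (θ - α) - A.im * (A.re / fourthRoot n ^ 2)| := by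
  have hfactor : A.re * (θ - α) - A.im * (A.re / fourthRoot n ^ 2) =
      A.re * (θ - (α + A.im / fourthRoot n ^ 2)) := by ring
  rw [hfactor, abs_mul, abs_of_nonneg hA, div_eq_mul_one_div]
  gcongr
  simp only [saddleWindow, Set.mem_Ioc, not_and_or, not_lt, not_le] at hθ
  rw [le_abs]
  rcases hθ with hθ | hθ
  · right
    linarith
  · left
    linarith

lemma norm_contourIntegrand {A : ℂ} {n : ℕ} (hn : n ≠ 0) (y : ℂ) (θ : ℝ) :
    ‖contourIntegrand A n y θ‖ =
      Real.exp ((logGenFun y ((A.re / fourthRoot n ^ 2 : ℝ) + θ * I)).re +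
        fourthRoot n ^ 2 * A.re) := by
  have hq := fourthRoot_pos hn
  have hre : ((n : ℂ) * ((A.re / fourthRoot n ^ 2 : ℝ) + θ * I)).re = fourthRoot n ^ 2 * A.re := by
    rw [← ofReal_natCast, re_ofReal_mul, ← fourthRoot_pow_four]
    simp only [add_re, ofReal_re, re_ofReal_mul, I_re, mul_zero, add_zero]
    field_simp
  rw [contourIntegrand, norm_exp, add_re, hre]

lemma exists_norm_contourIntegrand_le {k : ℕ} {x : ℂ} (hx : ‖x‖ < 1)
    (h : IsDominantIndex k x) :
    ∃ η > 0, ∀ᶠ z : ℕ × ℂ in atTop ×ˢ 𝓝 x, ∀ θ ∈ Set.Icc (-1 : ℝ) (2 * Real.pi - 1),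
      (∀ α ∈ cuspAngles k, θ ∉ saddleWindow (sqrtDilog k z.2) z.1 α) →
      ‖contourIntegrand (sqrtDilog k z.2) z.1 z.2 θ‖ ≤
        Real.exp (fourthRoot z.1 ^ 2 * (2 * (sqrtDilog k z.2).re - η)) := by
  obtain ⟨η, hη, hlocal⟩ := exists_forall_mul_logGenFun_le hx h
  have ha := h.fk_pos
  have hre := (continuous_re.tendsto _).comp (tendsto_sqrtDilog_snd h.ne_zero hx ha)
  rw [sqrtDilog_re] at hre
  have hσ : Tendsto (fun z : ℕ × ℂ => ((sqrtDilog k z.2).re / fourthRoot z.1 ^ 2, z.2))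
      (atTop ×ˢ 𝓝 x) (𝓝 (0, x)) := by
    rw [nhds_prod_eq]
    exact (hre.div_atTop ((tendsto_pow_atTop two_ne_zero).comp
      (tendsto_fourthRoot_atTop.comp tendsto_fst))).prodMk tendsto_snd
  refine ⟨η / (2 * fk k x), by positivity, ?_⟩
  filter_upwards [hσ.eventually hlocal, hre.eventually_const_lt ha,
    hre.eventually_lt_const (show fk k x < 2 * fk k x by linarith),
    tendsto_fst.eventually (eventually_ne_atTop 0)] with z hz hpos hlt hn θ hθ hfar
  simp only [Function.comp_apply] at hpos hlt
  have hq : 0 < fourthRoot z.1 ^ 2 := pow_pos (fourthRoot_pos hn) 2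
  have hbound := hz θ hθ (div_pos hpos hq) fun α hα =>
    le_abs_of_notMem_saddleWindow hpos.le (hfar α hα)
  rw [norm_contourIntegrand hn, Real.exp_le_exp]
  set a := (sqrtDilog k z.2).re
  set S := (logGenFun z.2 ((a / fourthRoot z.1 ^ 2 : ℝ) + θ * I)).re
  have hS : S ≤ fourthRoot z.1 ^ 2 * ((a ^ 2 - η) / a) := by
    rw [div_mul_eq_mul_div, div_le_iff₀ hq] at hbound
    rw [← mul_div_assoc, le_div_iff₀ hpos]
    linarith
  have hmargin : (a ^ 2 - η) / a ≤ a - η / (2 * fk k x) := by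
    rw [sub_div, sq, mul_self_div_self]
    gcongr
  nlinarith

/-! ### The circle method asymptotics -/

lemma continuous_contourIntegrand {A : ℂ} (hA : 0 < A.re) {n : ℕ} (hn : n ≠ 0) {y : ℂ}
    (hy : ‖y‖ < 1) : Continuous (contourIntegrand A n y) := by
  have hline := continuous_logGenFun_line hy (div_pos hA (pow_pos (fourthRoot_pos hn) 2))
  unfold contourIntegrand
  fun_prop

/-- The factor that brings the contribution of one cusp to order one. -/
noncomputable def saddleNormalizer (A : ℂ) (n : ℕ) : ℂ :=
  (fourthRoot n : ℂ) ^ 3 * exp (-(2 * A * (fourthRoot n : ℂ) ^ 2))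

lemma norm_saddleNormalizer (A : ℂ) (n : ℕ) :
    ‖saddleNormalizer A n‖ = fourthRoot n ^ 3 * Real.exp (-(fourthRoot n ^ 2 * (2 * A.re))) := by
  have hre : (2 * A * (fourthRoot n : ℂ) ^ 2).re = fourthRoot n ^ 2 * (2 * A.re) := by
    rw [← ofReal_pow, re_mul_ofReal]
    simp [mul_comm]
  have hq : 0 ≤ fourthRoot n := Real.sqrt_nonneg _
  rw [saddleNormalizer, norm_mul, norm_pow, norm_real, Real.norm_of_nonneg hq, norm_exp, neg_re,
    hre]

lemma saddleNormalizer_mul_contourIntegrand {A : ℂ} (hA : 0 < A.re) {n : ℕ} (hn : n ≠ 0) (y : ℂ)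
    (α t : ℝ) :
    saddleNormalizer A n *
        contourIntegrand A n y (α + A.im / fourthRoot n ^ 2 + t / fourthRoot n ^ 3) =
      (fourthRoot n : ℂ) ^ 3 * (exp (n * α * I) * gaussianIntegrand α A n y t) := by
  rw [contourIntegrand, ← saddlePoint_add_mul_I, exp_logGenFun_saddlePoint hA hn,
    saddleNormalizer, exp_neg]
  field_simp

lemma saddleNormalizer_mul_setIntegral {A : ℂ} (hA : 0 < A.re) {n : ℕ} (hn : n ≠ 0) (y : ℂ)
    (α : ℝ) :
    saddleNormalizer A n * ∫ θ in saddleWindow A n α, contourIntegrand A n y θ =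
      exp (n * α * I) *
        ∫ t in (-fourthRoot n)..(fourthRoot n), gaussianIntegrand α A n y t := by
  have hq := fourthRoot_pos hn
  have hq' : (fourthRoot n : ℂ) ≠ 0 := by exact_mod_cast hq.ne'
  have hratio : fourthRoot n / fourthRoot n ^ 3 = 1 / fourthRoot n ^ 2 := by field_simp
  have hwidth : 0 < 1 / fourthRoot n ^ 2 := by positivity
  have hsubst := intervalIntegral.inv_smul_integral_comp_add_div (a := -fourthRoot n)
    (b := fourthRoot n) (contourIntegrand A n y) (fourthRoot n ^ 3) (α + A.im / fourthRoot n ^ 2)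
  rw [neg_div, hratio, ← sub_eq_add_neg] at hsubst
  rw [saddleWindow, ← intervalIntegral.integral_of_le (by linarith), ← hsubst, real_smul,
    mul_left_comm, ← intervalIntegral.integral_const_mul]
  simp only [saddleNormalizer_mul_contourIntegrand hA hn]
  rw [intervalIntegral.integral_const_mul, intervalIntegral.integral_const_mul, ← mul_assoc]
  push_cast
  field_simp

lemma tendsto_fourthRoot_pow_three_mul_exp_neg {η : ℝ} (hη : 0 < η) :
    Tendsto (fun n => fourthRoot n ^ 3 * Real.exp (-(fourthRoot n ^ 2 * η))) atTop (𝓝 0) := by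
  have hdecay := (tendsto_rpow_mul_exp_neg_mul_atTop_nhds_zero 2 η hη).comp
    ((tendsto_pow_atTop two_ne_zero).comp tendsto_fourthRoot_atTop)
  refine squeeze_zero' ?_ ?_ hdecay
  · filter_upwards [eventually_ne_atTop 0] with n hn
    have := fourthRoot_pos hn
    positivity
  · filter_upwards [tendsto_fourthRoot_atTop.eventually_ge_atTop 1] with n hn
    simp only [Function.comp_apply, Real.rpow_two]
    rw [neg_mul, mul_comm η, ← pow_mul]
    gcongr
    norm_num

lemma eventually_saddleWindow_subset {k : ℕ} (hk : k ≠ 0) {x : ℂ} (hx : ‖x‖ < 1)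
    (h : 0 < fk k x) {a b α : ℝ} (hα : α ∈ Set.Ioo a b) :
    ∀ᶠ z : ℕ × ℂ in atTop ×ˢ 𝓝 x, saddleWindow (sqrtDilog k z.2) z.1 α ⊆ Set.Ioc a b := by
  have hq2 : Tendsto (fun z : ℕ × ℂ => fourthRoot z.1 ^ 2) (atTop ×ˢ 𝓝 x) atTop :=
    (tendsto_pow_atTop two_ne_zero).comp (tendsto_fourthRoot_atTop.comp tendsto_fst)
  have hcentre := (((continuous_im.tendsto _).comp
    (tendsto_sqrtDilog_snd hk hx h)).div_atTop hq2).const_add α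
  have hwidth := (tendsto_const_nhds (x := (1 : ℝ))).div_atTop hq2
  rw [add_zero] at hcentre
  have hlower := hcentre.sub hwidth
  have hupper := hcentre.add hwidth
  rw [sub_zero] at hlower
  rw [add_zero] at hupper
  filter_upwards [hlower.eventually_const_lt hα.1, hupper.eventually_lt_const hα.2] with z ha hb
  exact Set.Ioc_subset_Ioc ha.le hb.le

lemma eventually_pairwiseDisjoint_saddleWindow {k : ℕ} (hk : k ≠ 0) {x : ℂ} (hx : ‖x‖ < 1)
    (h : 0 < fk k x) (s : Finset ℝ) :
    ∀ᶠ z : ℕ × ℂ in atTop ×ˢ 𝓝 x,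
      (s : Set ℝ).PairwiseDisjoint (saddleWindow (sqrtDilog k z.2) z.1) := by
  have hlt {α β : ℝ} (hαβ : α < β) : ∀ᶠ z : ℕ × ℂ in atTop ×ˢ 𝓝 x,
      Disjoint (saddleWindow (sqrtDilog k z.2) z.1 α) (saddleWindow (sqrtDilog k z.2) z.1 β) := by
    filter_upwards [eventually_saddleWindow_subset hk hx h
        (show α ∈ Set.Ioo (α - 1) ((α + β) / 2) from ⟨by linarith, by linarith⟩),
      eventually_saddleWindow_subset hk hx h
        (show β ∈ Set.Ioo ((α + β) / 2) (β + 1) from ⟨by linarith, by linarith⟩)] with z hα hβ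
    exact (Set.Ioc_disjoint_Ioc_of_le le_rfl).mono hα hβ
  refine (eventually_all_finset s).2 fun α _ => (eventually_all_finset s).2 fun β _ => ?_
  rcases lt_trichotomy α β with hαβ | rfl | hαβ
  · exact (hlt hαβ).mono fun z hz _ => hz
  · exact .of_forall fun z hne => absurd rfl hne
  · exact (hlt hαβ).mono fun z hz _ => hz.symm

lemma norm_setIntegral_sub_sum_le {ι E : Type*} [NormedAddCommGroup E] [NormedSpace ℝ E]
    {f : ℝ → E} {a b C : ℝ} (hab : a ≤ b) (hC : 0 ≤ C)
    (hf : MeasureTheory.IntegrableOn f (Set.Ioc a b)) {s : Finset ι} {S : ι → Set ℝ}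
    (hS : ∀ i ∈ s, MeasurableSet (S i)) (hsub : ∀ i ∈ s, S i ⊆ Set.Ioc a b)
    (hdisj : (s : Set ι).PairwiseDisjoint S)
    (hbound : ∀ t ∈ Set.Ioc a b, (∀ i ∈ s, t ∉ S i) → ‖f t‖ ≤ C) :
    ‖(∫ t in Set.Ioc a b, f t) - ∑ i ∈ s, ∫ t in S i, f t‖ ≤ C * (b - a) := by
  have hmeas : MeasurableSet (⋃ i ∈ s, S i) := Finset.measurableSet_biUnion s hS
  have hle : MeasureTheory.volume (Set.Ioc a b \ ⋃ i ∈ s, S i) ≤ ENNReal.ofReal (b - a) :=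
    (MeasureTheory.measure_mono Set.sdiff_subset).trans_eq Real.volume_Ioc
  rw [← MeasureTheory.integral_inter_add_sdiff hmeas hf,
    Set.inter_eq_right.2 (Set.iUnion₂_subset hsub),
    MeasureTheory.integral_biUnion_finset s hS hdisj fun i hi => hf.mono_set (hsub i hi),
    add_sub_cancel_left]
  refine (MeasureTheory.norm_setIntegral_le_of_norm_le_const (hle.trans_lt ENNReal.ofReal_lt_top)
    fun t ht => hbound t ht.1 fun i hi hti => ht.2 (Set.mem_biUnion hi hti)).trans ?_
  gcongr
  exact ENNReal.toReal_le_of_le_ofReal (sub_nonneg.2 hab) hle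

lemma tendsto_saddleNormalizer_mul_F_sub_sum {k : ℕ} {x : ℂ} (hx : ‖x‖ < 1)
    (h : IsDominantIndex k x) :
    Tendsto (fun z : ℕ × ℂ => saddleNormalizer (sqrtDilog k z.2) z.1 *
        (2 * (Real.pi : ℂ) * F z.1 z.2) - ∑ α ∈ cuspAngles k, exp (z.1 * α * I) *
        ∫ t in (-fourthRoot z.1)..(fourthRoot z.1),
          gaussianIntegrand α (sqrtDilog k z.2) z.1 z.2 t) (atTop ×ˢ 𝓝 x) (𝓝 0) := by
  obtain ⟨η, hη, hrest⟩ := exists_norm_contourIntegrand_le hx h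
  have hk0 := h.ne_zero
  have hk6 : k ≤ 6 := (h.le_three hx).trans (by norm_num)
  have hdecay : Tendsto (fun z : ℕ × ℂ => 2 * Real.pi *
      (fourthRoot z.1 ^ 3 * Real.exp (-(fourthRoot z.1 ^ 2 * η)))) (atTop ×ˢ 𝓝 x) (𝓝 0) := by
    simpa only [mul_zero, Function.comp_def] using
      ((tendsto_fourthRoot_pow_three_mul_exp_neg hη).comp tendsto_fst).const_mul (2 * Real.pi)
  refine squeeze_zero_norm' ?_ hdecay
  filter_upwards [(eventually_all_finset (cuspAngles k)).2 fun α hα =>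
      eventually_saddleWindow_subset hk0 hx h.fk_pos (mem_Ioo_of_mem_cuspAngles hk6 hα),
    eventually_pairwiseDisjoint_saddleWindow hk0 hx h.fk_pos (cuspAngles k), hrest,
    eventually_half_lt_sqrtDilog_re hk0 hx h.fk_pos,
    tendsto_fst.eventually (eventually_ne_atTop 0),
    tendsto_snd.eventually (eventually_norm_lt_one hx)] with z hsub hdisj hrest hre hn hy
  have hA : 0 < (sqrtDilog k z.2).re := (half_pos h.fk_pos).trans hre
  have hq := fourthRoot_pos hn
  have hle : (-1 : ℝ) ≤ 2 * Real.pi - 1 := by linarith [Real.pi_pos]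
  have hcauchy : 2 * (Real.pi : ℂ) * F z.1 z.2 =
      ∫ θ in Set.Ioc (-1 : ℝ) (2 * Real.pi - 1), contourIntegrand (sqrtDilog k z.2) z.1 z.2 θ := by
    rw [two_pi_mul_F_eq_integral hy (div_pos hA (pow_pos hq 2)) hn,
      intervalIntegral.integral_of_le hle]
    rfl
  have hrem := norm_setIntegral_sub_sum_le (S := saddleWindow (sqrtDilog k z.2) z.1) hle
    (Real.exp_nonneg _)
    ((continuous_contourIntegrand hA hn hy).integrableOn_Ioc) (fun _ _ => measurableSet_Ioc)
    hsub hdisj fun θ hθ => hrest θ (Set.Ioc_subset_Icc_self hθ)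
  simp only [← saddleNormalizer_mul_setIntegral hA hn]
  rw [hcauchy, ← Finset.mul_sum, ← mul_sub, norm_mul, norm_saddleNormalizer]
  calc _ ≤ fourthRoot z.1 ^ 3 * Real.exp (-(fourthRoot z.1 ^ 2 * (2 * (sqrtDilog k z.2).re))) *
        (Real.exp (fourthRoot z.1 ^ 2 * (2 * (sqrtDilog k z.2).re - η)) *
          (2 * Real.pi - 1 - -1)) := by gcongr
    _ = _ := by
      rw [mul_sub (fourthRoot z.1 ^ 2), sub_eq_add_neg, Real.exp_add, Real.exp_neg]
      field_simp
      ring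

/-- The leading coefficient of `F n x` contributed jointly by the cusps of order `k`. -/
noncomputable def cuspSum (k n : ℕ) (x : ℂ) : ℂ :=
  ∑ α ∈ cuspAngles k, exp (n * α * I) * exp (cuspConstant α x)

lemma tendsto_saddleNormalizer_mul_F_sub {k : ℕ} {x : ℂ} (hx : ‖x‖ < 1)
    (h : IsDominantIndex k x) :
    Tendsto (fun z : ℕ × ℂ => saddleNormalizer (sqrtDilog k z.2) z.1 *
        (2 * (Real.pi : ℂ) * F z.1 z.2) -
        cuspSum k z.1 x * (Real.pi / (1 / sqrtDilog k x)) ^ (1 / 2 : ℂ))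
      (atTop ×ˢ 𝓝 x) (𝓝 0) := by
  set G : ℂ := (Real.pi / (1 / sqrtDilog k x)) ^ (1 / 2 : ℂ)
  have hsum : Tendsto (fun z : ℕ × ℂ => ∑ α ∈ cuspAngles k, exp (z.1 * α * I) *
      ((∫ t in (-fourthRoot z.1)..(fourthRoot z.1),
        gaussianIntegrand α (sqrtDilog k z.2) z.1 z.2 t) - exp (cuspConstant α x) * G))
      (atTop ×ˢ 𝓝 x) (𝓝 0) := by
    rw [← Finset.sum_const_zero (s := cuspAngles k)]
    refine tendsto_finsetSum _ fun α hα => ?_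
    have hlim := tendsto_integral_gaussianIntegrand h.ne_zero hx h.fk_pos
      (orderOf_exp_of_mem_cuspAngles hα)
      (one_le_norm_sub_one_of_pow_eq_one h.ne_zero (h.le_three hx))
    refine squeeze_zero_norm (fun z => ?_) (tendsto_iff_norm_sub_tendsto_zero.1 hlim)
    rw [norm_mul, show (z.1 : ℂ) * α * I = ((z.1 * α : ℝ) : ℂ) * I by push_cast; rfl,
      norm_exp_ofReal_mul_I, one_mul]
  rw [← add_zero (0 : ℂ)]
  refine ((tendsto_saddleNormalizer_mul_F_sub_sum hx h).add hsum).congr fun z => ?_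
  simp only [mul_sub, Finset.sum_sub_distrib, cuspSum, Finset.sum_mul, mul_assoc]
  ring

lemma eventually_le_norm_F_of_le_norm_cuspSum {k : ℕ} {x : ℂ} (hx : ‖x‖ < 1)
    (h : IsDominantIndex k x) {c : ℝ} (hc : 0 < c) (hcusp : ∀ n, c ≤ ‖cuspSum k n x‖)
    {ε : ℝ} (hε : 0 < ε) :
    ∀ᶠ z : ℕ × ℂ in atTop ×ˢ 𝓝 x, Real.exp (2 * √z.1 * (fk k x - ε)) ≤ ‖F z.1 z.2‖ := by
  set G : ℂ := (Real.pi / (1 / sqrtDilog k x)) ^ (1 / 2 : ℂ) with hG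
  have hG0 : G ≠ 0 := by
    rw [hG, Ne, cpow_eq_zero_iff, div_div_eq_mul_div, div_one, mul_eq_zero, ofReal_eq_zero]
    exact fun hzero => hzero.1.elim Real.pi_ne_zero
      (ne_zero_of_re_pos (sqrtDilog_re_pos h.fk_pos))
  have hcG : 0 < c * ‖G‖ / 2 := by positivity
  have herror := (tendsto_saddleNormalizer_mul_F_sub hx h).norm
  rw [norm_zero, ← hG] at herror
  have hdecay := ((tendsto_fourthRoot_pow_three_mul_exp_neg hε).comp
    (tendsto_fst (g := 𝓝 x))).const_mul (2 * Real.pi)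
  rw [mul_zero] at hdecay
  have hre := (continuous_re.tendsto _).comp (tendsto_sqrtDilog_snd h.ne_zero hx h.fk_pos)
  rw [sqrtDilog_re] at hre
  filter_upwards [herror.eventually_lt_const hcG, hdecay.eventually_lt_const hcG,
    hre.eventually_const_lt (show fk k x - ε / 2 < fk k x by linarith),
    tendsto_fst.eventually (eventually_ne_atTop 0)] with z hz hsmall hfk hn
  simp only [Function.comp_apply] at hfk hsmall
  have hq := fourthRoot_pos hn
  have hlarge : c * ‖G‖ / 2 <
      ‖saddleNormalizer (sqrtDilog k z.2) z.1 * (2 * (Real.pi : ℂ) * F z.1 z.2)‖ := by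
    have htri := norm_sub_norm_le (cuspSum k z.1 x * G)
      (saddleNormalizer (sqrtDilog k z.2) z.1 * (2 * (Real.pi : ℂ) * F z.1 z.2))
    rw [norm_sub_rev, norm_mul _ G] at htri
    linarith [mul_le_mul_of_nonneg_right (hcusp z.1) (norm_nonneg G)]
  have hcompare : Real.exp (-(fourthRoot z.1 ^ 2 * ε)) <
      Real.exp (-(fourthRoot z.1 ^ 2 * (2 * (sqrtDilog k z.2).re))) * ‖F z.1 z.2‖ := by
    refine lt_of_mul_lt_mul_left (a := 2 * Real.pi * fourthRoot z.1 ^ 3) ?_ (by positivity)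
    rw [norm_mul, norm_saddleNormalizer, norm_mul, norm_mul, norm_real, RCLike.norm_ofNat,
      Real.norm_of_nonneg Real.pi_pos.le] at hlarge
    linarith
  rw [Real.exp_neg (_ * (2 * _)), ← div_eq_inv_mul, lt_div_iff₀ (Real.exp_pos _),
    ← Real.exp_add] at hcompare
  refine (Real.exp_le_exp.2 ?_).trans hcompare.le
  rw [← fourthRoot_sq]
  nlinarith [pow_pos hq 2]

/-! ### Non-cancellation of the dominant cusps -/

lemma regularLimit_eq_ite_pow (θ : ℝ) (l : ℕ) :
    regularLimit θ l =
      if exp (θ * I) ^ (l + 1) = 1 then -1 / 2 else 1 / (exp (θ * I) ^ (l + 1) - 1) := by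
  simp only [regularLimit, orderOf_dvd_iff_pow_eq_one, ← exp_nat_mul, Nat.cast_succ]

lemma norm_regularLimit_le {θ : ℝ}
    (h : ∀ η : ℂ, η ^ orderOf (exp (θ * I)) = 1 → η ≠ 1 → 1 ≤ ‖η - 1‖) (l : ℕ) :
    ‖regularLimit θ l‖ ≤ 1 := by
  rw [regularLimit_eq_ite_pow]
  split_ifs with hpow
  · norm_num
  · rw [norm_div, norm_one]
    refine div_le_one_of_le₀ (h _ ?_ hpow) (norm_nonneg _)
    rw [pow_right_comm, pow_orderOf_eq_one, one_pow]

lemma hasSum_cuspConstant {x : ℂ} (hx : ‖x‖ < 1) {θ : ℝ}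
    (h : ∀ η : ℂ, η ^ orderOf (exp (θ * I)) = 1 → η ≠ 1 → 1 ≤ ‖η - 1‖) :
    HasSum (fun l : ℕ => x ^ (l + 1) / ((l : ℂ) + 1) * regularLimit θ l) (cuspConstant θ x) := by
  refine (Summable.of_norm_bounded (summable_pow_succ (norm_nonneg x) hx) fun l => ?_).hasSum
  rw [norm_mul, ← mul_one (‖x‖ ^ (l + 1))]
  gcongr
  · exact norm_pow_succ_div_le le_rfl l
  · exact norm_regularLimit_le h l

lemma ite_pow_sub_ite_pow_two {v : ℂ} (hv : v ^ 3 = 1) :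
    ((if v = 1 then -1 / 2 else 1 / (v - 1)) - if v ^ 2 = 1 then -1 / 2 else 1 / (v ^ 2 - 1)) =
      -1 / 3 * (v - v ^ 2) := by
  by_cases h1 : v = 1
  · simp [h1]
  have h2 : v ^ 2 ≠ 1 := fun h2 => h1 (by linear_combination hv - v * h2)
  have h1' := sub_ne_zero.2 h1
  have h2' := sub_ne_zero.2 h2
  have hcyclotomic : v ^ 2 + v + 1 = 0 :=
    (mul_eq_zero.1 (show (v - 1) * (v ^ 2 + v + 1) = 0 by linear_combination hv)).resolve_left h1'
  rw [if_neg h1, if_neg h2]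
  field_simp
  linear_combination (-v * (v - 1) ^ 2) * hcyclotomic + v * hv

lemma cuspConstant_sub_cuspConstant {x : ℂ} (hx : ‖x‖ < 1) {θ θ' : ℝ}
    (hθ : orderOf (exp (θ * I)) = 3) (hθ' : orderOf (exp (θ' * I)) = 3)
    (hsq : exp (θ' * I) = exp (θ * I) ^ 2) :
    cuspConstant θ x - cuspConstant θ' x =
      -1 / 3 * (log (1 - exp (θ' * I) * x) - log (1 - exp (θ * I) * x)) := by
  have hη : ∀ η : ℂ, η ^ 3 = 1 → η ≠ 1 → 1 ≤ ‖η - 1‖ :=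
    fun η h h1 => one_le_norm_sub_one_of_pow_three_eq_one h h1
  have hrotate (α : ℝ) : ‖exp (α * I) * x‖ < 1 := by
    rwa [norm_mul, norm_exp_ofReal_mul_I, one_mul]
  have hdiff := (hasSum_cuspConstant hx (hθ ▸ hη)).sub (hasSum_cuspConstant hx (hθ' ▸ hη))
  have hlog := ((hasSum_taylorSeries_neg_log' (hrotate θ)).sub
    (hasSum_taylorSeries_neg_log' (hrotate θ'))).mul_left (-1 / 3)
  rw [neg_sub_neg] at hlog
  refine hdiff.unique (hlog.congr_fun fun l => ?_)
  have hcube : (exp (θ * I) ^ (l + 1)) ^ 3 = 1 := by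
    rw [pow_right_comm, ← hθ, pow_orderOf_eq_one, one_pow]
  rw [← mul_sub, regularLimit_eq_ite_pow, regularLimit_eq_ite_pow, hsq,
    pow_right_comm _ 2, ite_pow_sub_ite_pow_two hcube, mul_pow, mul_pow, pow_right_comm _ 2]
  ring

lemma im_eq_zero_of_norm_one_sub_eq {u x : ℂ} (hu : u.im ≠ 0)
    (h : ‖1 - u * x‖ = ‖1 - (starRingEnd ℂ) u * x‖) : x.im = 0 := by
  have hsq : ‖1 - u * x‖ ^ 2 = ‖1 - (starRingEnd ℂ) u * x‖ ^ 2 := by rw [h]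
  rw [← normSq_eq_norm_sq, ← normSq_eq_norm_sq, normSq_apply, normSq_apply] at hsq
  simp only [sub_re, sub_im, mul_re, mul_im, one_re, one_im, conj_re, conj_im] at hsq
  exact (mul_eq_zero.1 (show u.im * x.im = 0 by linarith)).resolve_left hu

lemma re_cuspConstant_ne {x : ℂ} (hx : ‖x‖ < 1) (him : x.im ≠ 0) {θ θ' : ℝ}
    (hθ : orderOf (exp (θ * I)) = 3) (hθ' : orderOf (exp (θ' * I)) = 3)
    (hsq : exp (θ' * I) = exp (θ * I) ^ 2) :
    (cuspConstant θ x).re ≠ (cuspConstant θ' x).re := by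
  intro heq
  have hdiff := congrArg re (cuspConstant_sub_cuspConstant hx hθ hθ' hsq)
  rw [sub_re, heq, sub_self, show (-1 / 3 : ℂ) = ((-1 / 3 : ℝ) : ℂ) by push_cast; rfl,
    re_ofReal_mul, sub_re, log_re, log_re] at hdiff
  have hpos (α : ℝ) : 0 < ‖1 - exp (α * I) * x‖ := by
    refine norm_pos_iff.2 (sub_ne_zero.2 fun h => ?_)
    have := congrArg norm h
    rw [norm_one, norm_mul, norm_exp_ofReal_mul_I, one_mul] at this
    exact hx.ne this.symm
  have hnorm : ‖1 - exp (θ * I) * x‖ = ‖1 - exp (θ' * I) * x‖ :=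
    Real.log_injOn_pos (hpos θ) (hpos θ') (by linarith)
  have hcube : exp (θ * I) ^ 3 = 1 := by rw [← hθ, pow_orderOf_eq_one]
  have hconj : exp (θ' * I) = (starRingEnd ℂ) (exp (θ * I)) := by
    rw [hsq, ← inv_eq_conj (norm_exp_ofReal_mul_I θ)]
    exact eq_inv_of_mul_eq_one_left (by rw [← pow_succ, hcube])
  refine him (im_eq_zero_of_norm_one_sub_eq (fun hu => ?_) (hconj ▸ hnorm))
  have hone : exp (θ * I) = 1 := by
    have hreal := hsq.symm.trans (hconj.trans (conj_eq_iff_im.2 hu))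
    exact mul_left_cancel₀ (exp_ne_zero _) (by rw [← sq, hreal, mul_one])
  rw [hone, orderOf_one] at hθ
  norm_num at hθ

lemma cuspAngles_one : cuspAngles 1 = {0} := by
  simp [cuspAngles]

lemma cuspAngles_two : cuspAngles 2 = {Real.pi} := by
  rw [cuspAngles, show (Finset.range 2).filter (Nat.Coprime · 2) = {1} by decide]
  simp

lemma cuspAngles_three : cuspAngles 3 = {2 * Real.pi / 3, 2 * Real.pi * 2 / 3} := by
  simp [cuspAngles, show (Finset.range 3).filter (Nat.Coprime · 3) = {1, 2} by decide,
    Finset.image_insert]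

lemma norm_exp_mul_exp_cuspConstant (n : ℕ) (α : ℝ) (x : ℂ) :
    ‖exp (n * α * I) * exp (cuspConstant α x)‖ = Real.exp (cuspConstant α x).re := by
  rw [norm_mul, show (n : ℂ) * α * I = ((n * α : ℝ) : ℂ) * I by push_cast; rfl,
    norm_exp_ofReal_mul_I, one_mul, norm_exp]

lemma norm_cuspSum_of_cuspAngles_eq_singleton {k : ℕ} {α : ℝ} (h : cuspAngles k = {α}) (n : ℕ)
    (x : ℂ) : ‖cuspSum k n x‖ = Real.exp (cuspConstant α x).re := by
  rw [cuspSum, h, Finset.sum_singleton, norm_exp_mul_exp_cuspConstant]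

lemma exists_le_norm_cuspSum_three {x : ℂ} (hx : ‖x‖ < 1) (him : x.im ≠ 0) :
    ∃ c > 0, ∀ n, c ≤ ‖cuspSum 3 n x‖ := by
  set α := 2 * Real.pi / 3 with hα
  set β := 2 * Real.pi * 2 / 3 with hβ
  have hmem : α ∈ cuspAngles 3 ∧ β ∈ cuspAngles 3 := by simp [cuspAngles_three, hα, hβ]
  have hsq : exp (β * I) = exp (α * I) ^ 2 := by
    rw [← exp_nat_mul]
    congr 1
    push_cast [hα, hβ]
    ring
  have hne := re_cuspConstant_ne hx him (orderOf_exp_of_mem_cuspAngles hmem.1)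
    (orderOf_exp_of_mem_cuspAngles hmem.2) hsq
  refine ⟨|Real.exp (cuspConstant α x).re - Real.exp (cuspConstant β x).re|,
    abs_pos.2 (sub_ne_zero.2 fun h => hne (Real.exp_injective h)), fun n => ?_⟩
  have hαβ : α ≠ β := by
    intro h
    rw [h] at hne
    exact hne rfl
  rw [cuspSum, cuspAngles_three, Finset.sum_pair hαβ, ← norm_exp_mul_exp_cuspConstant n α,
    ← norm_exp_mul_exp_cuspConstant n β, ← norm_neg (exp (n * β * I) * _)]
  exact (abs_norm_sub_norm_le _ _).trans_eq (by rw [sub_neg_eq_add])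

lemma exists_le_norm_cuspSum {k : ℕ} {x : ℂ} (hx : ‖x‖ < 1) (h : IsDominantIndex k x) :
    ∃ c > 0, ∀ n, c ≤ ‖cuspSum k n x‖ := by
  have hk := h.le_three hx
  have hk0 := h.ne_zero
  interval_cases k
  · exact absurd rfl hk0
  · exact ⟨_, Real.exp_pos _, fun n => (norm_cuspSum_of_cuspAngles_eq_singleton
      cuspAngles_one n x).ge⟩
  · exact ⟨_, Real.exp_pos _, fun n => (norm_cuspSum_of_cuspAngles_eq_singleton
      cuspAngles_two n x).ge⟩
  · exact exists_le_norm_cuspSum_three hx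
      (im_ne_zero_of_fk_one_lt_fk_three hx (h 1 (by norm_num)))

theorem eventually_le_norm_F {k : ℕ} {x : ℂ} (hx : ‖x‖ < 1) (h : IsDominantIndex k x) {ε : ℝ}
    (hε : 0 < ε) :
    ∀ᶠ z : ℕ × ℂ in atTop ×ˢ 𝓝 x, Real.exp (2 * √z.1 * (fk k x - ε)) ≤ ‖F z.1 z.2‖ := by
  obtain ⟨c, hc, hcusp⟩ := exists_le_norm_cuspSum hx h
  exact eventually_le_norm_F_of_le_norm_cuspSum hx h hc hcusp hε

/-! ### Outside the unit disk -/

/-- The weights `z ^ (i - 1)` of the parts `i ≠ 1`; parts equal to `1` get weight `0`.  With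
weight `1` for the part `1` these are the weights of the reversed polynomial `z ^ n F n z⁻¹`. -/
def reversedWeights {K : Type*} [Semiring K] (z : K) (i : ℕ) : K :=
  if i = 1 then 0 else z ^ (i - 1)

lemma norm_reversedWeights_le {y : ℂ} {r : ℝ} (h : ‖y‖ ≤ r) (i : ℕ) :
    ‖reversedWeights y i‖ ≤ reversedWeights r i := by
  unfold reversedWeights
  split_ifs
  · rw [norm_zero]
  · rw [norm_pow]
    gcongr

lemma reversedWeights_nonneg {r : ℝ} (hr : 0 ≤ r) (i : ℕ) : 0 ≤ reversedWeights r i := by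
  unfold reversedWeights
  split_ifs <;> positivity

lemma reversedWeights_succ_le {r : ℝ} (hr : 0 ≤ r) (i : ℕ) :
    reversedWeights r (i + 1) ≤ r ^ i := by
  unfold reversedWeights
  split_ifs
  · positivity
  · rw [Nat.add_sub_cancel]

lemma reversedWeights_succ_lt_one {r : ℝ} (hr : 0 ≤ r) (hr1 : r < 1) (i : ℕ) :
    reversedWeights r (i + 1) < 1 := by
  unfold reversedWeights
  split_ifs with h
  · exact zero_lt_one
  · exact pow_lt_one₀ hr hr1 (by lia)

lemma summable_reversedWeights_succ {r : ℝ} (hr : 0 ≤ r) (hr1 : r < 1) :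
    Summable fun i => reversedWeights r (i + 1) :=
  .of_nonneg_of_le (fun _ => reversedWeights_nonneg hr _) (reversedWeights_succ_le hr)
    (summable_geometric_of_lt_one hr hr1)

lemma summable_weightedPartitionSum_reversedWeights {r : ℝ} (hr : 0 ≤ r) (hr1 : r < 1) :
    Summable (weightedPartitionSum (reversedWeights r)) := by
  simpa only [one_pow, mul_one] using
    summable_weightedPartitionSum_of_nonneg (v := 1) (reversedWeights_nonneg hr) zero_le_one
      (by simpa only [one_pow, mul_one] using summable_reversedWeights_succ hr hr1)
      (by simpa only [one_pow, mul_one] using reversedWeights_succ_lt_one hr hr1)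

lemma norm_weightedPartitionSum_reversedWeights_le {y : ℂ} {r : ℝ} (h : ‖y‖ ≤ r) (j : ℕ) :
    ‖weightedPartitionSum (reversedWeights y) j‖ ≤ weightedPartitionSum (reversedWeights r) j :=
  norm_weightedPartitionSum_le _ _ (norm_reversedWeights_le h) j

lemma tsum_weightedPartitionSum_reversedWeights_ne_zero {z : ℂ} (hz : ‖z‖ < 1) :
    ∑' j, weightedPartitionSum (reversedWeights z) j ≠ 0 := by
  have hle : ∀ i, ‖reversedWeights z (i + 1) * 1 ^ (i + 1)‖ ≤ reversedWeights ‖z‖ (i + 1) :=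
    fun i => by simpa only [one_pow, mul_one] using norm_reversedWeights_le le_rfl (i + 1)
  have h := hasSum_weightedPartitionSum_mul_pow
    (.of_nonneg_of_le (fun _ => norm_nonneg _) hle
      (summable_reversedWeights_succ (norm_nonneg z) hz))
    (fun i => (hle i).trans_lt (reversedWeights_succ_lt_one (norm_nonneg z) hz i))
  simp only [one_pow, mul_one] at h
  rw [h.tsum_eq]
  exact Complex.exp_ne_zero _

lemma continuous_weightedPartitionSum_reversedWeights (j : ℕ) :
    Continuous fun y : ℂ => weightedPartitionSum (reversedWeights y) j := by
  unfold weightedPartitionSum reversedWeights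
  refine continuous_finsetSum _ fun p _ => continuous_multiset_prod _ fun i _ => ?_
  split_ifs <;> fun_prop

lemma tendsto_sum_range_weightedPartitionSum_reversedWeights {z : ℂ} (hz : ‖z‖ < 1) :
    Tendsto (fun p : ℕ × ℂ =>
        ∑ j ∈ Finset.range (p.1 + 1), weightedPartitionSum (reversedWeights p.2) j)
      (atTop ×ˢ 𝓝 z) (𝓝 (∑' j, weightedPartitionSum (reversedWeights z) j)) := by
  obtain ⟨r, hr, hr1⟩ := exists_between hz
  have hr0 : 0 ≤ r := (norm_nonneg z).trans hr.le
  have hsum (p : ℕ × ℂ) :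
      ∑' j, (if j < p.1 + 1 then weightedPartitionSum (reversedWeights p.2) j else 0) =
        ∑ j ∈ Finset.range (p.1 + 1), weightedPartitionSum (reversedWeights p.2) j := by
    rw [tsum_eq_sum fun j (hj : j ∉ Finset.range (p.1 + 1)) => if_neg (mt Finset.mem_range.2 hj)]
    exact Finset.sum_congr rfl fun j hj => if_pos (Finset.mem_range.1 hj)
  refine Tendsto.congr hsum <| tendsto_tsum_of_dominated_convergence
    (summable_weightedPartitionSum_reversedWeights hr0 hr1) (fun j => ?_) ?_
  · refine ((continuous_weightedPartitionSum_reversedWeights j).tendsto z).comp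
      tendsto_snd |>.congr' ?_
    filter_upwards [tendsto_fst.eventually (eventually_ge_atTop j)] with p hp
    rw [if_pos (by lia)]
    rfl
  · have hball : ∀ᶠ y in 𝓝 z, ‖y‖ < r := continuous_norm.continuousAt.eventually_lt_const hr
    filter_upwards [tendsto_snd.eventually hball] with p hp j
    have hle := norm_weightedPartitionSum_reversedWeights_le hp.le j
    split_ifs
    · exact hle
    · rw [norm_zero]
      exact (norm_nonneg _).trans hle

lemma prod_map_const_eq_pow_sum_mul {x : ℂ} (hx : x ≠ 0) (s : Multiset ℕ) (hs : ∀ i ∈ s, 0 < i) :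
    (s.map fun _ => x).prod = x ^ s.sum * (s.map fun i => x⁻¹ ^ (i - 1)).prod := by
  induction s using Multiset.induction_on with
  | empty => simp
  | cons a s ih =>
    obtain ⟨a, rfl⟩ := Nat.exists_eq_add_one_of_ne_zero (hs a (Multiset.mem_cons_self _ s)).ne'
    rw [Multiset.map_cons, Multiset.prod_cons, ih fun i hi => hs i (Multiset.mem_cons_of_mem hi),
      Multiset.sum_cons, Multiset.map_cons, Multiset.prod_cons, Nat.add_sub_cancel,
      pow_add, pow_succ, inv_pow]
    field_simp

lemma F_eq_pow_mul_sum_reversedWeights {n : ℕ} (hn : n ≠ 0) {x : ℂ} (hx : x ≠ 0) :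
    F n x =
      x ^ n * ∑ j ∈ Finset.range (n + 1), weightedPartitionSum (reversedWeights x⁻¹) j := by
  have hfactor := weightedPartitionSum_eq_sum_range (fun i => x⁻¹ ^ (i - 1)) (pow_zero _) n
  unfold reversedWeights
  rw [← hfactor, F_eq_weightedPartitionSum hn, weightedPartitionSum, weightedPartitionSum,
    Finset.mul_sum]
  refine Finset.sum_congr rfl fun p _ => ?_
  rw [prod_map_const_eq_pow_sum_mul hx _ fun i hi => p.parts_pos hi, p.parts_sum]

theorem exists_tendsto_F_div_pow {x : ℂ} (hx : 1 < ‖x‖) :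
    ∃ c : ℂ, c ≠ 0 ∧
      Tendsto (fun p : ℕ × ℂ => F p.1 p.2 / p.2 ^ p.1) (atTop ×ˢ 𝓝 x) (𝓝 c) := by
  have hx0 : x ≠ 0 := norm_pos_iff.1 (zero_lt_one.trans hx)
  have hinv : ‖x⁻¹‖ < 1 := by
    rw [norm_inv]
    exact inv_lt_one_of_one_lt₀ hx
  have hmap : Tendsto (fun p : ℕ × ℂ => (p.1, p.2⁻¹)) (atTop ×ˢ 𝓝 x) (atTop ×ˢ 𝓝 x⁻¹) :=
    tendsto_fst.prodMk ((tendsto_inv₀ hx0).comp tendsto_snd)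
  refine ⟨_, tsum_weightedPartitionSum_reversedWeights_ne_zero hinv,
    ((tendsto_sum_range_weightedPartitionSum_reversedWeights hinv).comp hmap).congr' ?_⟩
  filter_upwards [tendsto_fst.eventually (eventually_ne_atTop 0),
    tendsto_snd.eventually (eventually_ne_nhds hx0)] with p hn hp
  rw [F_eq_pow_mul_sum_reversedWeights hn hp, mul_div_cancel_left₀ _ (pow_ne_zero _ hp)]
  rfl

lemma norm_F_le_norm_F_ofReal {x : ℂ} {r : ℝ} (hx : ‖x‖ ≤ r) {n : ℕ} (hn : n ≠ 0) :
    ‖F n x‖ ≤ ‖F n r‖ := by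
  have hr : F n r = (weightedPartitionSum (fun _ => r) n : ℝ) := by
    rw [F_eq_weightedPartitionSum hn]
    simp [weightedPartitionSum]
  rw [hr, F_eq_weightedPartitionSum hn, norm_real]
  exact (norm_weightedPartitionSum_le _ _ (fun _ => hx) n).trans (le_abs_self _)

lemma exists_norm_F_le_mul_pow {r : ℝ} (hr : 1 < r) :
    ∃ C : ℝ, 0 < C ∧ ∀ᶠ n : ℕ in atTop, ∀ x : ℂ, ‖x‖ ≤ r → ‖F n x‖ ≤ C * r ^ n := by
  have hr0 : 0 < r := zero_lt_one.trans hr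
  have hnorm : ‖(r : ℂ)‖ = r := by rw [norm_real, Real.norm_of_nonneg hr0.le]
  obtain ⟨c, -, h⟩ := exists_tendsto_F_div_pow (x := r) (by rwa [hnorm])
  have hmap : Tendsto (fun n : ℕ => (n, (r : ℂ))) atTop (atTop ×ˢ 𝓝 (r : ℂ)) :=
    tendsto_id.prodMk tendsto_const_nhds
  refine ⟨‖c‖ + 1, by positivity, ?_⟩
  filter_upwards [(h.comp hmap).norm.eventually_lt_const (lt_add_one ‖c‖), eventually_ne_atTop 0]
    with n hlt hn x hx
  rw [Function.comp_apply, norm_div, norm_pow, hnorm, div_lt_iff₀ (pow_pos hr0 n)] at hlt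
  exact (norm_F_le_norm_F_ofReal hx hn).trans hlt.le

/-! ### Harmonic functions and zeros of holomorphic functions -/

section HarmonicLimits

open InnerProductSpace Metric
open scoped Nat

variable {ι : Type*} {l : Filter ι}

lemma norm_taylorTerm_le_of_re_le {f : ℂ → ℂ} {R r M : ℝ} (hM : 0 < M) (hr : 0 < r) (hrR : r < R)
    (hf : DifferentiableOn ℂ f (ball 0 R)) (h0 : f 0 = 0) (hre : ∀ z ∈ ball (0 : ℂ) R, (f z).re ≤ M)
    (q : ℂ) (m : ℕ) :
    ‖(m ! : ℂ)⁻¹ • (q - 0) ^ m • iteratedDeriv m f 0‖ ≤ 2 * M * r / (R - r) * (‖q‖ / r) ^ m := by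
  have hsphere : ∀ z ∈ sphere (0 : ℂ) r, ‖f z‖ ≤ 2 * M * r / (R - r) := fun z hz => by
    have hzr : ‖z‖ = r := mem_sphere_zero_iff_norm.1 hz
    have hzR : z ∈ ball 0 R := by rwa [mem_ball_zero_iff, hzr]
    simpa only [hzr] using borelCaratheodory_zero hM hf hre (hr.trans hrR) hzR h0
  have hcauchy := norm_iteratedDeriv_le_of_forall_mem_sphere_norm_le m hr
    (hf.diffContOnCl_ball (closedBall_subset_ball hrR)) hsphere
  have hm : (0 : ℝ) < m ! := mod_cast m.factorial_pos
  rw [norm_smul, norm_smul, norm_inv, norm_natCast, norm_pow, sub_zero, inv_mul_le_iff₀ hm, div_pow]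
  calc ‖q‖ ^ m * ‖iteratedDeriv m f 0‖
      ≤ ‖q‖ ^ m * (m ! * (2 * M * r / (R - r)) / r ^ m) := by gcongr
    _ = m ! * (2 * M * r / (R - r) * (‖q‖ ^ m / r ^ m)) := by ring

lemma tendsto_taylorTerm_of_re_le {f : ι → ℂ → ℂ} {δ : ℝ} (hδ : 0 < δ)
    (hf : ∀ᶠ n in l, DifferentiableOn ℂ (f n) (ball 0 δ) ∧ f n 0 = 0)
    (hsmall : ∀ ε > 0, ∀ᶠ n in l, ∀ z ∈ ball (0 : ℂ) δ, (f n z).re ≤ ε) (q : ℂ) (m : ℕ) :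
    Tendsto (fun n => (m ! : ℂ)⁻¹ • (q - 0) ^ m • iteratedDeriv m (f n) 0) l (𝓝 0) := by
  set B : ℝ := (‖q‖ / (δ / 2)) ^ m with hB
  have : 0 ≤ B := by positivity
  rw [Metric.tendsto_nhds]
  intro ε hε
  have hη : 0 < ε / (2 * (B + 1)) := by positivity
  filter_upwards [hf, hsmall _ hη] with n hn hre
  have hterm := norm_taylorTerm_le_of_re_le hη (half_pos hδ) (half_lt_self hδ) hn.1 hn.2 hre q m
  rw [sub_half, mul_div_cancel_right₀ _ (half_pos hδ).ne', ← hB] at hterm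
  rw [dist_zero_right]
  refine hterm.trans_lt ?_
  rw [← mul_div_assoc, mul_div_mul_left _ _ two_ne_zero, div_mul_eq_mul_div,
    div_lt_iff₀ (by positivity)]
  nlinarith

lemma tendsto_zero_of_re_le {f : ι → ℂ → ℂ} {R δ M : ℝ} (hM : 0 < M) (hδ : 0 < δ) (hδR : δ ≤ R)
    (hf : ∀ᶠ n in l, DifferentiableOn ℂ (f n) (ball 0 R) ∧ f n 0 = 0)
    (hle : ∀ᶠ n in l, ∀ z ∈ ball (0 : ℂ) R, (f n z).re ≤ M)
    (hsmall : ∀ ε > 0, ∀ᶠ n in l, ∀ z ∈ ball (0 : ℂ) δ, (f n z).re ≤ ε)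
    {q : ℂ} (hq : ‖q‖ < R) : Tendsto (fun n => f n q) l (𝓝 0) := by
  obtain ⟨r, hqr, hrR⟩ := exists_between hq
  have hr : 0 < r := (norm_nonneg q).trans_lt hqr
  have hsum : Summable fun m : ℕ => 2 * M * r / (R - r) * (‖q‖ / r) ^ m :=
    (summable_geometric_of_lt_one (by positivity) ((div_lt_one hr).2 hqr)).mul_left _
  have htsum :
      Tendsto (fun n => ∑' m : ℕ, (m ! : ℂ)⁻¹ • (q - 0) ^ m • iteratedDeriv m (f n) 0) l
        (𝓝 (∑' _ : ℕ, 0)) := by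
    refine tendsto_tsum_of_dominated_convergence hsum
      (tendsto_taylorTerm_of_re_le hδ ?_ hsmall q) ?_
    · exact hf.mono fun n hn => ⟨hn.1.mono (ball_subset_ball hδR), hn.2⟩
    · filter_upwards [hf, hle] with n hn hre m
      exact norm_taylorTerm_le_of_re_le hM hr hrR hn.1 hn.2 hre q m
  rw [tsum_zero] at htsum
  refine htsum.congr' (hf.mono fun n hn => ?_)
  exact taylorSeries_eq_on_ball hn.1 (mem_ball_zero_iff.2 hq)

/-- A Vitali theorem; an upper bound suffices by the Borel–Carathéodory inequality. -/
theorem tendsto_zero_of_harmonicOnNhd {u : ι → ℂ → ℝ} {a q : ℂ} {R δ C : ℝ} (hδ : 0 < δ)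
    (hδR : δ ≤ R) (hu : ∀ᶠ n in l, HarmonicOnNhd (u n) (ball a R))
    (hle : ∀ᶠ n in l, ∀ z ∈ ball a R, u n z ≤ C)
    (hconv : TendstoUniformlyOn u (fun _ => 0) l (ball a δ)) (hq : q ∈ ball a R) :
    Tendsto (fun n => u n q) l (𝓝 0) := by
  have hRe : ∀ n, ∃ f : ℂ → ℂ, HarmonicOnNhd (u n) (ball a R) →
      AnalyticOnNhd ℂ f (ball a R) ∧ (ball a R).EqOn (fun z => (f z).re) (u n) := fun n => by
    by_cases h : HarmonicOnNhd (u n) (ball a R)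
    · exact h.exists_analyticOnNhd_ball_re_eq.imp fun f hf _ => hf
    · exact ⟨0, fun h' => absurd h' h⟩
  choose f hf using hRe
  have hδa : a ∈ ball a δ := mem_ball_self hδ
  have hRa : a ∈ ball a R := mem_ball_self (hδ.trans_le hδR)
  have hshift {ρ : ℝ} {z : ℂ} (hz : z ∈ ball (0 : ℂ) ρ) : z + a ∈ ball a ρ := by
    simpa only [mem_ball_iff_norm, add_sub_cancel_right, sub_zero] using hz
  have hre : ∀ᶠ n in l, ∀ z ∈ ball (0 : ℂ) R, (f n (z + a) - f n a).re = u n (z + a) - u n a := by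
    filter_upwards [hu] with n hn z hz
    have heq : ∀ w ∈ ball a R, (f n w).re = u n w := (hf n hn).2
    rw [sub_re, heq _ (hshift hz), heq a hRa]
  have hsmall : ∀ ε > 0, ∀ᶠ n in l, ∀ z ∈ ball a δ, |u n z| < ε := fun ε hε => by
    simpa only [dist_zero_left, Real.norm_eq_abs] using Metric.tendstoUniformlyOn_iff.1 hconv ε hε
  have hsub : Tendsto (fun n => f n (q - a + a) - f n a) l (𝓝 0) := by
    refine tendsto_zero_of_re_le (f := fun n z => f n (z + a) - f n a) (M := |C| + 1)
      (by positivity) hδ hδR ?_ ?_ ?_ (mem_ball_iff_norm.1 hq)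
    · filter_upwards [hu] with n hn
      refine ⟨((hf n hn).1.differentiableOn.comp (by fun_prop) fun z => hshift).sub_const _, ?_⟩
      rw [zero_add, sub_self]
    · filter_upwards [hre, hle, hsmall 1 one_pos] with n hn hC h1 z hz
      rw [hn z hz]
      linarith [hC _ (hshift hz), (abs_lt.1 (h1 a hδa)).1, le_abs_self C]
    · intro ε hε
      filter_upwards [hre, hsmall _ (half_pos hε)] with n hn hlt z hz
      rw [hn z (ball_subset_ball hδR hz)]
      linarith [(abs_lt.1 (hlt _ (hshift hz))).2, (abs_lt.1 (hlt a hδa)).1]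
  have hlim := ((continuous_re.tendsto 0).comp hsub).add (hconv.tendsto_at hδa)
  rw [zero_re, add_zero] at hlim
  refine hlim.congr' ?_
  filter_upwards [hre] with n hn
  rw [Function.comp_apply, hn _ (by simpa only [mem_ball_iff_norm, sub_zero] using hq),
    sub_add_cancel, sub_add_cancel]

lemma tendstoUniformlyOn_of_forall_tendsto {u : ι → ℂ → ℝ} {v : ℂ → ℝ} {K : Set ℂ}
    (hK : IsCompact K) (hv : ContinuousOn v K)
    (h : ∀ y ∈ K, Tendsto (fun p : ι × ℂ => u p.1 p.2) (l ×ˢ 𝓝 y) (𝓝 (v y))) :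
    TendstoUniformlyOn u v l K := by
  rw [← tendstoLocallyUniformlyOn_iff_tendstoUniformlyOn_of_compact hK,
    tendstoLocallyUniformlyOn_iff_forall_tendsto]
  intro y hy
  have hle : l ×ˢ 𝓝[K] y ≤ l ×ˢ 𝓝 y := prod_mono le_rfl nhdsWithin_le_nhds
  refine Tendsto.mono_right ?_ (nhds_le_uniformity (v y))
  rw [nhds_prod_eq]
  exact ((hv y hy).tendsto.comp tendsto_snd).prodMk ((h y hy).mono_left hle)

lemma harmonicOnNhd_log_norm_div_sub {g : ℂ → ℂ} {v : ℂ → ℝ} {a : ℂ} {R : ℝ}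
    (hg : DifferentiableOn ℂ g (ball a R)) (hg0 : ∀ z ∈ ball a R, g z ≠ 0)
    (hv : HarmonicOnNhd v (ball a R)) (s : ℝ) :
    HarmonicOnNhd (fun z => Real.log ‖g z‖ / s - v z) (ball a R) := fun z hz => by
  have hlog : HarmonicAt (Real.log ‖g ·‖) z :=
    (hg.analyticAt (isOpen_ball.mem_nhds hz)).harmonicAt_log_norm (hg0 z hz)
  simpa only [Pi.sub_def, Pi.smul_def, smul_eq_mul, inv_mul_eq_div] using
    (hlog.const_smul (c := s⁻¹)).sub (hv z hz)

/-- Without zeros, `log ‖g n‖ / s n - v` would be harmonic and bounded above, so its limit `0` near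
`a` would propagate to `q`. -/
theorem eventually_exists_zero_mem_ball {g : ι → ℂ → ℂ} {s : ι → ℝ} {v : ℂ → ℝ} {a q : ℂ}
    {R C c : ℝ} (hg : ∀ᶠ n in l, DifferentiableOn ℂ (g n) (ball a R))
    (hv : HarmonicOnNhd v (ball a R))
    (hle : ∀ᶠ n in l, ∀ z ∈ ball a R, g n z ≠ 0 → Real.log ‖g n z‖ / s n - v z ≤ C)
    (hconv : ∀ᶠ y in 𝓝 a,
      Tendsto (fun p : ι × ℂ => Real.log ‖g p.1 p.2‖ / s p.1) (l ×ˢ 𝓝 y) (𝓝 (v y)))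
    (hq : q ∈ ball a R) (hc : v q < c) (hlow : ∀ᶠ n in l, c ≤ Real.log ‖g n q‖ / s n) :
    ∀ᶠ n in l, ∃ z ∈ ball a R, g n z = 0 := by
  by_contra hnot
  set l' := l ⊓ 𝓟 {n | ¬ ∃ z ∈ ball a R, g n z = 0}
  have : l'.NeBot := frequently_mem_iff_neBot.1 (not_eventually.1 hnot)
  have hl : l' ≤ l := inf_le_left
  have hne : ∀ᶠ n in l', ∀ z ∈ ball a R, g n z ≠ 0 := by
    filter_upwards [mem_inf_of_right (mem_principal_self _)] with n hn z hz h0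
    exact hn ⟨z, hz, h0⟩
  obtain ⟨d, hd, hball⟩ := Metric.eventually_nhds_iff_ball.1 hconv
  have hR : 0 < R := pos_of_mem_ball hq
  set δ := min (d / 2) (R / 2)
  have hδd : closedBall a δ ⊆ ball a d := closedBall_subset_ball <| by
    linarith [min_le_left (d / 2) (R / 2)]
  have hδR : closedBall a δ ⊆ ball a R := closedBall_subset_ball <| by
    linarith [min_le_right (d / 2) (R / 2)]
  have hunif : TendstoUniformlyOn (fun n z => Real.log ‖g n z‖ / s n) v l' (closedBall a δ) :=
    tendstoUniformlyOn_of_forall_tendsto (isCompact_closedBall a δ)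
      (hv.continuousOn.mono hδR)
      fun y hy => (hball y (hδd hy)).mono_left (prod_mono hl le_rfl)
  have hdiff : TendstoUniformlyOn (fun n z => Real.log ‖g n z‖ / s n - v z) (fun _ => 0) l'
      (ball a δ) := by
    rw [Metric.tendstoUniformlyOn_iff] at hunif ⊢
    refine fun ε hε => (hunif ε hε).mono fun n hn z hz => ?_
    rw [dist_zero_left, ← dist_eq_norm, dist_comm]
    exact hn z (ball_subset_closedBall hz)
  have hlim := tendsto_zero_of_harmonicOnNhd (lt_min (half_pos hd) (half_pos hR))
    (by linarith [min_le_right (d / 2) (R / 2)])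
    (by filter_upwards [hl hg, hne] with n hgn h0
        exact harmonicOnNhd_log_norm_div_sub hgn h0 hv (s n))
    (by filter_upwards [hl hle, hne] with n hn h0 z hz using hn z hz (h0 z hz)) hdiff hq
  have hge : c - v q ≤ 0 := ge_of_tendsto hlim <| by
    filter_upwards [hl hlow] with n hn using by linarith
  linarith

theorem eventually_exists_zero_near {g : ι → ℂ → ℂ} {s : ι → ℝ} {v : ℂ → ℝ} {x : ℂ} {C : ℝ}
    (hg : ∀ᶠ p : ι × ℂ in l ×ˢ 𝓝 x, DifferentiableAt ℂ (g p.1) p.2) (hv : HarmonicAt v x)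
    (hle : ∀ᶠ p : ι × ℂ in l ×ˢ 𝓝 x, g p.1 p.2 ≠ 0 → Real.log ‖g p.1 p.2‖ / s p.1 ≤ C)
    (hconv : ∃ᶠ a in 𝓝 x, ∀ᶠ y in 𝓝 a,
      Tendsto (fun p : ι × ℂ => Real.log ‖g p.1 p.2‖ / s p.1) (l ×ˢ 𝓝 y) (𝓝 (v y)))
    (hlow : ∃ᶠ q in 𝓝 x, ∃ c > v q, ∀ᶠ n in l, c ≤ Real.log ‖g n q‖ / s n) {ε : ℝ} (hε : 0 < ε) :
    ∀ᶠ n in l, ∃ z ∈ ball x ε, g n z = 0 := by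
  have hharm : ∀ᶠ y in 𝓝 x, HarmonicAt v y := (isOpen_setOfPred_harmonicAt v).mem_nhds hv
  have hlocal : ∀ᶠ y in 𝓝 x, HarmonicAt v y ∧ v x - 1 < v y :=
    hharm.and (hv.1.continuousAt.eventually_const_lt (sub_one_lt (v x)))
  obtain ⟨N, hN, V, hV, hNV⟩ := mem_prod_iff.1 (hg.and hle)
  obtain ⟨r, hr, hball⟩ := Metric.eventually_nhds_iff_ball.1
    (hlocal.and (inter_mem hV (ball_mem_nhds x hε)))
  have hquarter : ∀ᶠ y in 𝓝 x, y ∈ ball x (r / 4) := ball_mem_nhds x (by positivity)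
  obtain ⟨a, ha, hax⟩ := (hconv.and_eventually hquarter).exists
  obtain ⟨q, ⟨c, hc, hcq⟩, hqx⟩ := (hlow.and_eventually hquarter).exists
  have hsub : ball a (r / 2) ⊆ ball x r :=
    ball_subset_ball' (by linarith [mem_ball.1 hax])
  have hq : q ∈ ball a (r / 2) := by
    rw [mem_ball] at hax hqx ⊢
    linarith [dist_triangle_right q a x]
  have hzero : ∀ᶠ n in l, ∃ z ∈ ball a (r / 2), g n z = 0 := by
    refine eventually_exists_zero_mem_ball (C := C - (v x - 1)) ?_
      (fun z hz => (hball z (hsub hz)).1.1) ?_ ha hq hc hcq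
    · filter_upwards [hN] with n hn z hz
      exact (hNV (Set.mk_mem_prod hn (hball z (hsub hz)).2.1)).1.differentiableWithinAt
    · filter_upwards [hN] with n hn z hz h0
      linarith [(hNV (Set.mk_mem_prod hn (hball z (hsub hz)).2.1)).2 h0, (hball z (hsub hz)).1.2]
  filter_upwards [hzero] with n ⟨z, hz, h0⟩
  exact ⟨z, (hball z (hsub hz)).2.2, h0⟩

end HarmonicLimits

/-! ### Ties between the growth rates -/

lemma eventually_eq_of_re_le {h : ℂ → ℂ} {x : ℂ} (hh : AnalyticAt ℂ h x)
    (hle : ∀ᶠ y in 𝓝 x, (h y).re ≤ (h x).re) : ∀ᶠ y in 𝓝 x, h y = h x := by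
  refine hh.eventually_constant_or_nhds_le_map_nhds.resolve_right fun hopen => ?_
  have hre : ∀ᶠ w in 𝓝 (h x), w.re ≤ (h x).re := hopen hle
  have hshift : Tendsto (fun t : ℝ => h x + t) (𝓝 0) (𝓝 (h x)) :=
    Continuous.tendsto' (by fun_prop) _ _ (by simp)
  obtain ⟨t, ht, ht0⟩ :=
    (((hshift.mono_left nhdsWithin_le_nhds).eventually hre).and
      (self_mem_nhdsWithin : Set.Ioi (0 : ℝ) ∈ 𝓝[>] 0)).exists
  rw [add_re, ofReal_re] at ht
  exact ht.not_gt (lt_add_of_pos_right _ ht0)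

lemma norm_ofReal_mul_of_nonneg {t : ℝ} (ht : 0 ≤ t) (z : ℂ) : ‖(t : ℂ) * z‖ = t * ‖z‖ := by
  rw [norm_mul, norm_real, Real.norm_of_nonneg ht]

lemma norm_ofReal_mul_lt_one {t : ℝ} (ht : t ∈ Set.Ioc 0 1) {z : ℂ} (hz : ‖z‖ < 1) :
    ‖(t : ℂ) * z‖ < 1 := by
  rw [norm_ofReal_mul_of_nonneg ht.1.le]
  exact (mul_le_of_le_one_left (norm_nonneg z) ht.2).trans_lt hz

lemma exists_mul_le_dilogGrowth {z : ℂ} (hz : ‖z‖ < 1) (hs : z ∈ slitPlane) :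
    ∃ c > 0, ∀ t ∈ Set.Ioc (0 : ℝ) 1, c * t ≤ dilogGrowth (t * z) := by
  have hr : 0 < ‖z‖ := norm_pos_iff.2 (slitPlane_ne_zero hs)
  rcases le_or_gt 0 z.re with hre | hre
  · refine ⟨0.55 * ‖z‖, by positivity, fun t ht => ?_⟩
    have h := le_dilogGrowth_of_re_nonneg (norm_ofReal_mul_lt_one ht hz)
      (by rw [re_ofReal_mul]; exact mul_nonneg ht.1.le hre)
    rw [norm_ofReal_mul_of_nonneg ht.1.le] at h
    linarith
  set C := -z.re / ‖z‖ with hC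
  have hC0 : 0 ≤ C := div_nonneg (neg_nonneg.2 hre.le) hr.le
  have hC1 : C < 1 := by
    have him : 0 < z.im ^ 2 := sq_pos_of_ne_zero (hs.resolve_left hre.not_gt)
    rw [hC, div_lt_one hr]
    nlinarith [sq_norm_sub_sq_re z]
  refine ⟨(1 - C) / 4 / (1 + C / 2 + 1 / 9) * ‖z‖, ?_, fun t ht => ?_⟩
  · have : 0 < 1 - C := sub_pos.2 hC1
    positivity
  have h := le_dilogGrowth_of_re_nonpos (norm_ofReal_mul_lt_one ht hz)
    (by rw [re_ofReal_mul]; exact mul_nonpos_of_nonneg_of_nonpos ht.1.le hre.le)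
    (C := C) (D := (1 - C) / 4) hC0 (by linarith)
    (by rw [re_ofReal_mul, norm_ofReal_mul_of_nonneg ht.1.le, hC]
        exact le_of_eq (by field_simp)) (by nlinarith)
  rw [norm_ofReal_mul_of_nonneg ht.1.le] at h
  calc (1 - C) / 4 / (1 + C / 2 + 1 / 9) * ‖z‖ * t
      = (1 - C) / 4 / (1 + C / 2 + 1 / 9) * (t * ‖z‖) := by ring
    _ ≤ dilogGrowth (t * z) := h

section Ties

variable {i j k : ℕ} {p x : ℂ}

lemma index_ne_zero_of_fk_pos (h : 0 < fk k x) : k ≠ 0 := by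
  rintro rfl
  exact h.ne' (fk_index_zero x)

lemma analyticAt_sqrtDilog (hx : ‖x‖ < 1) (h : 0 < fk k x) : AnalyticAt ℂ (sqrtDilog k) x := by
  have hk := index_ne_zero_of_fk_pos h
  have hslit : ∀ᶠ y in 𝓝 x, y ^ k ∈ slitPlane := (continuous_pow k).continuousAt.eventually
    (isOpen_slitPlane.mem_nhds (pow_mem_slitPlane_of_fk_pos hk hx h))
  rw [analyticAt_iff_eventually_differentiableAt]
  filter_upwards [hslit, eventually_norm_lt_one hx] with y hy hy1
    using differentiableAt_sqrtDilog hk hy1 hy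

lemma harmonicAt_fk (hx : ‖x‖ < 1) (h : 0 < fk k x) : InnerProductSpace.HarmonicAt (fk k) x := by
  simpa only [sqrtDilog_re] using (analyticAt_sqrtDilog hx h).harmonicAt_re

lemma exists_mul_pow_le_fk_sq (hp : ‖p‖ < 1) (h : 0 < fk k p) :
    ∃ c > 0, ∀ t ∈ Set.Ioc (0 : ℝ) 1, c * t ^ k ≤ fk k (t * p) ^ 2 := by
  have hk := index_ne_zero_of_fk_pos h
  obtain ⟨c, hc, hle⟩ := exists_mul_le_dilogGrowth (norm_pow_lt_one hp hk)
    (pow_mem_slitPlane_of_fk_pos hk hp h)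
  refine ⟨c / (2 * k ^ 2), by positivity, fun t ht => ?_⟩
  have hpow := hle (t ^ k) ⟨pow_pos ht.1 k, pow_le_one₀ ht.1.le ht.2⟩
  rw [ofReal_pow, ← mul_pow] at hpow
  rw [fk_sq, div_mul_eq_mul_div]
  gcongr

lemma fk_ofReal_mul_pos (hp : ‖p‖ < 1) (hk : 0 < fk k p) {t : ℝ} (ht : t ∈ Set.Ioc 0 1) :
    0 < fk k (t * p) := by
  obtain ⟨c, hc, hle⟩ := exists_mul_pow_le_fk_sq hp hk
  have hsq : 0 < fk k (t * p) ^ 2 := (mul_pos hc (pow_pos ht.1 k)).trans_le (hle t ht)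
  exact (fk_nonneg k _).lt_of_ne' (sq_pos_iff.1 hsq)

/-- By the identity theorem a local tie persists along the segment towards the origin. -/
lemma fk_ofReal_mul_eq_of_eventually_eq (hp : ‖p‖ < 1) (hi : 0 < fk i p) (hj : 0 < fk j p)
    (h : ∀ᶠ y in 𝓝 p, fk i y = fk j y) {t : ℝ} (ht : t ∈ Set.Ioc 0 1) :
    fk i (t * p) = fk j (t * p) := by
  set U : Set ℂ := (fun t : ℝ => (t : ℂ) * p) '' Set.Ioc 0 1
  have hU : IsPreconnected U := isPreconnected_Ioc.image _ (by fun_prop)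
  have hpU : p ∈ U := ⟨1, ⟨one_pos, le_rfl⟩, by simp⟩
  have hanalytic : AnalyticOnNhd ℂ (fun y => sqrtDilog i y - sqrtDilog j y) U := by
    rintro _ ⟨s, hs, rfl⟩
    have hsp := norm_ofReal_mul_lt_one hs hp
    exact (analyticAt_sqrtDilog hsp (fk_ofReal_mul_pos hp hi hs)).sub
      (analyticAt_sqrtDilog hsp (fk_ofReal_mul_pos hp hj hs))
  have hre : ∀ y, (sqrtDilog i y - sqrtDilog j y).re = fk i y - fk j y := fun y => by
    rw [sub_re, sqrtDilog_re, sqrtDilog_re]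
  have hconst := eventually_eq_of_re_le (hanalytic p hpU) <| by
    filter_upwards [h] with y hy
    rw [hre, hre, hy, h.self_of_nhds, sub_self, sub_self]
  have heq := hanalytic.eqOn_of_preconnected_of_eventuallyEq analyticOnNhd_const hU hpU hconst
    ⟨t, ht, rfl⟩
  have := congrArg re heq
  simp only [hre] at this
  linarith [h.self_of_nhds]

lemma fk_ofReal_mul_sq_le (hp : ‖p‖ < 1) (hij : i < j) {t : ℝ} (ht : t ∈ Set.Ioc 0 1) :
    fk j (t * p) ^ 2 ≤ 1.645 * t ^ (i + 1) := by
  have hnorm : ‖(t : ℂ) * p‖ ≤ t := by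
    rw [norm_ofReal_mul_of_nonneg ht.1.le]
    exact mul_le_of_le_one_right ht.1.le hp.le
  calc fk j (t * p) ^ 2 ≤ 1.645 * ‖(t : ℂ) * p‖ ^ (i + 1) / ((i + 1 : ℕ) : ℝ) ^ 2 :=
        fk_sq_le (norm_ofReal_mul_lt_one ht hp) i.succ_ne_zero hij
    _ ≤ 1.645 * ‖(t : ℂ) * p‖ ^ (i + 1) :=
        div_le_self (by positivity) (one_le_pow₀ (by norm_cast; omega))
    _ ≤ 1.645 * t ^ (i + 1) := by gcongr

/-- Near the origin `fk i` and `fk j` decay like different powers, so a local tie cannot persist. -/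
lemma frequently_fk_ne_of_lt (hij : i < j) (hp : ‖p‖ < 1) (hi : 0 < fk i p) (hj : 0 < fk j p) :
    ∃ᶠ y in 𝓝 p, fk i y ≠ fk j y := by
  intro h
  simp only [not_not] at h
  obtain ⟨c, hc, hle⟩ := exists_mul_pow_le_fk_sq hp hi
  have hlinear : ∀ t ∈ Set.Ioc (0 : ℝ) 1, c ≤ 1.645 * t := fun t ht => by
    have hsq := (hle t ht).trans_eq
      (congrArg (· ^ 2) (fk_ofReal_mul_eq_of_eventually_eq hp hi hj h ht))
    refine le_of_mul_le_mul_right ?_ (pow_pos ht.1 i)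
    calc c * t ^ i ≤ 1.645 * t ^ (i + 1) := hsq.trans (fk_ofReal_mul_sq_le hp hij ht)
      _ = 1.645 * t * t ^ i := by ring
  have ht := hlinear (c / (c + 2)) ⟨by positivity, div_le_one_of_le₀ (by linarith) (by positivity)⟩
  rw [← mul_div_assoc, le_div_iff₀ (by positivity)] at ht
  nlinarith

lemma frequently_fk_ne (hij : i ≠ j) (hp : ‖p‖ < 1) (hi : 0 < fk i p) (hj : 0 < fk j p) :
    ∃ᶠ y in 𝓝 p, fk i y ≠ fk j y := by
  rcases hij.lt_or_gt with hlt | hlt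
  · exact frequently_fk_ne_of_lt hlt hp hi hj
  · exact (frequently_fk_ne_of_lt hlt hp hj hi).mono fun y => Ne.symm

end Ties

/-! ### The regions of dominance -/

section Dominance

variable {i j k : ℕ} {x : ℂ}

/-- The points of the unit disk where `fk k` attains the maximal growth; for `k = 1, 2, 3` these
are the regions `R1`, `R2`, `R3`. -/
def growthRegion (k : ℕ) : Set ℂ := {x | ‖x‖ < 1 ∧ fk k x = maxGrowth x}

lemma R1_eq_growthRegion : R1 = growthRegion 1 := by
  ext x
  rw [R1, growthRegion, Set.mem_ofPred_eq, Set.mem_ofPred_eq, maxGrowth, eq_comm, max_eq_left_iff,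
    max_le_iff]

lemma R2_eq_growthRegion : R2 = growthRegion 2 := by
  ext x
  rw [R2, growthRegion, Set.mem_ofPred_eq, Set.mem_ofPred_eq, maxGrowth, max_left_comm, eq_comm,
    max_eq_left_iff, max_le_iff]

lemma R3_eq_growthRegion : R3 = growthRegion 3 := by
  ext x
  rw [R3, growthRegion, Set.mem_ofPred_eq, Set.mem_ofPred_eq, maxGrowth, ← max_assoc, eq_comm,
    max_eq_right_iff, max_le_iff]

lemma mem_frontier_regions_iff : x ∈ frontier R1 ∪ frontier R2 ∪ frontier R3 ↔
    ∃ k ∈ Finset.Icc 1 3, x ∈ frontier (growthRegion k) := by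
  have hIcc : Finset.Icc 1 3 = {1, 2, 3} := rfl
  simp [hIcc, R1_eq_growthRegion, R2_eq_growthRegion, R3_eq_growthRegion, or_assoc]

lemma IsDominantIndex.fk_eq_maxGrowth (hx : ‖x‖ < 1) (h : IsDominantIndex k x) :
    fk k x = maxGrowth x := by
  obtain ⟨j, -, -, hj⟩ := exists_fk_eq_maxGrowth x
  rcases eq_or_ne j k with rfl | hjk
  · exact hj
  · exact absurd (h j hjk) (hj ▸ (fk_le_maxGrowth hx k).not_gt)

lemma IsDominantIndex.point_ne_zero (h : IsDominantIndex k x) : x ≠ 0 := by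
  rintro rfl
  exact h.fk_pos.ne' (fk_apply_zero k)

lemma eventually_fk_lt_maxGrowth (hx : ‖x‖ < 1) (h : fk k x ≠ maxGrowth x) :
    ∀ᶠ y in 𝓝 x, fk k y < maxGrowth y :=
  (continuousAt_fk k hx).eventually_lt (continuousAt_maxGrowth hx)
    ((fk_le_maxGrowth hx k).lt_of_ne h)

/-- Both `fk i` and `fk j` attain the maximal growth at `x`. -/
def IsTie (i j : ℕ) (x : ℂ) : Prop := fk i x = maxGrowth x ∧ fk j x = maxGrowth x

lemma mem_Icc_of_fk_eq_maxGrowth (hx : ‖x‖ < 1) (hx0 : x ≠ 0) (h : fk k x = maxGrowth x) :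
    k ∈ Finset.Icc 1 3 := by
  have hk0 : k ≠ 0 := index_ne_zero_of_fk_pos (h ▸ maxGrowth_pos hx hx0)
  have hk4 : ¬ 4 ≤ k := fun hk => (fk_lt_maxGrowth hx hx0 hk).ne h
  exact Finset.mem_Icc.2 ⟨by omega, by omega⟩

lemma exists_isDominantIndex_of_not_isTie (hx : ‖x‖ < 1)
    (h : ∀ i ∈ Finset.Icc 1 3, ∀ j ∈ Finset.Icc 1 3, i ≠ j → ¬ IsTie i j x) :
    ∃ k, IsDominantIndex k x := by
  have hx0 : x ≠ 0 := by
    rintro rfl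
    refine h 1 (by decide) 2 (by decide) (by decide) ?_
    simp [IsTie, maxGrowth, fk_apply_zero]
  obtain ⟨k, -, -, hk⟩ := exists_fk_eq_maxGrowth x
  refine ⟨k, fun j hjk => hk ▸ (fk_le_maxGrowth hx j).lt_of_ne fun hj => ?_⟩
  exact h j (mem_Icc_of_fk_eq_maxGrowth hx hx0 hj) k (mem_Icc_of_fk_eq_maxGrowth hx hx0 hk) hjk
    ⟨hj, hk⟩

lemma IsDominantIndex.eventually (hx : ‖x‖ < 1) (h : IsDominantIndex k x) :
    ∀ᶠ y in 𝓝 x, IsDominantIndex k y := by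
  have hlt : ∀ᶠ y in 𝓝 x, ∀ j ∈ Finset.range 4, j ≠ k → fk j y < fk k y := by
    refine (eventually_all_finset _).2 fun j _ => ?_
    rcases eq_or_ne j k with rfl | hjk
    · exact .of_forall fun y hy => absurd rfl hy
    · filter_upwards [(continuousAt_fk j hx).eventually_lt (continuousAt_fk k hx) (h j hjk)]
        with y hy _ using hy
  filter_upwards [hlt, eventually_norm_lt_one hx, isOpen_ne.mem_nhds h.point_ne_zero]
    with y hy hy1 hy0 j hjk
  obtain ⟨m, -, hm, hmax⟩ := exists_fk_eq_maxGrowth y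
  have hk : fk k y = maxGrowth y := by
    rcases eq_or_ne m k with rfl | hmk
    · exact hmax
    · have hlt := hy m (Finset.mem_range.2 (by omega)) hmk
      exact absurd (hmax ▸ hlt) (fk_le_maxGrowth hy1 k).not_gt
  rcases lt_or_ge j 4 with hj | hj
  · exact hy j (Finset.mem_range.2 hj) hjk
  · exact hk ▸ fk_lt_maxGrowth hy1 hy0 hj

lemma eventually_not_isTie (hx : ‖x‖ < 1) (h : ¬ IsTie i j x) : ∀ᶠ y in 𝓝 x, ¬ IsTie i j y := by
  rcases not_and_or.1 h with hi | hj
  · exact (eventually_fk_lt_maxGrowth hx hi).mono fun y hy htie => hy.ne htie.1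
  · exact (eventually_fk_lt_maxGrowth hx hj).mono fun y hy htie => hy.ne htie.2

lemma frequently_not_isTie (hij : i ≠ j) (hx : ‖x‖ < 1) : ∃ᶠ y in 𝓝 x, ¬ IsTie i j y := by
  intro h
  simp only [not_not] at h
  have hne : ∃ᶠ y in 𝓝 x, y ≠ 0 :=
    mem_closure_iff_frequently.1 (dense_compl_singleton (0 : ℂ) x)
  obtain ⟨p, hp0, hp, hp1⟩ :=
    (hne.and_eventually (h.eventually_nhds.and (eventually_norm_lt_one hx))).exists
  obtain ⟨hi, hj⟩ := hp.self_of_nhds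
  have hpos := maxGrowth_pos hp1 hp0
  refine frequently_fk_ne hij hp1 (hi ▸ hpos) (hj ▸ hpos) (hp.mono fun y hy => ?_)
  exact not_not.2 (hy.1.trans hy.2.symm)

lemma frequently_forall_mem_finset {X κ : Type*} [TopologicalSpace X] {U : Set X} (hU : IsOpen U)
    {p : κ → X → Prop} (hopen : ∀ a, ∀ x ∈ U, p a x → ∀ᶠ y in 𝓝 x, p a y)
    (hfreq : ∀ a, ∀ x ∈ U, ∃ᶠ y in 𝓝 x, p a y) (s : Finset κ) :
    ∀ x ∈ U, ∃ᶠ y in 𝓝 x, ∀ a ∈ s, p a y := by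
  classical
  induction s using Finset.induction_on with
  | empty => exact fun x _ => .of_forall fun y a ha => absurd ha (Finset.notMem_empty a)
  | insert b s _ ih =>
    intro x hx
    rw [← frequently_frequently_nhds]
    refine ((hfreq b x hx).and_eventually (hU.mem_nhds hx)).mono fun y ⟨hy, hyU⟩ => ?_
    refine ((ih y hyU).and_eventually (hopen b y hyU hy)).mono fun z ⟨hzs, hzb⟩ => ?_
    simpa only [Finset.forall_mem_insert] using ⟨hzb, hzs⟩

theorem frequently_exists_isDominantIndex (hx : ‖x‖ < 1) :
    ∃ᶠ y in 𝓝 x, ∃ k, IsDominantIndex k y := by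
  have hball : ∀ y ∈ Metric.ball (0 : ℂ) 1, ‖y‖ < 1 := fun y => mem_ball_zero_iff.1
  have hno_tie := frequently_forall_mem_finset (U := Metric.ball (0 : ℂ) 1) Metric.isOpen_ball
    (p := fun (a : ℕ × ℕ) y => a.1 ≠ a.2 → ¬ IsTie a.1 a.2 y)
    (fun a y hy h => by
      by_cases ha : a.1 = a.2
      · exact .of_forall fun z hne => absurd ha hne
      · exact (eventually_not_isTie (hball y hy) (h ha)).mono fun z hz _ => hz)
    (fun a y hy => by
      by_cases ha : a.1 = a.2
      · exact .of_forall fun z hne => absurd ha hne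
      · exact (frequently_not_isTie ha (hball y hy)).mono fun z hz _ => hz)
    (Finset.Icc 1 3 ×ˢ Finset.Icc 1 3) x (mem_ball_zero_iff.2 hx)
  refine (hno_tie.and_eventually (eventually_norm_lt_one hx)).mono fun y ⟨hy, hy1⟩ => ?_
  exact exists_isDominantIndex_of_not_isTie hy1 fun i hi j hj =>
    hy (i, j) (Finset.mk_mem_product hi hj)

lemma fk_eq_maxGrowth_of_mem_frontier (hx : ‖x‖ < 1) (h : x ∈ frontier (growthRegion k)) :
    fk k x = maxGrowth x := by
  by_contra hne
  obtain ⟨y, hy, hlt⟩ := ((mem_closure_iff_frequently.1 h.1).and_eventually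
    (eventually_fk_lt_maxGrowth hx hne)).exists
  exact hlt.ne hy.2

lemma mem_frontier_growthRegion_iff (hx : ‖x‖ < 1) (h : fk k x = maxGrowth x) :
    x ∈ frontier (growthRegion k) ↔ ¬ ∀ᶠ y in 𝓝 x, fk k y = maxGrowth y := by
  have hcl : x ∈ closure (growthRegion k) := subset_closure ⟨hx, h⟩
  rw [frontier, Set.mem_sdiff, and_iff_right hcl, mem_interior_iff_mem_nhds, not_iff_not]
  exact ⟨fun hev => mem_of_superset hev fun y => And.right,
    fun hev => (eventually_norm_lt_one hx).and hev⟩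

lemma not_isTie_of_notMem_frontier (hij : i ≠ j) (hx : ‖x‖ < 1)
    (hi : x ∉ frontier (growthRegion i)) (hj : x ∉ frontier (growthRegion j)) :
    ¬ IsTie i j x := fun ⟨hxi, hxj⟩ => by
  rw [mem_frontier_growthRegion_iff hx hxi, not_not] at hi
  rw [mem_frontier_growthRegion_iff hx hxj, not_not] at hj
  exact frequently_not_isTie hij hx ((hi.and hj).mono fun y => not_not.2)

theorem exists_isDominantIndex_of_notMem_frontier (hx : ‖x‖ < 1)
    (h : ∀ k ∈ Finset.Icc 1 3, x ∉ frontier (growthRegion k)) : ∃ k, IsDominantIndex k x :=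
  exists_isDominantIndex_of_not_isTie hx fun i hi j hj hij =>
    not_isTie_of_notMem_frontier hij hx (h i hi) (h j hj)

lemma eventually_fk_eq_maxGrowth_of_eventually (hx : ‖x‖ < 1) (hx0 : x ≠ 0)
    (hi : ∀ᶠ y in 𝓝 x, fk i y = maxGrowth y) (hj : fk j x = maxGrowth x) :
    ∀ᶠ y in 𝓝 x, fk j y = maxGrowth y := by
  have hpos := maxGrowth_pos hx hx0
  have hre : ∀ y, (sqrtDilog j y - sqrtDilog i y).re = fk j y - fk i y := fun y => by
    rw [sub_re, sqrtDilog_re, sqrtDilog_re]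
  have hconst := eventually_eq_of_re_le ((analyticAt_sqrtDilog hx (hj ▸ hpos)).sub
    (analyticAt_sqrtDilog hx (hi.self_of_nhds ▸ hpos))) <| by
    filter_upwards [hi, eventually_norm_lt_one hx] with y hy hy1
    simp only [Pi.sub_apply, hre, hy, hj, hi.self_of_nhds]
    linarith [fk_le_maxGrowth hy1 j]
  filter_upwards [hconst, hi] with y hy hiy
  have := congrArg re hy
  simp only [Pi.sub_apply, hre, hj, hi.self_of_nhds, hiy] at this
  linarith

lemma exists_frequently_isDominantIndex {p : ℕ → Prop} (hx : ‖x‖ < 1)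
    (h : ∃ᶠ y in 𝓝 x, ∃ k, p k ∧ IsDominantIndex k y) :
    ∃ k, p k ∧ ∃ᶠ y in 𝓝 x, IsDominantIndex k y := by
  by_contra! hnot
  have hfin : ∀ᶠ y in 𝓝 x, ∀ k ∈ Finset.range 4, p k → ¬ IsDominantIndex k y :=
    (eventually_all_finset _).2 fun k _ =>
      eventually_imp_distrib_left.2 fun hk => hnot k hk
  obtain ⟨y, ⟨k, hk, hdom⟩, hy, hy1⟩ :=
    (h.and_eventually (hfin.and (eventually_norm_lt_one hx))).exists
  exact hy k (Finset.mem_range.2 (by have := hdom.le_three hy1; omega)) hk hdom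

theorem exists_frequently_isDominantIndex_ne (hx : ‖x‖ < 1) (hx0 : x ≠ 0)
    (h : x ∈ frontier (growthRegion k)) : ∃ i j, i ≠ j ∧
      (∃ᶠ y in 𝓝 x, IsDominantIndex i y) ∧ ∃ᶠ y in 𝓝 x, IsDominantIndex j y := by
  have hk := fk_eq_maxGrowth_of_mem_frontier hx h
  rw [mem_frontier_growthRegion_iff hx hk] at h
  obtain ⟨i, -, hi⟩ := exists_frequently_isDominantIndex (p := fun _ => True) hx
    ((frequently_exists_isDominantIndex hx).mono fun y ⟨i, hy⟩ => ⟨i, trivial, hy⟩)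
  have hlt : ∃ᶠ y in 𝓝 x, fk i y ≠ maxGrowth y := fun hev =>
    h (eventually_fk_eq_maxGrowth_of_eventually hx hx0 (hev.mono fun y => not_not.1) hk)
  have hne : ∃ᶠ y in 𝓝 x, ∃ j, i ≠ j ∧ IsDominantIndex j y := by
    rw [← frequently_frequently_nhds]
    refine (hlt.and_eventually (eventually_norm_lt_one hx)).mono fun y ⟨hy, hy1⟩ => ?_
    refine ((frequently_exists_isDominantIndex hy1).and_eventually
      ((eventually_fk_lt_maxGrowth hy1 hy).and (eventually_norm_lt_one hy1))).mono ?_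
    rintro z ⟨⟨j, hj⟩, hz, hz1⟩
    refine ⟨j, ?_, hj⟩
    rintro rfl
    exact hz.ne (hj.fk_eq_maxGrowth hz1)
  obtain ⟨j, hij, hj⟩ := exists_frequently_isDominantIndex hx hne
  exact ⟨i, j, hij, hi, hj⟩

lemma fk_eq_maxGrowth_of_frequently (hx : ‖x‖ < 1) (h : ∃ᶠ y in 𝓝 x, IsDominantIndex k y) :
    fk k x = maxGrowth x := by
  by_contra hne
  obtain ⟨y, hy, hlt, hy1⟩ := (h.and_eventually
    ((eventually_fk_lt_maxGrowth hx hne).and (eventually_norm_lt_one hx))).exists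
  exact hlt.ne (hy.fk_eq_maxGrowth hy1)

end Dominance

/-! ### Zeros near the attractor -/

section ZerosNearAttractor

variable {k : ℕ} {x : ℂ} {ε : ℝ}

lemma differentiable_F (n : ℕ) : Differentiable ℂ (F n) := by
  unfold F
  fun_prop

lemma F_apply_zero (n : ℕ) : F n 0 = 0 :=
  Finset.sum_eq_zero fun k hk => by
    rw [zero_pow (Nat.one_le_iff_ne_zero.1 (Finset.mem_Icc.1 hk).1), mul_zero]

lemma eventually_two_mul_sqrt_natCast_pos : ∀ᶠ n : ℕ in atTop, 0 < 2 * √(n : ℝ) := by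
  filter_upwards [eventually_gt_atTop 0] with n hn
  positivity

lemma eventually_log_norm_F_div_sqrt_le (hx : ‖x‖ < 1) (hε : 0 < ε) :
    ∀ᶠ p : ℕ × ℂ in atTop ×ˢ 𝓝 x,
      Real.log ‖F p.1 p.2‖ / (2 * √(p.1 : ℝ)) ≤ maxGrowth x + ε := by
  filter_upwards [eventually_norm_F_le hx hε,
    tendsto_fst.eventually eventually_two_mul_sqrt_natCast_pos] with p hle hpos
  rcases eq_or_ne (F p.1 p.2) 0 with h0 | h0
  · rw [h0, norm_zero, Real.log_zero, zero_div]
    linarith [maxGrowth_nonneg x]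
  · rw [div_le_iff₀' hpos]
    exact (Real.log_le_iff_le_exp (norm_pos_iff.2 h0)).2 hle

lemma eventually_le_log_norm_F_div_sqrt (hx : ‖x‖ < 1) (h : IsDominantIndex k x) (hε : 0 < ε) :
    ∀ᶠ p : ℕ × ℂ in atTop ×ˢ 𝓝 x,
      fk k x - ε ≤ Real.log ‖F p.1 p.2‖ / (2 * √(p.1 : ℝ)) := by
  filter_upwards [eventually_le_norm_F hx h hε,
    tendsto_fst.eventually eventually_two_mul_sqrt_natCast_pos] with p hle hpos
  rw [le_div_iff₀' hpos]
  exact (Real.le_log_iff_exp_le ((Real.exp_pos _).trans_le hle)).2 hle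

theorem tendsto_log_norm_F_div_sqrt (hx : ‖x‖ < 1) (h : IsDominantIndex k x) :
    Tendsto (fun p : ℕ × ℂ => Real.log ‖F p.1 p.2‖ / (2 * √(p.1 : ℝ))) (atTop ×ˢ 𝓝 x)
      (𝓝 (fk k x)) := by
  refine tendsto_order.2 ⟨fun a ha => ?_, fun b hb => ?_⟩
  · filter_upwards [eventually_le_log_norm_F_div_sqrt hx h (half_pos (sub_pos.2 ha))] with p hp
    linarith
  · filter_upwards [eventually_log_norm_F_div_sqrt_le hx (half_pos (sub_pos.2 hb))] with p hp
    linarith [h.fk_eq_maxGrowth hx]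

theorem eventually_exists_F_zero_near_frontier (hx : ‖x‖ < 1)
    (h : x ∈ frontier (growthRegion k)) (hε : 0 < ε) :
    ∀ᶠ n in atTop, ∃ z ∈ Metric.ball x ε, F n z = 0 := by
  rcases eq_or_ne x 0 with rfl | hx0
  · exact .of_forall fun n => ⟨0, Metric.mem_ball_self hε, F_apply_zero n⟩
  obtain ⟨i, j, hij, hi, hj⟩ := exists_frequently_isDominantIndex_ne hx hx0 h
  have hi_pos : 0 < fk i x := fk_eq_maxGrowth_of_frequently hx hi ▸ maxGrowth_pos hx hx0
  refine eventually_exists_zero_near (s := fun n : ℕ => 2 * √(n : ℝ)) (v := fk i)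
    (C := maxGrowth x + 1) (.of_forall fun p => differentiable_F p.1 p.2) (harmonicAt_fk hx hi_pos)
    ((eventually_log_norm_F_div_sqrt_le hx one_pos).mono fun p hp _ => hp) ?_ ?_ hε
  · refine (hi.and_eventually (eventually_norm_lt_one hx)).mono fun a ⟨ha, ha1⟩ => ?_
    filter_upwards [ha.eventually ha1, eventually_norm_lt_one ha1] with y hy hy1
    exact tendsto_log_norm_F_div_sqrt hy1 hy
  · refine (hj.and_eventually (eventually_norm_lt_one hx)).mono fun q ⟨hq, hq1⟩ => ?_
    obtain ⟨c, hic, hcj⟩ := exists_between (hq i hij)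
    have hlim := tendsto_log_norm_F_div_sqrt hq1 hq
    exact ⟨c, hic, (hlim.eventually_const_le hcj).curry.mono fun n hn => hn.self_of_nhds⟩

theorem tendsto_log_norm_F_div_natCast (hx : 1 < ‖x‖) :
    Tendsto (fun p : ℕ × ℂ => Real.log ‖F p.1 p.2‖ / p.1) (atTop ×ˢ 𝓝 x)
      (𝓝 (Real.log ‖x‖)) := by
  obtain ⟨c, hc, hlim⟩ := exists_tendsto_F_div_pow hx
  have hx0 : x ≠ 0 := norm_pos_iff.1 (one_pos.trans hx)
  have hquot : Tendsto (fun p : ℕ × ℂ => Real.log ‖F p.1 p.2 / p.2 ^ p.1‖ / p.1) (atTop ×ˢ 𝓝 x)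
      (𝓝 0) :=
    (hlim.norm.log (norm_ne_zero_iff.2 hc)).div_atTop
      (tendsto_natCast_atTop_atTop.comp tendsto_fst)
  have hlog : Tendsto (fun p : ℕ × ℂ => Real.log ‖p.2‖) (atTop ×ˢ 𝓝 x) (𝓝 (Real.log ‖x‖)) :=
    tendsto_snd.norm.log (norm_ne_zero_iff.2 hx0)
  have hsum := hquot.add hlog
  rw [zero_add] at hsum
  refine hsum.congr' ?_
  filter_upwards [hlim.eventually_ne hc, tendsto_snd.eventually_ne hx0,
    tendsto_fst.eventually (eventually_ne_atTop 0)] with p hF hp hn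
  have hF0 : F p.1 p.2 ≠ 0 := fun h => hF (by rw [h, zero_div])
  have hn' : (p.1 : ℝ) ≠ 0 := Nat.cast_ne_zero.2 hn
  rw [norm_div, norm_pow, Real.log_div (norm_ne_zero_iff.2 hF0)
    (pow_ne_zero _ (norm_ne_zero_iff.2 hp)), Real.log_pow]
  field_simp
  ring

lemma exists_log_norm_F_div_natCast_le {r : ℝ} (hr : 1 < r) :
    ∃ C, ∀ᶠ n : ℕ in atTop, ∀ x, ‖x‖ ≤ r → F n x ≠ 0 → Real.log ‖F n x‖ / n ≤ C := by
  obtain ⟨C, hC, hle⟩ := exists_norm_F_le_mul_pow hr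
  refine ⟨|Real.log C| + Real.log r, ?_⟩
  filter_upwards [hle, eventually_gt_atTop 0] with n hn hn0 x hx hF
  have hn1 : (1 : ℝ) ≤ n := Nat.one_le_cast.2 hn0
  rw [div_le_iff₀ (by positivity)]
  calc Real.log ‖F n x‖ ≤ Real.log (C * r ^ n) :=
        Real.log_le_log (norm_pos_iff.2 hF) (hn x hx)
    _ = Real.log C + n * Real.log r := by
        rw [Real.log_mul hC.ne' (by positivity), Real.log_pow]
    _ ≤ |Real.log C| * n + n * Real.log r := by
        gcongr
        exact (le_abs_self _).trans (le_mul_of_one_le_right (abs_nonneg _) hn1)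
    _ = (|Real.log C| + Real.log r) * n := by ring

lemma frequently_norm_lt_one (hx : ‖x‖ = 1) : ∃ᶠ y in 𝓝 x, ‖y‖ < 1 := by
  have hcl : x ∈ closure (Metric.ball (0 : ℂ) 1) := by
    rw [closure_ball _ one_ne_zero, mem_closedBall_zero_iff]
    exact hx.le
  exact (mem_closure_iff_frequently.1 hcl).mono fun y => mem_ball_zero_iff.1

lemma frequently_one_lt_norm (hx : ‖x‖ = 1) : ∃ᶠ y in 𝓝 x, 1 < ‖y‖ := by
  have hcl : x ∈ closure (Metric.closedBall (0 : ℂ) 1)ᶜ := by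
    rw [closure_compl, interior_closedBall _ one_ne_zero, Set.mem_compl_iff, mem_ball_zero_iff]
    exact hx.not_lt
  refine (mem_closure_iff_frequently.1 hcl).mono fun y hy => ?_
  simpa only [Set.mem_compl_iff, mem_closedBall_zero_iff, not_le] using hy

lemma eventually_log_norm_F_div_natCast_nonneg (hx : ‖x‖ < 1) (h : IsDominantIndex k x) :
    ∀ᶠ n : ℕ in atTop, 0 ≤ Real.log ‖F n x‖ / n := by
  refine (eventually_le_norm_F hx h h.fk_pos).curry.mono fun n hn => ?_
  have hone := hn.self_of_nhds
  rw [sub_self, mul_zero, Real.exp_zero] at hone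
  exact div_nonneg (Real.log_nonneg hone) n.cast_nonneg

theorem eventually_exists_F_zero_near_circle (hx : ‖x‖ = 1) (hε : 0 < ε) :
    ∀ᶠ n in atTop, ∃ z ∈ Metric.ball x ε, F n z = 0 := by
  obtain ⟨C, hC⟩ := exists_log_norm_F_div_natCast_le one_lt_two
  have hx0 : x ≠ 0 := norm_ne_zero_iff.1 (hx.trans_ne one_ne_zero)
  have hnear : ∀ᶠ y in 𝓝 x, ‖y‖ < 2 :=
    continuous_norm.continuousAt.eventually_lt_const (hx.trans_lt one_lt_two)
  refine eventually_exists_zero_near (s := fun n : ℕ => (n : ℝ)) (v := fun z => Real.log ‖z‖)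
    (C := C) (.of_forall fun p => differentiable_F p.1 p.2) (analyticAt_id.harmonicAt_log_norm hx0)
    ?_ ?_ ?_ hε
  · filter_upwards [tendsto_fst.eventually hC, tendsto_snd.eventually hnear] with p hp hp2
      using hp p.2 hp2.le
  · refine (frequently_one_lt_norm hx).mono fun a ha => ?_
    filter_upwards [continuous_norm.continuousAt.eventually_const_lt ha] with y hy
      using tendsto_log_norm_F_div_natCast hy
  · rw [← frequently_frequently_nhds]
    refine (frequently_norm_lt_one hx).mono fun y hy => ?_
    refine ((frequently_exists_isDominantIndex hy).and_eventually (eventually_norm_lt_one hy)).mono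
      fun q ⟨⟨k, hk⟩, hq⟩ => ⟨0, ?_, eventually_log_norm_F_div_natCast_nonneg hq hk⟩
    exact Real.log_neg (norm_pos_iff.2 hk.point_ne_zero) hq

end ZerosNearAttractor

/-! ### Zero-free regions and Hausdorff convergence -/

lemma eventually_forall_mem_of_isCompact {ι X : Type*} [TopologicalSpace X] {l : Filter ι}
    {K : Set X} (hK : IsCompact K) {p : ι × X → Prop} (h : ∀ x ∈ K, ∀ᶠ z in l ×ˢ 𝓝 x, p z) :
    ∀ᶠ n in l, ∀ x ∈ K, p (n, x) :=
  (Eventually.curry (hK.mem_prod_nhdsSet_of_forall h)).mono fun _ hn => hn.self_of_nhdsSet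

lemma eventually_F_ne_zero_of_isDominantIndex {k : ℕ} {x : ℂ} (hx : ‖x‖ < 1)
    (h : IsDominantIndex k x) : ∀ᶠ p : ℕ × ℂ in atTop ×ˢ 𝓝 x, F p.1 p.2 ≠ 0 :=
  (eventually_le_norm_F hx h one_pos).mono fun _ hp =>
    norm_pos_iff.1 ((Real.exp_pos _).trans_le hp)

lemma eventually_F_ne_zero_of_one_lt_norm {x : ℂ} (hx : 1 < ‖x‖) :
    ∀ᶠ p : ℕ × ℂ in atTop ×ˢ 𝓝 x, F p.1 p.2 ≠ 0 := by
  obtain ⟨c, hc, hlim⟩ := exists_tendsto_F_div_pow hx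
  exact (hlim.eventually_ne hc).mono fun p hp h0 => hp (by rw [h0, zero_div])

lemma eventually_forall_F_ne_zero {r : ℝ} (hr : 1 < r) :
    ∀ᶠ n in atTop, ∀ z : ℂ, r ≤ ‖z‖ → F n z ≠ 0 := by
  have hr0 : 0 < r := one_pos.trans hr
  have hlim := eventually_forall_mem_of_isCompact (isCompact_closedBall (0 : ℂ) r⁻¹) fun z hz =>
    have hz1 : ‖z‖ < 1 := (mem_closedBall_zero_iff.1 hz).trans_lt (inv_lt_one_of_one_lt₀ hr)
    (tendsto_sum_range_weightedPartitionSum_reversedWeights hz1).eventually_ne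
      (tsum_weightedPartitionSum_reversedWeights_ne_zero hz1)
  filter_upwards [hlim, eventually_ne_atTop 0] with n hn hn0 z hz
  have hz0 : z ≠ 0 := norm_pos_iff.1 (hr0.trans_le hz)
  rw [F_eq_pow_mul_sum_reversedWeights hn0 hz0]
  refine mul_ne_zero (pow_ne_zero _ hz0) (hn z⁻¹ ?_)
  rw [mem_closedBall_zero_iff, norm_inv]
  exact inv_anti₀ hr0 hz

theorem tendsto_hausdorffDist_of_eventually {ι X : Type*} [PseudoMetricSpace X] {l : Filter ι}
    {Z : ι → Set X} {A K : Set X} (hA : TotallyBounded A) (hK : IsCompact K)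
    (hZK : ∀ᶠ n in l, Z n ⊆ K)
    (hnear : ∀ x ∈ A, ∀ ε > 0, ∀ᶠ n in l, ∃ z ∈ Metric.ball x ε, z ∈ Z n)
    (hoff : ∀ x ∈ K \ A, ∀ᶠ p : ι × X in l ×ˢ 𝓝 x, p.2 ∉ Z p.1) :
    Tendsto (fun n => Metric.hausdorffDist (Z n) A) l (𝓝 0) := by
  refine Metric.tendsto_nhds.2 fun ε hε => ?_
  have hfar : ∀ᶠ n in l, ∀ x ∈ K \ Metric.thickening (ε / 2) A, x ∉ Z n :=
    eventually_forall_mem_of_isCompact (hK.diff Metric.isOpen_thickening) fun x hx =>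
      hoff x ⟨hx.1, fun hxA => hx.2 (Metric.self_subset_thickening (half_pos hε) A hxA)⟩
  obtain ⟨t, htA, htfin, hcover⟩ :=
    Metric.finite_approx_of_totallyBounded hA (ε / 4) (by positivity)
  have hnet : ∀ᶠ n in l, ∀ y ∈ t, ∃ z ∈ Metric.ball y (ε / 4), z ∈ Z n :=
    (eventually_all_finite htfin).2 fun y hy => hnear y (htA hy) _ (by positivity)
  filter_upwards [hZK, hfar, hnet] with n hnK hnfar hnnet
  rw [dist_zero_right, Real.norm_of_nonneg Metric.hausdorffDist_nonneg]
  refine (Metric.hausdorffDist_le_of_mem_dist (half_pos hε).le (fun z hz => ?_)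
    fun x hx => ?_).trans_lt (half_lt_self hε)
  · have hzA : z ∈ Metric.thickening (ε / 2) A := by
      by_contra hzA
      exact hnfar z ⟨hnK hz, hzA⟩ hz
    obtain ⟨a, ha, hza⟩ := Metric.mem_thickening_iff.1 hzA
    exact ⟨a, ha, hza.le⟩
  · obtain ⟨y, hy, hxy⟩ := Set.mem_iUnion₂.1 (hcover hx)
    obtain ⟨z, hzy, hz⟩ := hnnet y hy
    refine ⟨z, hz, (dist_triangle_right x z y).trans ?_⟩
    linarith [Metric.mem_ball.1 hxy, Metric.mem_ball.1 hzy]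

/-- The zero attractor: the zero sets of the partition polynomials converge, in the
Hausdorff metric, to the union of the unit circle with the boundaries of the three
regions `R(1)`, `R(2)`, `R(3)` inside the open unit disk. -/
theorem partition_poly_zero_attractor :
    Tendsto (fun n : ℕ => Metric.hausdorffDist {z : ℂ | F n z = 0}
        (Metric.sphere (0 : ℂ) 1 ∪
          ((frontier R1 ∪ frontier R2 ∪ frontier R3) ∩ Metric.ball (0 : ℂ) 1)))
      atTop (nhds 0) := by
  refine tendsto_hausdorffDist_of_eventually (K := Metric.closedBall 0 2)
    ((isCompact_closedBall 0 1).totallyBounded.subset ?_) (isCompact_closedBall 0 2) ?_ ?_ ?_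
  · exact Set.union_subset Metric.sphere_subset_closedBall
      (Set.inter_subset_right.trans Metric.ball_subset_closedBall)
  · filter_upwards [eventually_forall_F_ne_zero one_lt_two] with n hn z hz
    exact mem_closedBall_zero_iff.2 (not_lt.1 fun hz2 => hn z hz2.le hz)
  · rintro x (hx | ⟨hx, hx1⟩) ε hε
    · exact eventually_exists_F_zero_near_circle (mem_sphere_zero_iff_norm.1 hx) hε
    · obtain ⟨k, -, hk⟩ := mem_frontier_regions_iff.1 hx
      exact eventually_exists_F_zero_near_frontier (mem_ball_zero_iff.1 hx1) hk hε
  · rintro x ⟨-, hxA⟩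
    rcases lt_trichotomy ‖x‖ 1 with hx | hx | hx
    · have hfr : ∀ k ∈ Finset.Icc 1 3, x ∉ frontier (growthRegion k) := fun k hk hxk =>
        hxA (Or.inr ⟨mem_frontier_regions_iff.2 ⟨k, hk, hxk⟩, mem_ball_zero_iff.2 hx⟩)
      obtain ⟨k, hk⟩ := exists_isDominantIndex_of_notMem_frontier hx hfr
      exact eventually_F_ne_zero_of_isDominantIndex hx hk
    · exact absurd (Or.inl (mem_sphere_zero_iff_norm.2 hx)) hxA
    · exact eventually_F_ne_zero_of_one_lt_norm hx
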